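/- For every q with 1 < q ≤ ∞ there exists a constant C > 0, independent of n and f, such that: for every n ∈ ℤ, every x ∈ ℝ^d with 2^{-(n+1)/2} < ρ(x) ≤ 2^{-n/2}, and every f ∈ h^1_n(ℝ^d) with supp f ⊂ B(x, 2^{1−n/2}), there exist (H^1_L,q)-atoms a_j related to balls B(x_j, r_j) with B(x_j, r_j) ⊂ B(x, 2^{2−n/2}) and scalars λ_j such that f = ∑_{j=1}^∞ λ_j a_j with convergence in L^1(ℝ^d) and ∑_{j=1}^∞ |λ_j| ≤ C ‖f‖_{h^1_n}. -/

import Mathlib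

open MeasureTheory Metric Real Filter Topology NNReal ENNReal

noncomputable section

abbrev E (d : ℕ) := EuclideanSpace ℝ (Fin d)

/-- The auxiliary function ρ associated with the potential `V`. -/
def rho (d : ℕ) (V : E d → ℝ) (x : E d) : ℝ :=
  sSup {r : ℝ | 0 < r ∧ r ^ ((2:ℝ) - (d:ℝ)) * (∫ y in ball x r, V y) ≤ 1}

/-- The reverse Hölder class `RH_{d/2}`. -/
def IsRH (d : ℕ) (V : E d → ℝ) : Prop :=
  ∃ C : ℝ, 0 < C ∧ ∀ (x : E d) (r : ℝ), 0 < r →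
    ((volume (ball x r)).toReal⁻¹ * ∫ y in ball x r, (V y) ^ ((d:ℝ)/2)) ^ ((2:ℝ)/(d:ℝ)) ≤
      C * ((volume (ball x r)).toReal⁻¹ * ∫ y in ball x r, V y)

/-- The set `𝓑_n = {x : 2^{-(n+1)/2} < ρ(x) ≤ 2^{-n/2}}`. -/
def Bset (d : ℕ) (V : E d → ℝ) (n : ℤ) : Set (E d) :=
  {x | (2:ℝ) ^ (-((n:ℝ)+1)/2) < rho d V x ∧ rho d V x ≤ (2:ℝ) ^ (-(n:ℝ)/2)}

/-- Average of `f` over the ball `B(x,r)`. -/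
def ballAvg (d : ℕ) (f : E d → ℝ) (x : E d) (r : ℝ) : ℝ :=
  (volume (ball x r)).toReal⁻¹ * ∫ y in ball x r, f y

/-- Mean oscillation of `f` over the ball `B(x,r)`. -/
def oscB (d : ℕ) (f : E d → ℝ) (x : E d) (r : ℝ) : ℝ :=
  ballAvg d (fun y => |f y - ballAvg d f x r|) x r

/-- The BMO seminorm, as an extended nonnegative real. -/
def bmoNormE (d : ℕ) (f : E d → ℝ) : ℝ≥0∞ :=
  ⨆ (x : E d) (r : ℝ) (_ : 0 < r), ENNReal.ofReal (oscB d f x r)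

/-- The `bmo_n` norm, as an extended nonnegative real. -/
def bmonNorm (d : ℕ) (n : ℤ) (f : E d → ℝ) : ℝ≥0∞ :=
  bmoNormE d f +
    ⨆ (x : E d) (r : ℝ) (_ : (2:ℝ) ^ (-(n:ℝ)/2) ≤ r),
      ENNReal.ofReal (ballAvg d (fun y => |f y|) x r)

/-- The `BMO_L` norm, as an extended nonnegative real. -/
def bmoLNorm (d : ℕ) (V : E d → ℝ) (f : E d → ℝ) : ℝ≥0∞ :=
  bmoNormE d f +
    ⨆ (x : E d) (r : ℝ) (_ : rho d V x ≤ r),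
      ENNReal.ofReal (ballAvg d (fun y => |f y|) x r)

/-- The Gauss function `P(x) = (4π)^{-d/2} e^{-|x|²/4}`. -/
def gaussP (d : ℕ) (x : E d) : ℝ := (4 * π) ^ (-(d:ℝ)/2) * Real.exp (-(‖x‖^2)/4)

/-- The local maximal function `𝓜_n f(x) = sup_{0<t<2^{-n/2}} |P_t * f(x)|`. -/
def MnMax (d : ℕ) (n : ℤ) (f : E d → ℝ) (x : E d) : ℝ≥0∞ :=
  ⨆ (t : ℝ) (_ : 0 < t ∧ t < (2:ℝ) ^ (-(n:ℝ)/2)),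
    ENNReal.ofReal |∫ z, t ^ (-(d:ℝ)) * gaussP d (t⁻¹ • (x - z)) * f z|

/-- The `h^1_n` norm `‖𝓜_n f‖_{L¹}`, as an extended nonnegative real. -/
def h1nNorm (d : ℕ) (n : ℤ) (f : E d → ℝ) : ℝ≥0∞ := ∫⁻ x, MnMax d n f x

/-- Membership in the local Hardy space `h^1_n`. -/
def Memh1n (d : ℕ) (n : ℤ) (f : E d → ℝ) : Prop :=
  Integrable f volume ∧ h1nNorm d n f < ⊤

/-- `(H^1_L, q)`-atoms related to the ball `B(x₀, r)`, with `L`-constant `CL`. -/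
def IsHLAtom (d : ℕ) (V : E d → ℝ) (CL : ℝ) (q : ℝ≥0∞) (a : E d → ℝ) (x₀ : E d) (r : ℝ) :
    Prop :=
  r ≤ CL * rho d V x₀ ∧ Function.support a ⊆ ball x₀ r ∧
    eLpNorm a q volume ≤ (volume (ball x₀ r)) ^ (1 / q.toReal - 1) ∧
    (r ≤ rho d V x₀ / CL → (∫ x, a x) = 0)

/-- Exponential decay beats any power. -/
lemma exp_decay (M : ℕ) : ∃ C : ℝ, 0 < C ∧ ∀ s : ℝ, 0 ≤ s →
    (1 + s) * Real.exp (-(s^2)/4) ≤ C * ((1 + s) ^ M)⁻¹ := by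
  have hlim : Tendsto (fun s : ℝ => s ^ (M+1) * Real.exp (-s)) atTop (𝓝 0) :=
    Real.tendsto_pow_mul_exp_neg_atTop_nhds_zero (M+1)
  obtain ⟨B, hB⟩ : ∃ B : ℝ, ∀ s : ℝ, 0 ≤ s → s ^ (M+1) * Real.exp (-s) ≤ B := by
    refine ⟨(M+1).factorial, fun s hs => ?_⟩
    have h1 := Real.pow_div_factorial_le_exp s hs (M+1)
    have h2 : (0:ℝ) < (M+1).factorial := by positivity
    rw [div_le_iff₀ h2] at h1
    rw [Real.exp_neg, ← div_eq_mul_inv, div_le_iff₀ (Real.exp_pos s)]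
    linarith
  have hB0 : 0 ≤ B := by simpa using hB 0 le_rfl
  refine ⟨B * Real.exp 2 + 1, by positivity, fun s hs => ?_⟩
  have h1 : 0 < (1 + s) ^ M := by positivity
  rw [← div_eq_mul_inv, le_div_iff₀ h1]
  have h2 := hB (1+s) (by positivity)
  have h3 : Real.exp (-(s^2)/4) ≤ Real.exp (-(1+s)) * Real.exp 2 := by
    rw [← Real.exp_add]
    apply Real.exp_le_exp.2
    nlinarith [sq_nonneg (s - 2)]
  calc (1 + s) * Real.exp (-(s^2)/4) * (1 + s) ^ M
      = (1+s)^(M+1) * Real.exp (-(s^2)/4) := by ring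
    _ ≤ (1+s)^(M+1) * (Real.exp (-(1+s)) * Real.exp 2) := by gcongr
    _ = ((1+s)^(M+1) * Real.exp (-(1+s))) * Real.exp 2 := by ring
    _ ≤ B * Real.exp 2 := by gcongr
    _ ≤ _ := by linarith

lemma exp_diff (M : ℕ) : ∃ C : ℝ, 0 < C ∧ ∀ a b : ℝ, 0 ≤ a → a ≤ b →
    Real.exp (-(a^2)/4) - Real.exp (-(b^2)/4) ≤ C * (b - a) * ((1 + a) ^ M)⁻¹ := by
  obtain ⟨C, hC, h⟩ := exp_decay M
  refine ⟨C, hC, fun a b ha hab => ?_⟩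
  rcases hab.eq_or_lt with rfl | hlt
  · simp
  have hd : ∀ x : ℝ, HasDerivAt (fun s : ℝ => Real.exp (-(s^2)/4))
      (Real.exp (-(x^2)/4) * (-(2*x)/4)) x := by
    intro x
    have := ((((hasDerivAt_id x).pow 2).neg.div_const 4)).exp
    simpa using this
  obtain ⟨ξ, hξ, hξ'⟩ := exists_hasDerivAt_eq_slope (fun s : ℝ => Real.exp (-(s^2)/4))
    (fun x => Real.exp (-(x^2)/4) * (-(2*x)/4)) hlt
    (fun x _ => (hd x).continuousAt.continuousWithinAt) (fun x _ => hd x)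
  have hba : 0 < b - a := by linarith
  rw [eq_div_iff hba.ne'] at hξ'
  have hξ0 : 0 ≤ ξ := by linarith [hξ.1]
  have h1 := h ξ hξ0
  have h2 : ((1 + ξ) ^ M)⁻¹ ≤ ((1 + a) ^ M)⁻¹ := by
    apply inv_anti₀ (by positivity)
    gcongr; exact hξ.1.le
  have h3 : Real.exp (-(ξ^2)/4) * (2*ξ/4) ≤ C * ((1 + a) ^ M)⁻¹ := by
    calc _ ≤ (1 + ξ) * Real.exp (-(ξ^2)/4) := by
          nlinarith [Real.exp_pos (-(ξ^2)/4)]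
      _ ≤ _ := h1
      _ ≤ _ := by gcongr
  calc Real.exp (-(a^2)/4) - Real.exp (-(b^2)/4)
      = (Real.exp (-(ξ^2)/4) * (2*ξ/4)) * (b - a) := by linarith
    _ ≤ (C * ((1 + a) ^ M)⁻¹) * (b - a) := by gcongr
    _ = _ := by ring

lemma gaussP_nonneg (d : ℕ) (v : E d) : 0 ≤ gaussP d v := by
  unfold gaussP; positivity

lemma gaussP_cont (d : ℕ) : Continuous (gaussP d) := by
  unfold gaussP; fun_prop

/-- size and smoothness of the Gaussian -/
lemma gaussP_bounds (d : ℕ) (M : ℕ) : ∃ C : ℝ, 0 < C ∧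
    (∀ v : E d, gaussP d v ≤ C * ((1 + ‖v‖) ^ M)⁻¹) ∧
    (∀ v v' : E d, |gaussP d v - gaussP d v'| ≤
      C * ‖v - v'‖ * (((1 + ‖v‖) ^ M)⁻¹ + ((1 + ‖v'‖) ^ M)⁻¹)) := by
  obtain ⟨C1, hC1, h1⟩ := exp_decay M
  obtain ⟨C2, hC2, h2⟩ := exp_diff M
  set k : ℝ := (4 * π) ^ (-(d:ℝ)/2) with hk
  have hk0 : 0 < k := by positivity
  have key : ∀ v v' : E d, ‖v‖ ≤ ‖v'‖ → |gaussP d v - gaussP d v'| ≤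
      k * C2 * ‖v - v'‖ * (((1 + ‖v‖) ^ M)⁻¹ + ((1 + ‖v'‖) ^ M)⁻¹) := by
    intro v v' hvv
    have h3 := h2 ‖v‖ ‖v'‖ (norm_nonneg _) hvv
    have h4 : ‖v'‖ - ‖v‖ ≤ ‖v - v'‖ := by
      rw [norm_sub_rev]; exact norm_sub_norm_le _ _
    have h5 : 0 ≤ Real.exp (-(‖v‖^2)/4) - Real.exp (-(‖v'‖^2)/4) := by
      rw [sub_nonneg]; apply Real.exp_le_exp.2
      have : ‖v‖^2 ≤ ‖v'‖^2 := by gcongr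
      linarith
    have h6 : gaussP d v - gaussP d v' =
      k * (Real.exp (-(‖v‖^2)/4) - Real.exp (-(‖v'‖^2)/4)) := by
      unfold gaussP; ring
    rw [h6, abs_of_nonneg (by positivity)]
    calc _ ≤ k * (C2 * (‖v'‖ - ‖v‖) * ((1 + ‖v‖) ^ M)⁻¹) := by gcongr
      _ ≤ k * (C2 * ‖v - v'‖ * (((1 + ‖v‖) ^ M)⁻¹ + ((1 + ‖v'‖) ^ M)⁻¹)) := by
        gcongr
        have : 0 ≤ ((1 + ‖v'‖) ^ M)⁻¹ := by positivity
        linarith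
      _ = _ := by ring
  refine ⟨k * C1 + k * C2, by positivity, fun v => ?_, fun v v' => ?_⟩
  · have h3 := h1 ‖v‖ (norm_nonneg _)
    have h4 : Real.exp (-(‖v‖^2)/4) ≤ C1 * ((1 + ‖v‖) ^ M)⁻¹ := by
      refine le_trans ?_ h3
      nlinarith [Real.exp_pos (-(‖v‖^2)/4), norm_nonneg v]
    calc gaussP d v = k * Real.exp (-(‖v‖^2)/4) := rfl
      _ ≤ k * (C1 * ((1 + ‖v‖) ^ M)⁻¹) := by gcongr
      _ ≤ (k * C1 + k * C2) * ((1 + ‖v‖) ^ M)⁻¹ := by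
        have : 0 ≤ k * C2 * ((1 + ‖v‖) ^ M)⁻¹ := by positivity
        linarith
  · have h7 : k * C2 * ‖v - v'‖ * (((1 + ‖v‖) ^ M)⁻¹ + ((1 + ‖v'‖) ^ M)⁻¹) ≤
      (k * C1 + k * C2) * ‖v - v'‖ * (((1 + ‖v‖) ^ M)⁻¹ + ((1 + ‖v'‖) ^ M)⁻¹) := by
      have : 0 ≤ k * C1 := by positivity
      gcongr; linarith
    refine le_trans ?_ h7
    rcases le_total ‖v‖ ‖v'‖ with h | h
    · exact key v v' h
    · have := key v' v h
      rw [abs_sub_comm, norm_sub_rev, add_comm] at this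
      exact this

lemma gaussP_integral (d : ℕ) : ∫ v, gaussP d v = 1 := by
  unfold gaussP
  rw [integral_const_mul]
  have h := GaussianFourier.integral_rexp_neg_mul_sq_norm (V := E d) (b := 1/4) (by norm_num)
  have h2 : ∀ v : E d, -(1/4:ℝ) * ‖v‖^2 = -(‖v‖^2)/4 := fun v => by ring
  simp only [h2] at h
  rw [h, finrank_euclideanSpace_fin]
  have h3 : π / (1/4:ℝ) = 4 * π := by ring
  rw [h3, ← Real.rpow_add (by positivity)]
  ring_nf; simp

/-- rescaled Gaussian -/
def Pt (d : ℕ) (t : ℝ) (y : E d) : ℝ := t ^ (-(d:ℝ)) * gaussP d (t⁻¹ • y)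

lemma Pt_nonneg (d : ℕ) {t : ℝ} (ht : 0 < t) (y : E d) : 0 ≤ Pt d t y := by
  unfold Pt; have := gaussP_nonneg d (t⁻¹ • y); positivity

lemma Pt_cont (d : ℕ) (t : ℝ) : Continuous (Pt d t) := by
  unfold Pt; have := gaussP_cont d; fun_prop

/-- scaling of integrals -/
lemma scale_integral (d : ℕ) {t : ℝ} (ht : 0 < t) (g : E d → ℝ) (y : E d) :
    ∫ u, t ^ (-(d:ℝ)) * g (t⁻¹ • (y - u)) = ∫ v, g v := by
  rw [integral_const_mul]
  have h1 : ∫ u, g (t⁻¹ • (y - u)) = ∫ u, g (t⁻¹ • u) :=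
    integral_sub_left_eq_self (fun u => g (t⁻¹ • u)) volume y
  rw [h1, Measure.integral_comp_inv_smul_of_nonneg volume g ht.le, finrank_euclideanSpace_fin,
    smul_eq_mul, ← mul_assoc, Real.rpow_neg ht.le, Real.rpow_natCast,
    inv_mul_cancel₀ (by positivity), one_mul]

lemma scale_integrable (d : ℕ) {t : ℝ} (ht : 0 < t) {g : E d → ℝ} (hg : Integrable g) (y : E d) :
    Integrable (fun u => t ^ (-(d:ℝ)) * g (t⁻¹ • (y - u))) := by
  apply Integrable.const_mul
  have h := (integrable_comp_smul_iff volume g (inv_ne_zero ht.ne')).2 hg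
  exact h.comp_sub_left y

/-- kernel decay -/
def kap (d : ℕ) (v : E d) : ℝ := ((1 + ‖v‖) ^ (d+1))⁻¹

lemma kap_integrable (d : ℕ) : Integrable (kap d) := by
  have h := integrable_one_add_norm (E := E d) (μ := volume) (r := (d:ℝ)+1)
    (by rw [finrank_euclideanSpace_fin]; linarith)
  refine h.congr (Filter.Eventually.of_forall fun v => ?_)
  show (1 + ‖v‖) ^ (-((d:ℝ)+1)) = _
  rw [Real.rpow_neg (by positivity), kap]
  congr 1
  rw [← Real.rpow_natCast]; push_cast; rfl

lemma Pt_integral (d : ℕ) {t : ℝ} (ht : 0 < t) (y : E d) : ∫ u, Pt d t (y - u) = 1 := by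
  unfold Pt; rw [scale_integral d ht (gaussP d) y, gaussP_integral]

/-- the weight -/
def wt (d : ℕ) (c : E d) (r : ℝ) (y : E d) : ℝ := ((1 + ‖y - c‖ / r) ^ (2*d))⁻¹

lemma wt_pos (d : ℕ) (c : E d) {r : ℝ} (hr : 0 < r) (y : E d) : 0 < wt d c r y := by
  unfold wt; positivity

lemma wt_le_one (d : ℕ) (c : E d) {r : ℝ} (hr : 0 < r) (y : E d) : wt d c r y ≤ 1 := by
  unfold wt
  apply inv_le_one_of_one_le₀
  apply one_le_pow₀
  have : 0 ≤ ‖y - c‖ / r := by positivity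
  linarith

lemma wt_cont (d : ℕ) (c : E d) {r : ℝ} (hr : 0 < r) : Continuous (wt d c r) := by
  unfold wt
  apply Continuous.inv₀ (by fun_prop)
  intro y; positivity

lemma wt_compare (d : ℕ) (c : E d) {r t : ℝ} (hr : 0 < r) (ht : 0 < t) (htr : t ≤ r) (y u : E d) :
    wt d c r u ≤ (1 + ‖y - u‖ / t) ^ (2*d) * wt d c r y := by
  unfold wt
  rw [← div_eq_mul_inv, le_div_iff₀ (by positivity), inv_mul_le_iff₀ (by positivity), ← mul_pow]
  gcongr
  have h1 : ‖y - c‖ ≤ ‖u - c‖ + ‖y - u‖ := by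
    have := norm_add_le (u - c) (y - u)
    simpa [add_comm] using this
  have h2 : ‖y - u‖ / r ≤ ‖y - u‖ / t := by gcongr
  have h3 : ‖y - c‖ / r ≤ ‖u - c‖ / r + ‖y - u‖ / r := by
    rw [← add_div]; gcongr
  have h4 : 0 ≤ (‖u - c‖ / r) * (‖y - u‖ / t) := by positivity
  nlinarith

lemma wt_integrable (d : ℕ) (hd : 1 ≤ d) (c : E d) {r : ℝ} (hr : 0 < r) : Integrable (wt d c r) := by
  have h := (scale_integrable d hr (kap_integrable d) c).const_mul (r ^ (d:ℝ))
  refine h.mono (wt_cont d c hr).aestronglyMeasurable (Filter.Eventually.of_forall fun y => ?_)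
  rw [Real.norm_of_nonneg (wt_pos d c hr y).le]
  have h2 : r ^ (d:ℝ) * (r ^ (-(d:ℝ)) * kap d (r⁻¹ • (c - y))) = ((1 + ‖y - c‖/r)^(d+1))⁻¹ := by
    rw [← mul_assoc, ← Real.rpow_add hr, kap, norm_smul, norm_sub_rev, norm_inv,
      Real.norm_of_nonneg hr.le]
    simp [div_eq_inv_mul]
  rw [h2, Real.norm_of_nonneg (by positivity), wt]
  apply inv_anti₀ (by positivity)
  apply pow_le_pow_right₀ _ (by omega)
  have : 0 ≤ ‖y - c‖ / r := by positivity
  linarith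

def Kt (d : ℕ) (t : ℝ) (y : E d) : ℝ := t ^ (-(d:ℝ)) * ((1 + ‖t⁻¹ • y‖) ^ (3*d+2))⁻¹
def kt (d : ℕ) (t : ℝ) (y : E d) : ℝ := t ^ (-(d:ℝ)) * kap d (t⁻¹ • y)

lemma Kt_pos (d : ℕ) {t : ℝ} (ht : 0 < t) (y : E d) : 0 < Kt d t y := by
  unfold Kt; positivity

lemma kt_pos (d : ℕ) {t : ℝ} (ht : 0 < t) (y : E d) : 0 < kt d t y := by
  unfold kt kap; positivity

lemma norm_inv_smul' {d : ℕ} {t : ℝ} (ht : 0 < t) (y : E d) : ‖t⁻¹ • y‖ = ‖y‖ / t := by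
  rw [norm_smul, norm_inv, Real.norm_of_nonneg ht.le, div_eq_inv_mul]

lemma wt_Kt (d : ℕ) (c : E d) {r t : ℝ} (hr : 0 < r) (ht : 0 < t) (htr : t ≤ r) (y u : E d) :
    wt d c r u * ((1 + ‖y - u‖ / t) * Kt d t (y - u)) ≤ wt d c r y * kt d t (y - u) := by
  have h := wt_compare d c hr ht htr y u
  unfold Kt kt kap
  rw [norm_inv_smul' ht]
  set X := 1 + ‖y - u‖ / t with hX
  have hX0 : 0 < X := by positivity
  have h1 : X * (t ^ (-(d:ℝ)) * (X ^ (3*d+2))⁻¹) * X ^ (2*d) = t ^ (-(d:ℝ)) * (X ^ (d+1))⁻¹ := by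
    have : X ^ (3*d+2) = X ^ (2*d) * X ^ (d+1) * X := by ring
    rw [this]; field_simp
  have h0 : 0 ≤ X * (t ^ (-(d:ℝ)) * (X ^ (3*d+2))⁻¹) := by positivity
  calc _ ≤ (X ^ (2*d) * wt d c r y) * (X * (t ^ (-(d:ℝ)) * (X ^ (3*d+2))⁻¹)) :=
        mul_le_mul_of_nonneg_right h h0
    _ = wt d c r y * (X * (t ^ (-(d:ℝ)) * (X ^ (3*d+2))⁻¹) * X ^ (2*d)) := by ring
    _ = _ := by rw [h1]

lemma Kt_le_kt (d : ℕ) {t : ℝ} (ht : 0 < t) (y u : E d) :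
    (1 + ‖y - u‖ / t) * Kt d t (y - u) ≤ kt d t (y - u) := by
  unfold Kt kt kap
  rw [norm_inv_smul' ht]
  set X := 1 + ‖y - u‖ / t with hX
  have hX1 : 1 ≤ X := by have : 0 ≤ ‖y - u‖ / t := by positivity
                         linarith
  have : X * (t ^ (-(d:ℝ)) * (X ^ (3*d+2))⁻¹) = t ^ (-(d:ℝ)) * (X ^ (3*d+1))⁻¹ := by
    have : X ^ (3*d+2) = X ^ (3*d+1) * X := by ring
    rw [this]; field_simp
  rw [this]
  gcongr <;> first | assumption | omega

lemma wt_Kt' (d : ℕ) (c : E d) {r t : ℝ} (hr : 0 < r) (ht : 0 < t) (htr : t ≤ r) (y u : E d) :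
    wt d c r u * Kt d t (y - u) ≤ wt d c r y * kt d t (y - u) := by
  refine le_trans ?_ (wt_Kt d c hr ht htr y u)
  have h1 := wt_pos d c hr u
  have h2 := Kt_pos d ht (y - u)
  have : 0 ≤ ‖y - u‖ / t := by positivity
  gcongr
  nlinarith

lemma Kt_shift (d : ℕ) {t : ℝ} (ht : 0 < t) (y u z : E d) (h : ‖z - u‖ ≤ t) :
    Kt d t (y - z) ≤ 2 ^ (3*d+2) * Kt d t (y - u) := by
  unfold Kt
  rw [norm_inv_smul' ht, norm_inv_smul' ht]
  have h1 : 1 + ‖y - u‖ / t ≤ 2 * (1 + ‖y - z‖ / t) := by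
    have h2 : ‖y - u‖ ≤ ‖y - z‖ + ‖z - u‖ := norm_sub_le_norm_sub_add_norm_sub _ _ _
    have h3 : ‖y - u‖ / t ≤ ‖y - z‖ / t + 1 := by
      rw [div_add_one ht.ne']; gcongr; linarith
    have : 0 ≤ ‖y - z‖ / t := by positivity
    linarith
  have h2 : ((1 + ‖y - z‖ / t) ^ (3*d+2))⁻¹ ≤ 2 ^ (3*d+2) * ((1 + ‖y - u‖ / t) ^ (3*d+2))⁻¹ := by
    rw [← div_eq_mul_inv, le_div_iff₀ (by positivity), inv_mul_le_iff₀ (by positivity), mul_comm,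
      ← mul_pow]
    rw [mul_comm] at h1
    gcongr
  calc _ ≤ t ^ (-(d:ℝ)) * (2 ^ (3*d+2) * ((1 + ‖y - u‖ / t) ^ (3*d+2))⁻¹) := by gcongr
    _ = _ := by ring

lemma Pt_bounds (d : ℕ) : ∃ C : ℝ, 0 < C ∧ ∀ t : ℝ, 0 < t →
    (∀ v : E d, Pt d t v ≤ C * Kt d t v) ∧
    (∀ v v' : E d, |Pt d t v - Pt d t v'| ≤ C * (‖v - v'‖ / t) * (Kt d t v + Kt d t v')) := by
  obtain ⟨C, hC, h1, h2⟩ := gaussP_bounds d (3*d+2)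
  refine ⟨C, hC, fun t ht => ⟨fun v => ?_, fun v v' => ?_⟩⟩
  · unfold Pt Kt
    calc _ ≤ t ^ (-(d:ℝ)) * (C * ((1 + ‖t⁻¹ • v‖) ^ (3*d+2))⁻¹) := by gcongr; exact h1 _
      _ = _ := by ring
  · unfold Pt Kt
    rw [← mul_sub, abs_mul, abs_of_pos (by positivity : 0 < t ^ (-(d:ℝ)))]
    calc _ ≤ t ^ (-(d:ℝ)) * _ := mul_le_mul_of_nonneg_left (h2 _ _) (by positivity)
      _ = _ := by rw [← smul_sub, norm_inv_smul' ht]; ring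

lemma Pt_bdd (d : ℕ) : ∃ C : ℝ, 0 < C ∧ ∀ t : ℝ, 0 < t → ∀ v : E d,
    Pt d t v ≤ C * t ^ (-(d:ℝ)) := by
  obtain ⟨C, hC, h⟩ := Pt_bounds d
  refine ⟨C, hC, fun t ht v => ((h t ht).1 v).trans ?_⟩
  unfold Kt
  have : ((1 + ‖t⁻¹ • v‖) ^ (3*d+2))⁻¹ ≤ 1 := by
    apply inv_le_one_of_one_le₀; apply one_le_pow₀; linarith [norm_nonneg (t⁻¹ • v)]
  have h2 : 0 < t ^ (-(d:ℝ)) := by positivity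
  nlinarith [mul_le_mul_of_nonneg_left this h2.le]

/-- The operator used to discretise. -/
def Tz (d : ℕ) (t : ℝ) (z : E d → E d) (e : E d → ℝ) (y : E d) : ℝ := ∫ u, e u * Pt d t (y - z u)

lemma one_step (d : ℕ) : ∃ C : ℝ, 1 ≤ C ∧
    ∀ (c : E d) (r t h A L : ℝ), 0 < t → t ≤ r → 0 ≤ h → h ≤ t → 0 ≤ A → 0 ≤ L →
    ∀ (z : E d → E d), Measurable z → (∀ u, ‖z u - u‖ ≤ h) →
    ∀ e : E d → ℝ, Measurable e → (∀ y, |e y| ≤ A * wt d c r y) →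
      (∀ y y', |e y - e y'| ≤ L * ‖y - y'‖ * (wt d c r y + wt d c r y')) →
    (∀ y, |e y - Tz d t z e y| ≤ C * (L * t + A * (h / t)) * wt d c r y) ∧
    (∀ y y', |(e y - Tz d t z e y) - (e y' - Tz d t z e y')| ≤
      (L + C * A / t) * ‖y - y'‖ * (wt d c r y + wt d c r y')) := by
  obtain ⟨C, hC, hP⟩ := Pt_bounds d
  set I : ℝ := ∫ v, kap d v with hI
  have hI0 : 0 ≤ I := integral_nonneg fun v => by unfold kap; positivity
  set B : ℝ := 1 + 2 ^ (3*d+2) with hB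
  have hB0 : 0 < B := by positivity
  refine ⟨1 + 2 * C * B * I, by have : 0 ≤ 2 * C * B * I := by positivity
                                linarith, ?_⟩
  intro c r t h A L ht htr hh hht hA hL z hz hzu e he heA heL
  have hr : 0 < r := ht.trans_le htr
  have hPt := hP t ht
  have hkint : ∀ y, Integrable (fun u => kt d t (y - u)) := fun y =>
    scale_integrable d ht (kap_integrable d) y
  have hkI : ∀ y, ∫ u, kt d t (y - u) = I := fun y => scale_integral d ht (kap d) y
  have hw0 := fun u => wt_pos d c hr u
  have hK0 := fun u => Kt_pos d ht u
  -- measurability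
  have hmP : ∀ y, Measurable (fun u => Pt d t (y - u)) := fun y =>
    ((Pt_cont d t).comp (by fun_prop)).measurable
  have hmPz : ∀ y, Measurable (fun u => Pt d t (y - z u)) := fun y =>
    (Pt_cont d t).measurable.comp (measurable_const.sub hz)
  -- integrability
  have i1 : ∀ y, Integrable (fun u => Pt d t (y - u)) := by
    intro y
    refine Integrable.mono' ((hkint y).const_mul C) (hmP y).aestronglyMeasurable
      (Filter.Eventually.of_forall fun u => ?_)
    rw [Real.norm_of_nonneg (Pt_nonneg d ht _)]
    refine (hPt.1 _).trans ?_
    have := Kt_le_kt d ht y u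
    have h3 : 0 ≤ ‖y - u‖ / t * Kt d t (y - u) := by have := hK0 (y - u); positivity
    gcongr; linarith
  have i2 : ∀ y, Integrable (fun u => e u * Pt d t (y - u)) := by
    intro y
    refine Integrable.mono' ((hkint y).const_mul (A * C * wt d c r y))
      (he.mul (hmP y)).aestronglyMeasurable (Filter.Eventually.of_forall fun u => ?_)
    rw [norm_mul, Real.norm_eq_abs, Real.norm_of_nonneg (Pt_nonneg d ht _)]
    calc |e u| * Pt d t (y - u) ≤ (A * wt d c r u) * (C * Kt d t (y - u)) :=
          mul_le_mul (heA u) (hPt.1 _) (Pt_nonneg d ht _) (by have := hw0 u; positivity)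
      _ = A * C * (wt d c r u * Kt d t (y - u)) := by ring
      _ ≤ A * C * (wt d c r y * kt d t (y - u)) := by exact mul_le_mul_of_nonneg_left (wt_Kt' d c hr ht htr y u) (by positivity)
      _ = _ := by ring
  have i3 : ∀ y, Integrable (fun u => e u * Pt d t (y - z u)) := by
    intro y
    refine Integrable.mono' ((hkint y).const_mul (A * C * B * wt d c r y))
      (he.mul (hmPz y)).aestronglyMeasurable (Filter.Eventually.of_forall fun u => ?_)
    rw [norm_mul, Real.norm_eq_abs, Real.norm_of_nonneg (Pt_nonneg d ht _)]
    have hs := Kt_shift d ht y u (z u) ((hzu u).trans hht)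
    have hs' : Kt d t (y - z u) ≤ B * Kt d t (y - u) := by
      have := hK0 (y - u); rw [hB]; linarith
    calc |e u| * Pt d t (y - z u) ≤ (A * wt d c r u) * (C * Kt d t (y - z u)) :=
          mul_le_mul (heA u) (hPt.1 _) (Pt_nonneg d ht _) (by have := hw0 u; positivity)
      _ ≤ (A * wt d c r u) * (C * (B * Kt d t (y - u))) := by
          have := hw0 u; gcongr
      _ = A * C * B * (wt d c r u * Kt d t (y - u)) := by ring
      _ ≤ A * C * B * (wt d c r y * kt d t (y - u)) := by exact mul_le_mul_of_nonneg_left (wt_Kt' d c hr ht htr y u) (by positivity)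
      _ = _ := by ring
  constructor
  · intro y
    have e1 : e y - Tz d t z e y =
        ∫ u, ((e y * Pt d t (y - u) - e u * Pt d t (y - u)) +
          (e u * Pt d t (y - u) - e u * Pt d t (y - z u))) := by
      have s1 : Integrable fun u => e y * Pt d t (y - u) := (i1 y).const_mul _
      have s2 : Integrable fun u => e y * Pt d t (y - u) - e u * Pt d t (y - u) := s1.sub (i2 y)
      have s3 : Integrable fun u => e u * Pt d t (y - u) - e u * Pt d t (y - z u) :=
        (i2 y).sub (i3 y)
      rw [integral_add s2 s3, integral_sub s1 (i2 y),
        integral_sub (i2 y) (i3 y), integral_const_mul, Pt_integral d ht, Tz]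
      ring
    rw [e1, ← Real.norm_eq_abs]
    have hb : ∀ u, ‖((e y * Pt d t (y - u) - e u * Pt d t (y - u)) +
          (e u * Pt d t (y - u) - e u * Pt d t (y - z u)))‖ ≤
          (2 * C * B * (L * t + A * (h / t)) * wt d c r y) * kt d t (y - u) := by
      intro u
      have a1 : |(e y - e u) * Pt d t (y - u)| ≤
          2 * C * L * t * (wt d c r y * kt d t (y - u)) := by
        rw [abs_mul, abs_of_nonneg (Pt_nonneg d ht _)]
        have hk1 := wt_Kt d c hr ht htr y u
        have hk2 := mul_le_mul_of_nonneg_left (Kt_le_kt d ht y u) (hw0 y).le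
        have hyu : ‖y - u‖ ≤ t * (1 + ‖y - u‖ / t) := by
          rw [mul_add, mul_div_cancel₀ _ ht.ne']; linarith
        calc |e y - e u| * Pt d t (y - u)
            ≤ (L * ‖y - u‖ * (wt d c r y + wt d c r u)) * (C * Kt d t (y - u)) :=
              mul_le_mul (heL y u) (hPt.1 _) (Pt_nonneg d ht _)
                (by have := hw0 y; have := hw0 u; positivity)
          _ ≤ (L * (t * (1 + ‖y - u‖ / t)) * (wt d c r y + wt d c r u)) * (C * Kt d t (y - u)) := by
              have := hw0 y; have := hw0 u; have := hK0 (y - u); gcongr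
          _ = C * L * t * (wt d c r u * ((1 + ‖y - u‖ / t) * Kt d t (y - u)) +
                wt d c r y * ((1 + ‖y - u‖ / t) * Kt d t (y - u))) := by ring
          _ ≤ C * L * t * (wt d c r y * kt d t (y - u) + wt d c r y * kt d t (y - u)) := by
              gcongr
          _ = _ := by ring
      have a2 : |e u * (Pt d t (y - u) - Pt d t (y - z u))| ≤
          C * B * A * (h/t) * (wt d c r y * kt d t (y - u)) := by
        rw [abs_mul]
        have hs := Kt_shift d ht y u (z u) ((hzu u).trans hht)
        have hs' : Kt d t (y - u) + Kt d t (y - z u) ≤ B * Kt d t (y - u) := by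
          rw [hB]; linarith
        have hd : |Pt d t (y - u) - Pt d t (y - z u)| ≤ C * (h / t) * (B * Kt d t (y - u)) := by
          refine (hPt.2 _ _).trans ?_
          have : ‖y - u - (y - z u)‖ ≤ h := by
            have : y - u - (y - z u) = z u - u := by abel
            rw [this]; exact hzu u
          have := hK0 (y - u)
          have := hK0 (y - z u)
          gcongr
        have := hw0 u
        calc _ ≤ (A * wt d c r u) * (C * (h / t) * (B * Kt d t (y - u))) :=
              mul_le_mul (heA u) hd (abs_nonneg _) (by positivity)
          _ = C * B * A * (h/t) * (wt d c r u * Kt d t (y - u)) := by ring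
          _ ≤ _ := by exact mul_le_mul_of_nonneg_left (wt_Kt' d c hr ht htr y u) (by positivity)
      rw [← sub_mul, ← mul_sub, Real.norm_eq_abs]
      refine (abs_add_le _ _).trans ((add_le_add a1 a2).trans ?_)
      have p1 : 0 ≤ wt d c r y * kt d t (y - u) :=
        mul_nonneg (hw0 y).le (kt_pos d ht _).le
      have hB1 : 1 ≤ B := by rw [hB]; linarith [show (0:ℝ) ≤ 2 ^ (3*d+2) by positivity]
      have p2 : 2 * C * L * t * 1 ≤ 2 * C * L * t * B := by gcongr
      have p3 : 0 ≤ C * B * A * (h/t) := by positivity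
      calc _ = (2 * C * L * t * 1 + C * B * A * (h/t)) * (wt d c r y * kt d t (y - u)) := by ring
        _ ≤ (2 * C * L * t * B + 2 * (C * B * A * (h/t))) * (wt d c r y * kt d t (y - u)) := by
            apply mul_le_mul_of_nonneg_right _ p1; linarith
        _ = _ := by ring
    refine (norm_integral_le_of_norm_le ((hkint y).const_mul _)
      (Filter.Eventually.of_forall hb)).trans ?_
    rw [integral_const_mul, hkI]
    have := hw0 y
    have p4 : 0 ≤ (L * t + A * (h / t)) * wt d c r y := by positivity
    calc _ = (2 * C * B * I) * ((L * t + A * (h / t)) * wt d c r y) := by ring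
      _ ≤ (1 + 2 * C * B * I) * ((L * t + A * (h / t)) * wt d c r y) := by gcongr; linarith
      _ = _ := by ring
  · intro y y'
    have e1 : |Tz d t z e y - Tz d t z e y'| ≤
        (2 * C * B * I) * A / t * ‖y - y'‖ * (wt d c r y + wt d c r y') := by
      unfold Tz
      rw [← integral_sub (i3 y) (i3 y'), ← Real.norm_eq_abs]
      have hb : ∀ u, ‖e u * Pt d t (y - z u) - e u * Pt d t (y' - z u)‖ ≤
          (2 * C * B * A / t * ‖y - y'‖) *
            (wt d c r y * kt d t (y - u) + wt d c r y' * kt d t (y' - u)) := by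
        intro u
        rw [← mul_sub, norm_mul, Real.norm_eq_abs, Real.norm_eq_abs]
        have hs' : ∀ y, Kt d t (y - z u) ≤ B * Kt d t (y - u) := by
          intro y
          have hs := Kt_shift d ht y u (z u) ((hzu u).trans hht)
          have := hK0 (y - u); rw [hB]; linarith
        have hd : |Pt d t (y - z u) - Pt d t (y' - z u)| ≤
            C * (‖y - y'‖ / t) * (B * Kt d t (y - u) + B * Kt d t (y' - u)) := by
          refine (hPt.2 _ _).trans ?_
          have : y - z u - (y' - z u) = y - y' := by abel
          rw [this]
          gcongr
          · exact hs' y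
          · exact hs' y'
        have := hw0 u
        calc _ ≤ (A * wt d c r u) * (C * (‖y - y'‖ / t) * (B * Kt d t (y - u) + B * Kt d t (y' - u))) :=
              mul_le_mul (heA u) hd (abs_nonneg _) (by positivity)
          _ = (C * B * A / t * ‖y - y'‖) *
              (wt d c r u * Kt d t (y - u) + wt d c r u * Kt d t (y' - u)) := by ring
          _ ≤ (C * B * A / t * ‖y - y'‖) *
            (wt d c r y * kt d t (y - u) + wt d c r y' * kt d t (y' - u)) := by
              exact mul_le_mul_of_nonneg_left (add_le_add (wt_Kt' d c hr ht htr y u)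
                (wt_Kt' d c hr ht htr y' u)) (by positivity)
          _ ≤ _ := by
              have q1 := kt_pos d ht (y - u)
              have q2 := kt_pos d ht (y' - u)
              have q3 := hw0 y
              have q4 := hw0 y'
              have : 0 ≤ (C * B * A / t * ‖y - y'‖) *
                (wt d c r y * kt d t (y - u) + wt d c r y' * kt d t (y' - u)) := by positivity
              calc _ ≤ 2 * ((C * B * A / t * ‖y - y'‖) *
                (wt d c r y * kt d t (y - u) + wt d c r y' * kt d t (y' - u))) := by linarith
                _ = _ := by ring
      refine (norm_integral_le_of_norm_le ((((hkint y).const_mul _).add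
        ((hkint y').const_mul _)).const_mul _) (Filter.Eventually.of_forall hb)).trans ?_
      rw [integral_const_mul, integral_add' ((hkint y).const_mul _) ((hkint y').const_mul _),
        integral_const_mul, integral_const_mul, hkI, hkI]
      apply le_of_eq; ring
    have e2 := heL y y'
    have e3 : (e y - Tz d t z e y) - (e y' - Tz d t z e y') =
      (e y - e y') - (Tz d t z e y - Tz d t z e y') := by ring
    rw [e3]
    refine (abs_sub _ _).trans ((add_le_add e2 e1).trans ?_)
    have q3 := hw0 y
    have q4 := hw0 y'
    have p5 : 0 ≤ A / t * ‖y - y'‖ * (wt d c r y + wt d c r y') := by positivity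
    calc _ = (L * ‖y - y'‖ * (wt d c r y + wt d c r y')) +
          (2 * C * B * I) * (A / t * ‖y - y'‖ * (wt d c r y + wt d c r y')) := by ring
      _ ≤ (L * ‖y - y'‖ * (wt d c r y + wt d c r y')) +
          (1 + 2 * C * B * I) * (A / t * ‖y - y'‖ * (wt d c r y + wt d c r y')) := by
            gcongr; linarith
      _ = _ := by ring

def om (d : ℕ) : ℝ := (volume (ball (0 : E d) 1)).toReal

lemma om_pos (d : ℕ) : 0 < om d :=
  ENNReal.toReal_pos (measure_ball_pos volume _ one_pos).ne' measure_ball_lt_top.ne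

lemma vol_ball (d : ℕ) (c : E d) {r : ℝ} (hr : 0 < r) :
    volume (ball c r) = ENNReal.ofReal (r ^ d * om d) := by
  rw [Measure.addHaar_ball_of_pos volume c hr, finrank_euclideanSpace_fin,
    ENNReal.ofReal_mul (by positivity), om, ENNReal.ofReal_toReal measure_ball_lt_top.ne]

/-- selection of good points -/
lemma exists_sel (d : ℕ) (H : E d → ℝ≥0∞) (hH : Measurable H) (h : ℝ) (hh : 0 < h) :
    ∃ z : E d → E d, Measurable z ∧ (∀ u, ‖z u - u‖ ≤ h) ∧
      ∀ u, H (z u) ≤ (∫⁻ y in ball u h, H y) / ENNReal.ofReal ((h/2) ^ d * om d) := by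
  classical
  have h2 : 0 < h / 2 := by positivity
  have hex : ∀ n : ℕ, ∃ x ∈ ball (TopologicalSpace.denseSeq (E d) n) (h/2),
      H x ≤ (∫⁻ y in ball (TopologicalSpace.denseSeq (E d) n) (h/2), H y) /
        ENNReal.ofReal ((h/2) ^ d * om d) := by
    intro n
    obtain ⟨x, hx, hx'⟩ := exists_le_setLAverage (μ := volume) (f := H)
      (s := ball (TopologicalSpace.denseSeq (E d) n) (h/2))
      (measure_ball_pos volume _ h2).ne' measure_ball_lt_top.ne hH.aemeasurable
    refine ⟨x, hx, ?_⟩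
    rwa [setLAverage_eq, vol_ball d _ h2] at hx'
  choose p hp hp' using hex
  have hN : ∀ u : E d, ∃ n : ℕ, dist u (TopologicalSpace.denseSeq (E d) n) < h/2 := by
    intro u
    obtain ⟨n, hy⟩ := (TopologicalSpace.denseRange_denseSeq (E d)).exists_dist_lt u h2
    exact ⟨n, hy⟩
  have hm : Measurable fun u => Nat.find (hN u) := by
    apply measurable_find
    intro k
    exact measurableSet_lt (by fun_prop) measurable_const
  refine ⟨fun u => p (Nat.find (hN u)), (measurable_from_nat).comp hm, fun u => ?_, fun u => ?_⟩
  · have h1 := Nat.find_spec (hN u)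
    have h3 := hp (Nat.find (hN u))
    rw [mem_ball] at h3
    rw [← dist_eq_norm]
    have := dist_triangle_right (p (Nat.find (hN u))) u
      (TopologicalSpace.denseSeq (E d) (Nat.find (hN u)))
    linarith
  · refine (hp' _).trans ?_
    gcongr
    intro y hy
    have h1 := Nat.find_spec (hN u)
    rw [mem_ball] at hy ⊢
    have := dist_triangle_right y u (TopologicalSpace.denseSeq (E d) (Nat.find (hN u)))
    have := dist_triangle y (TopologicalSpace.denseSeq (E d) (Nat.find (hN u))) u
    rw [dist_comm _ u] at this
    linarith

/-- averaging over balls does not change the integral -/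
lemma lint_ball (d : ℕ) (W : E d → ℝ≥0∞) (hW : Measurable W) (h : ℝ) (hh : 0 < h) :
    ∫⁻ u, ∫⁻ y in ball u h, W y = ENNReal.ofReal (h ^ d * om d) * ∫⁻ y, W y := by
  have h1 : ∀ u, ∫⁻ y in ball u h, W y =
      ∫⁻ y, {q : E d × E d | dist q.1 q.2 < h}.indicator (fun q => W q.2) (u, y) := by
    intro u
    rw [← lintegral_indicator measurableSet_ball]
    congr 1; ext y
    simp only [Set.indicator, mem_ball, Set.mem_ofPred_eq, dist_comm]
  simp_rw [h1]
  have hmS : MeasurableSet {q : E d × E d | dist q.1 q.2 < h} :=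
    measurableSet_lt (by fun_prop) measurable_const
  rw [lintegral_lintegral_swap (f := fun u y =>
    {q : E d × E d | dist q.1 q.2 < h}.indicator (fun q => W q.2) (u, y))
    (((hW.comp measurable_snd).indicator hmS).aemeasurable)]
  have h2 : ∀ y, ∫⁻ u, {q : E d × E d | dist q.1 q.2 < h}.indicator (fun q => W q.2) (u, y) =
      ENNReal.ofReal (h ^ d * om d) * W y := by
    intro y
    have : ∀ u, {q : E d × E d | dist q.1 q.2 < h}.indicator (fun q => W q.2) (u, y) =
      (ball y h).indicator (fun _ => W y) u := by
      intro u; simp only [Set.indicator, mem_ball, Set.mem_ofPred_eq]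
    simp_rw [this]
    rw [lintegral_indicator measurableSet_ball, lintegral_const, Measure.restrict_apply_univ,
      vol_ball d y hh, mul_comm]
  simp_rw [h2]
  rw [lintegral_const_mul _ hW]

/-- exponent -/
def pp (d : ℕ) : ℝ := 1 + 1 / (4 * d)

def ss (d : ℕ) : ℝ := (pp d)⁻¹

lemma pp_pos (d : ℕ) : 0 < pp d := by unfold pp; positivity

lemma ss_pos (d : ℕ) : 0 < ss d := inv_pos.2 (pp_pos d)

lemma term_bound (d : ℕ) (hd : 1 ≤ d) : ∃ C : ℝ, 0 < C ∧ ∀ (F : E d → ℝ≥0∞), Measurable F →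
    ∀ (c : E d) (r h : ℝ), 0 < h → h ≤ r → ∃ z : E d → E d, Measurable z ∧ (∀ u, ‖z u - u‖ ≤ h) ∧
    ∫⁻ u, ENNReal.ofReal (wt d c r u) * F (z u) ≤ ENNReal.ofReal (C * h ^ (-(1/4:ℝ))) *
      (∫⁻ y, (ENNReal.ofReal (wt d c r y) * F y) ^ (ss d)) ^ (pp d) := by
  have hom := om_pos d
  have hs := ss_pos d
  have hp := pp_pos d
  have hd0 : (0:ℝ) < d := by exact_mod_cast hd
  have hp1 : pp d - 1 = 1 / (4 * d) := by unfold pp; ring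
  refine ⟨8 ^ d * (8 ^ d / om d) ^ (pp d - 1), by positivity, fun F hF c r h hh hhr => ?_⟩
  obtain ⟨z, hz, hzu, hzF⟩ := exists_sel d (fun y => F y ^ ss d) (hF.pow_const _) h hh
  refine ⟨z, hz, hzu, ?_⟩
  have hr : 0 < r := hh.trans_le hhr
  set W : E d → ℝ≥0∞ := fun y => (ENNReal.ofReal (wt d c r y) * F y) ^ (ss d) with hWdef
  have hmw : Measurable fun y => ENNReal.ofReal (wt d c r y) :=
    (wt_cont d c hr).measurable.ennreal_ofReal
  have hW : Measurable W := (hmw.mul hF).pow_const _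
  set D : ℝ≥0∞ := ENNReal.ofReal (4 ^ d * ((h/2) ^ d * om d)⁻¹) with hD
  set Q : ℝ≥0∞ := ∫⁻ y, W y with hQ
  have hX : ∀ u, (ENNReal.ofReal (wt d c r u) * F (z u)) ^ (ss d) ≤
      D * ∫⁻ y in ball u h, W y := by
    intro u
    have hss1 : ss d ≤ 1 := by
      unfold ss; apply inv_le_one_of_one_le₀; unfold pp
      have : 0 ≤ 1 / (4 * (d:ℝ)) := by positivity
      linarith
    rw [ENNReal.mul_rpow_of_nonneg _ _ hs.le]
    calc _ ≤ ENNReal.ofReal (wt d c r u) ^ ss d * ((∫⁻ y in ball u h, F y ^ ss d) /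
            ENNReal.ofReal ((h/2) ^ d * om d)) := by gcongr; exact hzF u
      _ = ((ENNReal.ofReal ((h/2) ^ d * om d))⁻¹) *
          ∫⁻ y in ball u h, ENNReal.ofReal (wt d c r u) ^ ss d * F y ^ ss d := by
          rw [lintegral_const_mul _ (hF.pow_const _), div_eq_mul_inv]; ring
      _ ≤ ((ENNReal.ofReal ((h/2) ^ d * om d))⁻¹) *
          ∫⁻ y in ball u h, ENNReal.ofReal (4 ^ d) * W y := by
          refine mul_le_mul_right ?_ _
          apply setLIntegral_mono (hW.const_mul _)
          intro y hy
          rw [hWdef]; simp only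
          rw [ENNReal.mul_rpow_of_nonneg _ _ hs.le, ← mul_assoc]
          refine mul_le_mul_left ?_ _
          have h1 := wt_compare d c hr hr le_rfl y u
          have h2 : wt d c r u ≤ 4 ^ d * wt d c r y := by
            refine h1.trans ?_
            have h3 : 1 + ‖y - u‖ / r ≤ 2 := by
              have : ‖y - u‖ ≤ r := by
                rw [← dist_eq_norm]; exact (mem_ball.1 hy).le.trans hhr
              have : ‖y - u‖ / r ≤ 1 := by rw [div_le_one hr]; exact this
              linarith
            have := wt_pos d c hr y
            calc _ ≤ (2:ℝ) ^ (2*d) * wt d c r y := by gcongr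
              _ = _ := by rw [pow_mul]; norm_num
          calc _ ≤ (ENNReal.ofReal (4 ^ d) * ENNReal.ofReal (wt d c r y)) ^ ss d := by
                rw [← ENNReal.ofReal_mul (by positivity)]; gcongr
            _ = ENNReal.ofReal (4 ^ d) ^ ss d * ENNReal.ofReal (wt d c r y) ^ ss d :=
                ENNReal.mul_rpow_of_nonneg _ _ hs.le
            _ ≤ _ := by
                gcongr
                calc _ ≤ ENNReal.ofReal (4 ^ d) ^ (1:ℝ) := by
                      apply ENNReal.rpow_le_rpow_of_exponent_le _ hss1
                      rw [ENNReal.one_le_ofReal]; exact one_le_pow₀ (by norm_num)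
                  _ = _ := ENNReal.rpow_one _
      _ = _ := by
          rw [lintegral_const_mul _ hW, hD, ENNReal.ofReal_mul (p := 4 ^ d) (by positivity),
            ENNReal.ofReal_inv_of_pos (by positivity)]
          ring
  have hX2 : ∀ u, ENNReal.ofReal (wt d c r u) * F (z u) ≤
      (D * ∫⁻ y in ball u h, W y) * (D * Q) ^ (pp d - 1) := by
    intro u
    have e1 : ENNReal.ofReal (wt d c r u) * F (z u) =
        ((ENNReal.ofReal (wt d c r u) * F (z u)) ^ (ss d)) ^ (pp d) := by
      rw [← ENNReal.rpow_mul, ss, inv_mul_cancel₀ hp.ne', ENNReal.rpow_one]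
    have e2 : ∀ x : ℝ≥0∞, x ^ pp d = x * x ^ (pp d - 1) := by
      intro x
      have : pp d = 1 + (pp d - 1) := by ring
      conv_lhs => rw [this]
      rw [ENNReal.rpow_add_of_nonneg _ _ zero_le_one (by rw [hp1]; positivity), ENNReal.rpow_one]
    rw [e1, e2]
    have e3 : D * ∫⁻ y in ball u h, W y ≤ D * Q := by
      gcongr; exact setLIntegral_le_lintegral _ _
    have e4 : 0 ≤ pp d - 1 := by rw [hp1]; positivity
    gcongr
    · exact hX u
    · exact (hX u).trans e3
  have hm : Measurable fun u => ∫⁻ y in ball u h, W y := by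
    have h1 : ∀ u, ∫⁻ y in ball u h, W y =
        ∫⁻ y, {q : E d × E d | dist q.1 q.2 < h}.indicator (fun q => W q.2) (u, y) := by
      intro u
      rw [← lintegral_indicator measurableSet_ball]
      congr 1; ext y
      simp only [Set.indicator, mem_ball, Set.mem_ofPred_eq, dist_comm]
    simp_rw [h1]
    apply Measurable.lintegral_prod_right
    exact (hW.comp measurable_snd).indicator (measurableSet_lt (by fun_prop) measurable_const)
  calc ∫⁻ u, ENNReal.ofReal (wt d c r u) * F (z u)
      ≤ ∫⁻ u, (D * ∫⁻ y in ball u h, W y) * (D * Q) ^ (pp d - 1) := lintegral_mono hX2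
    _ = (D * (ENNReal.ofReal (h ^ d * om d) * Q)) * (D * Q) ^ (pp d - 1) := by
        rw [lintegral_mul_const _ (hm.const_mul _), lintegral_const_mul _ hm, lint_ball d W hW h hh]
    _ = _ := by
        have e4 : 0 ≤ pp d - 1 := by rw [hp1]; positivity
        have e2 : Q ^ pp d = Q * Q ^ (pp d - 1) := by
          have : pp d = 1 + (pp d - 1) := by ring
          conv_lhs => rw [this]
          rw [ENNReal.rpow_add_of_nonneg _ _ zero_le_one e4, ENNReal.rpow_one]
        rw [e2, ENNReal.mul_rpow_of_nonneg _ _ e4]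
        have e5 : D * ENNReal.ofReal (h ^ d * om d) * D ^ (pp d - 1) =
            ENNReal.ofReal (8 ^ d * (8 ^ d / om d) ^ (pp d - 1) * h ^ (-(1/4:ℝ))) := by
          rw [hD, ENNReal.ofReal_rpow_of_pos (by positivity), ← ENNReal.ofReal_mul (by positivity),
            ← ENNReal.ofReal_mul (by positivity)]
          congr 1
          have f1 : 4 ^ d * ((h/2) ^ d * om d)⁻¹ = (8 ^ d / om d) * (h ^ d)⁻¹ := by
            have : (8:ℝ) ^ d = 4 ^ d * 2 ^ d := by rw [← mul_pow]; norm_num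
            rw [this, div_pow]; field_simp
          rw [f1, Real.mul_rpow (by positivity) (by positivity)]
          have f2 : ((h ^ d)⁻¹) ^ (pp d - 1) = h ^ (-(1/4:ℝ)) := by
            rw [← Real.rpow_natCast, ← Real.rpow_neg hh.le, ← Real.rpow_mul hh.le, hp1]
            congr 1; field_simp
          rw [f2]; field_simp
        rw [← e5]; ring

def Fm (d : ℕ) (R : ℝ) (f : E d → ℝ) (x : E d) : ℝ≥0∞ :=
  ⨆ (t : ℝ) (_ : 0 < t ∧ t < R), ENNReal.ofReal |∫ z, Pt d t (x - z) * f z|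

lemma conv_cont (d : ℕ) {t : ℝ} (ht : 0 < t) {f : E d → ℝ} (hf : Integrable f) :
    Continuous fun x => ∫ z, Pt d t (x - z) * f z := by
  obtain ⟨C, hC, hb⟩ := Pt_bdd d
  refine continuous_of_dominated (bound := fun z => C * t ^ (-(d:ℝ)) * ‖f z‖) ?_ ?_ ?_ ?_
  · intro x
    exact ((Pt_cont d t).comp (continuous_const.sub continuous_id)).aestronglyMeasurable.mul hf.1
  · intro x
    refine Eventually.of_forall fun z => ?_
    rw [norm_mul, Real.norm_of_nonneg (Pt_nonneg d ht _)]
    exact mul_le_mul_of_nonneg_right (hb t ht _) (norm_nonneg _)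
  · exact hf.norm.const_mul _
  · refine Eventually.of_forall fun z => ?_
    exact ((Pt_cont d t).comp (continuous_id.sub continuous_const)).mul continuous_const

lemma Fm_meas (d : ℕ) (R : ℝ) {f : E d → ℝ} (hf : Integrable f) : Measurable (Fm d R f) := by
  apply LowerSemicontinuous.measurable
  apply lowerSemicontinuous_iSup; intro t
  apply lowerSemicontinuous_iSup; intro ht
  exact (ENNReal.continuous_ofReal.comp (conv_cont d ht.1 hf).abs).lowerSemicontinuous

lemma Pt_even (d : ℕ) (t : ℝ) (v : E d) : Pt d t (-v) = Pt d t v := by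
  unfold Pt gaussP; rw [smul_neg, norm_neg]

lemma Tz_fubini (d : ℕ) {t : ℝ} (ht : 0 < t) {f e : E d → ℝ} (hf : Integrable f) (he : Integrable e)
    {z : E d → E d} (hz : Measurable z) :
    Integrable (fun y => f y * Tz d t z e y) ∧
    ∫ y, f y * Tz d t z e y = ∫ u, e u * ∫ y, Pt d t (z u - y) * f y := by
  obtain ⟨C, hC, hb⟩ := Pt_bdd d
  have hint : Integrable (fun q : E d × E d => (f q.1 * e q.2) * Pt d t (q.1 - z q.2))
      (volume.prod volume) := by
    refine (hf.mul_prod he).mul_bdd (c := C * t ^ (-(d:ℝ))) ?_ ?_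
    · apply Measurable.aestronglyMeasurable
      exact (Pt_cont d t).measurable.comp (measurable_fst.sub (hz.comp measurable_snd))
    · refine Eventually.of_forall fun q => ?_
      rw [Real.norm_of_nonneg (Pt_nonneg d ht _)]; exact hb t ht _
  have e1 : ∀ y, f y * Tz d t z e y = ∫ u, f y * e u * Pt d t (y - z u) := by
    intro y; unfold Tz; rw [← integral_const_mul]; congr 1; ext u; ring
  constructor
  · simp_rw [e1]; exact hint.integral_prod_left
  · simp_rw [e1]
    rw [integral_integral_swap hint]
    congr 1; ext u
    rw [← integral_const_mul]; congr 1; ext y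
    rw [← Pt_even d t (z u - y), neg_sub]; ring

lemma Tz_bound (d : ℕ) {t R : ℝ} (ht : 0 < t) (htR : t < R) {f e : E d → ℝ} (hf : Integrable f)
    (he : Integrable e) {z : E d → E d} (hz : Measurable z) :
    ENNReal.ofReal |∫ y, f y * Tz d t z e y| ≤
      ∫⁻ u, ENNReal.ofReal |e u| * Fm d R f (z u) := by
  rw [(Tz_fubini d ht hf he hz).2, ← Real.norm_eq_abs, ofReal_norm]
  refine (enorm_integral_le_lintegral_enorm _).trans (lintegral_mono fun u => ?_)
  rw [enorm_mul, Real.enorm_eq_ofReal_abs]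
  refine mul_le_mul_right ?_ _
  rw [Real.enorm_eq_ofReal_abs]
  exact le_iSup₂_of_le (f := fun (t : ℝ) (_ : 0 < t ∧ t < R) =>
    ENNReal.ofReal |∫ y, Pt d t (z u - y) * f y|) t ⟨ht, htR⟩ le_rfl

def WInv (d : ℕ) (c : E d) (r A L : ℝ) (e : E d → ℝ) : Prop :=
  Measurable e ∧ (∀ y, |e y| ≤ A * wt d c r y) ∧
  (∀ y y', |e y - e y'| ≤ L * ‖y - y'‖ * (wt d c r y + wt d c r y'))

lemma Inv_cont (d : ℕ) (c : E d) {r L : ℝ} (hr : 0 < r) (hL : 0 ≤ L) {e : E d → ℝ}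
    (h : ∀ y y', |e y - e y'| ≤ L * ‖y - y'‖ * (wt d c r y + wt d c r y')) : Continuous e := by
  have : LipschitzWith (2 * L).toNNReal e := by
    apply LipschitzWith.of_dist_le_mul
    intro x y
    rw [Real.dist_eq, dist_eq_norm, Real.coe_toNNReal _ (by positivity)]
    refine (h x y).trans ?_
    have := wt_le_one d c hr x
    have := wt_le_one d c hr y
    calc _ ≤ L * ‖x - y‖ * 2 := mul_le_mul_of_nonneg_left (by linarith) (by positivity)
      _ = _ := by ring
  exact this.continuous

lemma iter_step (d : ℕ) (hd : 1 ≤ d) : ∃ C₁ C₂ : ℝ, 1 ≤ C₁ ∧ 0 < C₂ ∧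
    ∀ (R r t A L : ℝ) (c : E d) (f e : E d → ℝ), Integrable f → 0 < t → t ≤ r → t < R →
    0 ≤ A → 0 ≤ L → ∀ κ : ℝ, 0 < κ → κ ≤ 1 →
    WInv d c r A L e → ∃ e', WInv d c r (C₁ * (L * t + A * κ)) (L + C₁ * A / t) e' ∧
      ENNReal.ofReal |∫ y, f y * e y| ≤ ENNReal.ofReal |∫ y, f y * e' y| +
        ENNReal.ofReal (A * (C₂ * (κ * t) ^ (-(1/4:ℝ)))) *
        (∫⁻ y, (ENNReal.ofReal (wt d c r y) * Fm d R f y) ^ (ss d)) ^ (pp d) := by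
  obtain ⟨C₁, hC₁, h1⟩ := one_step d
  obtain ⟨C₂, hC₂, h2⟩ := term_bound d hd
  refine ⟨C₁, C₂, hC₁, hC₂, fun R r t A L c f e hf ht htr htR hA hL κ hκ hκ1 hI => ?_⟩
  have hr : 0 < r := ht.trans_le htr
  have hκt : κ * t ≤ t := by nlinarith
  obtain ⟨z, hz, hzu, hzF⟩ := h2 (Fm d R f) (Fm_meas d R hf) c r (κ * t) (by positivity)
    (hκt.trans htr)
  obtain ⟨g1, g2⟩ := h1 c r t (κ * t) A L ht htr (by positivity) hκt hA hL z hz hzu e hI.1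
    hI.2.1 hI.2.2
  rw [mul_div_cancel_right₀ _ ht.ne'] at g1
  have hLip : 0 ≤ L + C₁ * A / t := by positivity
  refine ⟨fun y => e y - Tz d t z e y, ⟨(Inv_cont d c hr hLip g2).measurable, g1, g2⟩, ?_⟩
  have hei : Integrable e := by
    refine ((wt_integrable d hd c hr).const_mul A).mono' hI.1.aestronglyMeasurable
      (Eventually.of_forall hI.2.1)
  have hbd : ∀ y, ‖e y‖ ≤ A := fun y => (hI.2.1 y).trans (by
    have := wt_le_one d c hr y; nlinarith)
  have hfe : Integrable fun y => f y * e y :=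
    hf.mul_bdd (c := A) hI.1.aestronglyMeasurable (Eventually.of_forall hbd)
  have hfT := Tz_fubini d ht hf hei hz
  have e1 : ∫ y, f y * e y = (∫ y, f y * (e y - Tz d t z e y)) + ∫ y, f y * Tz d t z e y := by
    simp_rw [mul_sub]
    rw [integral_sub hfe hfT.1]; ring
  rw [e1]
  refine (ENNReal.ofReal_le_ofReal (abs_add_le _ _)).trans ?_
  rw [ENNReal.ofReal_add (abs_nonneg _) (abs_nonneg _)]
  gcongr
  refine (Tz_bound d ht htR hf hei hz).trans ?_
  calc _ ≤ ∫⁻ u, ENNReal.ofReal A * (ENNReal.ofReal (wt d c r u) * Fm d R f (z u)) := by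
        refine lintegral_mono fun u => ?_
        rw [← mul_assoc, ← ENNReal.ofReal_mul hA]
        exact mul_le_mul_left (ENNReal.ofReal_le_ofReal (hI.2.1 u)) _
    _ = ENNReal.ofReal A * ∫⁻ u, (ENNReal.ofReal (wt d c r u) * Fm d R f (z u)) := by
        rw [lintegral_const_mul]
        exact (wt_cont d c hr).measurable.ennreal_ofReal.mul ((Fm_meas d R hf).comp hz)
    _ ≤ _ := by
        rw [ENNReal.ofReal_mul hA, mul_assoc]
        exact mul_le_mul_right hzF _

lemma iter_main (d : ℕ) (hd : 1 ≤ d) : ∃ C : ℝ, 0 < C ∧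
    ∀ (R r : ℝ) (c : E d) (f φ : E d → ℝ), Integrable f → 0 < r → r ≤ R →
    WInv d c r 1 (1/r) φ →
      ENNReal.ofReal |∫ y, f y * φ y| ≤ ENNReal.ofReal (C * r ^ (-(1/4:ℝ))) *
        (∫⁻ y, (ENNReal.ofReal (wt d c r y) * Fm d R f y) ^ (ss d)) ^ (pp d) := by
  obtain ⟨C₁, C₂, hC₁, hC₂, hst⟩ := iter_step d hd
  set μ : ℝ := 1 / (4 * C₁) with hμ
  have hμ0 : 0 < μ := by positivity
  have hμ1 : μ ≤ 1 := by
    rw [hμ, div_le_one (by positivity)]; linarith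
  have hCμ : C₁ * μ = 1/4 := by rw [hμ]; field_simp
  clear_value μ
  refine ⟨4 * (μ ^ 3)⁻¹ * C₂, by positivity, fun R r c f φ hf hr hrR hφ => ?_⟩
  set Q := (∫⁻ y, (ENNReal.ofReal (wt d c r y) * Fm d R f y) ^ (ss d)) ^ (pp d) with hQ
  set K : ℝ := 2 * (μ ^ 3)⁻¹ * C₂ * r ^ (-(1/4:ℝ)) with hK
  have hr4 : 0 < r ^ (-(1/4:ℝ)) := by positivity
  have key : ∀ n : ℕ, ∃ e, WInv d c r ((μ/2)^n / μ^2) ((μ/2)^n / (μ^(4*n) * (r/2))) e ∧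
      ENNReal.ofReal |∫ y, f y * φ y| ≤ ENNReal.ofReal |∫ y, f y * e y| +
        ENNReal.ofReal (K * (2 - 2 * (1/2)^n)) * Q := by
    intro n
    induction n with
    | zero =>
      refine ⟨φ, ⟨hφ.1, fun y => (hφ.2.1 y).trans ?_, fun y y' => (hφ.2.2 y y').trans ?_⟩, by simp⟩
      · have := (wt_pos d c hr y).le
        refine mul_le_mul_of_nonneg_right ?_ this
        rw [pow_zero, le_div_iff₀ (by positivity)]; nlinarith
      · have := (wt_pos d c hr y).le
        have := (wt_pos d c hr y').le
        refine mul_le_mul_of_nonneg_right (mul_le_mul_of_nonneg_right ?_ (norm_nonneg _)) (by positivity)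
        rw [pow_zero, mul_zero, pow_zero, one_mul]
        exact one_div_le_one_div_of_le (by positivity) (by linarith)
    | succ n ih =>
      obtain ⟨e, he, hle⟩ := ih
      have hp4 : μ ^ (4*n) ≤ 1 := pow_le_one₀ hμ0.le hμ1
      have ht0 : 0 < μ ^ (4*n) * (r/2) := by positivity
      have htr : μ ^ (4*n) * (r/2) ≤ r / 2 := by nlinarith
      obtain ⟨e', he', hle'⟩ := hst R r (μ ^ (4*n) * (r/2)) ((μ/2)^n / μ^2)
        ((μ/2)^n / (μ^(4*n) * (r/2))) c f e hf ht0 (by linarith) (by linarith)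
        (by positivity) (by positivity) (μ^4) (by positivity) (pow_le_one₀ hμ0.le hμ1) he
      refine ⟨e', ⟨he'.1, fun y => (he'.2.1 y).trans ?_, fun y y' => (he'.2.2 y y').trans ?_⟩, ?_⟩
      · have := (wt_pos d c hr y).le
        refine mul_le_mul_of_nonneg_right ?_ this
        rw [div_mul_cancel₀ _ ht0.ne']
        have e1 : C₁ * ((μ/2)^n + (μ/2)^n / μ^2 * μ^4) = (μ/2)^n * (C₁ * (1 + μ^2)) := by
          field_simp
        have e2 : (μ/2)^(n+1) / μ^2 = (μ/2)^n * (1/(2*μ)) := by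
          rw [pow_succ]; field_simp
        rw [e1, e2]
        refine mul_le_mul_of_nonneg_left ?_ (by positivity)
        rw [le_div_iff₀ (by positivity)]
        have : C₁ * (1 + μ^2) * (2*μ) = 2 * (C₁ * μ) * (1 + μ^2) := by ring
        rw [this, hCμ]; nlinarith
      · have := (wt_pos d c hr y).le
        have := (wt_pos d c hr y').le
        refine mul_le_mul_of_nonneg_right (mul_le_mul_of_nonneg_right ?_ (norm_nonneg _)) (by positivity)
        have e1 : (μ/2)^n / (μ^(4*n) * (r/2)) + C₁ * ((μ/2)^n / μ^2) / (μ^(4*n) * (r/2)) =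
          ((μ/2)^n / (μ^(4*n) * (r/2))) * (1 + C₁ / μ^2) := by field_simp
        have e2 : (μ/2)^(n+1) / (μ^(4*(n+1)) * (r/2)) =
          ((μ/2)^n / (μ^(4*n) * (r/2))) * (1 / (2 * μ^3)) := by
          rw [pow_succ, mul_add, pow_add]; field_simp
        rw [e1, e2]
        refine mul_le_mul_of_nonneg_left ?_ (by positivity)
        have e3 : 1 / (2 * μ^3) = 2 * C₁ / μ^2 := by
          rw [div_eq_div_iff (by positivity) (by positivity)]
          have : 2 * C₁ * (2 * μ^3) = 4 * (C₁ * μ) * μ^2 := by ring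
          rw [this, hCμ]; ring
        rw [e3]
        have : 1 ≤ C₁ / μ^2 := by
          rw [le_div_iff₀ (by positivity)]; nlinarith
        have : 2 * C₁ / μ^2 = C₁ / μ^2 + C₁ / μ^2 := by ring
        linarith
      · refine hle.trans ?_
        have e0 : K * (2 - 2 * (1/2)^(n+1)) = K * (1/2)^n + K * (2 - 2 * (1/2)^n) := by
          rw [pow_succ]; ring
        have hpn : ((1/2:ℝ))^n ≤ 1 := pow_le_one₀ (by norm_num) (by norm_num)
        rw [e0, ENNReal.ofReal_add (by positivity)
          (mul_nonneg (by positivity) (by linarith)), add_mul, ← add_assoc]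
        gcongr
        refine hle'.trans ?_
        refine add_le_add le_rfl (mul_le_mul_left (ENNReal.ofReal_le_ofReal ?_) _)
        have e1 : (μ ^ 4 * (μ ^ (4*n) * (r/2))) ^ (-(1/4:ℝ)) =
            (μ^(n+1))⁻¹ * (r/2) ^ (-(1/4:ℝ)) := by
          rw [← mul_assoc, ← pow_add, Real.mul_rpow (by positivity) (by positivity)]
          congr 1
          have : 4 + 4 * n = (n+1) * 4 := by ring
          rw [this, pow_mul, ← Real.rpow_natCast (μ^(n+1)) 4, ← Real.rpow_mul (by positivity)]
          norm_num
          rw [Real.rpow_neg_one]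
        have e2 : (r/2) ^ (-(1/4:ℝ)) ≤ 2 * r ^ (-(1/4:ℝ)) := by
          rw [Real.div_rpow hr.le (by norm_num), div_le_iff₀ (by positivity)]
          have : (1:ℝ) ≤ 2 * 2 ^ (-(1/4:ℝ)) := by
            calc (1:ℝ) = 2 * 2 ^ (-1:ℝ) := by rw [Real.rpow_neg_one]; norm_num
              _ ≤ _ := by gcongr <;> norm_num
          nlinarith
        rw [e1]
        calc _ = ((1/2)^n * (μ^3)⁻¹ * C₂) * (r/2) ^ (-(1/4:ℝ)) := by
              rw [div_pow, div_pow, one_pow]; field_simp; ring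
          _ ≤ ((1/2)^n * (μ^3)⁻¹ * C₂) * (2 * r ^ (-(1/4:ℝ))) :=
              mul_le_mul_of_nonneg_left e2 (by positivity)
          _ = _ := by rw [hK]; ring
  have hb : ∀ n : ℕ, ENNReal.ofReal |∫ y, f y * φ y| ≤
      ENNReal.ofReal ((∫ y, ‖f y‖) * ((μ/2)^n / μ^2)) + ENNReal.ofReal (2 * K) * Q := by
    intro n
    obtain ⟨e, he, hle⟩ := key n
    refine hle.trans ?_
    refine add_le_add (ENNReal.ofReal_le_ofReal ?_)
      (mul_le_mul_left (ENNReal.ofReal_le_ofReal ?_) _)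
    · rw [← integral_mul_const, ← Real.norm_eq_abs]
      refine norm_integral_le_of_norm_le (hf.norm.mul_const _) (Eventually.of_forall fun y => ?_)
      rw [norm_mul]
      refine mul_le_mul_of_nonneg_left ((he.2.1 y).trans ?_) (norm_nonneg _)
      have := wt_le_one d c hr y
      exact mul_le_of_le_one_right (by positivity) this
    · have : 0 ≤ K * (1/2)^n := by positivity
      nlinarith
  have hlim : Tendsto (fun n : ℕ => ENNReal.ofReal ((∫ y, ‖f y‖) * ((μ/2)^n / μ^2)) +
      ENNReal.ofReal (2 * K) * Q) atTop (𝓝 (0 + ENNReal.ofReal (2 * K) * Q)) := by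
    refine Tendsto.add_const _ ?_
    rw [← ENNReal.ofReal_zero]
    refine (ENNReal.continuous_ofReal.tendsto 0).comp ?_
    have h1 := tendsto_pow_atTop_nhds_zero_of_lt_one (r := μ/2) (by positivity) (by linarith)
    have := (h1.div_const (μ^2)).const_mul (∫ y, ‖f y‖)
    simpa using this
  have := ge_of_tendsto' hlim hb
  rw [zero_add] at this
  refine this.trans (le_of_eq ?_)
  congr 2; rw [hK]; ring

def HL (d : ℕ) (g : E d → ℝ≥0∞) (x : E d) : ℝ≥0∞ :=
  ⨆ (ρ : ℝ) (_ : 0 < ρ), (ENNReal.ofReal (ρ ^ d))⁻¹ * ∫⁻ y in ball x ρ, g y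

lemma HL_le (d : ℕ) (g : E d → ℝ≥0∞) (x : E d) {ρ : ℝ} (hρ : 0 < ρ) :
    ∫⁻ y in ball x ρ, g y ≤ ENNReal.ofReal (ρ ^ d) * HL d g x := by
  have h : (ENNReal.ofReal (ρ ^ d))⁻¹ * ∫⁻ y in ball x ρ, g y ≤ HL d g x :=
    le_iSup₂_of_le (f := fun (ρ : ℝ) (_ : 0 < ρ) =>
      (ENNReal.ofReal (ρ ^ d))⁻¹ * ∫⁻ y in ball x ρ, g y) ρ hρ le_rfl
  have h0 : ENNReal.ofReal (ρ ^ d) ≠ 0 := by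
    rw [Ne, ENNReal.ofReal_eq_zero, not_le]; positivity
  calc _ = ENNReal.ofReal (ρ ^ d) * ((ENNReal.ofReal (ρ ^ d))⁻¹ * ∫⁻ y in ball x ρ, g y) := by
        rw [← mul_assoc, ENNReal.mul_inv_cancel h0 ENNReal.ofReal_ne_top, one_mul]
    _ ≤ _ := mul_le_mul_right h _

lemma HL_weak (d : ℕ) (hd : 1 ≤ d) (g : E d → ℝ≥0∞) (hg : Measurable g) {l : ℝ} (hl : 0 < l) :
    ENNReal.ofReal l * volume {x | ENNReal.ofReal l < HL d g x} ≤
      ENNReal.ofReal (5 ^ d * om d) * ∫⁻ y, g y := by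
  have hom := om_pos d
  have : Nonempty (Fin d) := ⟨⟨0, hd⟩⟩
  by_cases hfin : ∫⁻ y, g y = ⊤
  · rw [hfin, ENNReal.mul_top]; · exact le_top
    rw [Ne, ENNReal.ofReal_eq_zero, not_le]; positivity
  have h1 : ∀ x : {x | ENNReal.ofReal l < HL d g x}, ∃ ρ : ℝ, 0 < ρ ∧
      ENNReal.ofReal l * ENNReal.ofReal (ρ ^ d) < ∫⁻ y in ball x.1 ρ, g y := by
    rintro ⟨x, hx⟩
    rw [Set.mem_ofPred_eq, HL, lt_iSup_iff] at hx
    obtain ⟨ρ, hx⟩ := hx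
    rw [lt_iSup_iff] at hx
    obtain ⟨hρ, hx⟩ := hx
    refine ⟨ρ, hρ, ?_⟩
    have h0 : ENNReal.ofReal (ρ ^ d) ≠ 0 := by
      rw [Ne, ENNReal.ofReal_eq_zero, not_le]; positivity
    rw [mul_comm (_⁻¹), ← div_eq_mul_inv, ENNReal.lt_div_iff_mul_lt (.inl h0)
      (.inl ENNReal.ofReal_ne_top)] at hx
    exact hx
  choose ρ hρ hlt using h1
  set I := (∫⁻ y, g y).toReal with hI
  have hbd : ∀ a ∈ (Set.univ : Set {x | ENNReal.ofReal l < HL d g x}), ρ a ≤ 1 + I / l := by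
    intro a _
    have h2 : ENNReal.ofReal (l * ρ a ^ d) ≤ ENNReal.ofReal I := by
      rw [ENNReal.ofReal_mul hl.le, hI, ENNReal.ofReal_toReal hfin]
      exact (hlt a).le.trans (setLIntegral_le_lintegral _ _)
    have hI0 : 0 ≤ I := ENNReal.toReal_nonneg
    rw [ENNReal.ofReal_le_ofReal_iff hI0] at h2
    have h3 : ρ a ^ d ≤ I / l := by rw [le_div_iff₀ hl]; linarith
    by_contra! hc
    have h4 : 1 ≤ ρ a := by have : 0 ≤ I / l := by positivity
                            linarith
    have h5 : ρ a ≤ ρ a ^ d := le_self_pow₀ h4 (by omega)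
    linarith
  obtain ⟨u, -, hdisj, hcov⟩ := Vitali.exists_disjoint_subfamily_covering_enlargement_closedBall
    Set.univ (fun a : {x | ENNReal.ofReal l < HL d g x} => a.1) ρ _ hbd 5 (by norm_num)
  have hdisj' : u.PairwiseDisjoint fun a => ball a.1 (ρ a) :=
    fun a ha b hb hab => (hdisj ha hb hab).mono ball_subset_closedBall ball_subset_closedBall
  have hcount : u.Countable := hdisj'.countable_of_isOpen (fun a _ => isOpen_ball)
    (fun a _ => ⟨a.1, mem_ball_self (hρ a)⟩)
  have hsub : {x | ENNReal.ofReal l < HL d g x} ⊆ ⋃ a ∈ u, closedBall a.1 (5 * ρ a) := by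
    intro x hx
    obtain ⟨b, hb, hs⟩ := hcov ⟨x, hx⟩ (Set.mem_univ _)
    exact Set.mem_biUnion hb (hs (mem_closedBall_self (hρ _).le))
  have : Countable u := hcount.to_subtype
  calc _ ≤ ENNReal.ofReal l * ∑' a : u, volume (closedBall (a:E d) (5 * ρ a)) := by
        refine mul_le_mul_right ?_ _
        refine (measure_mono hsub).trans (measure_biUnion_le _ hcount _)
    _ = ∑' a : u, ENNReal.ofReal (5 ^ d * om d) * (ENNReal.ofReal l * ENNReal.ofReal (ρ a ^ d)) := by
        rw [← ENNReal.tsum_mul_left]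
        congr 1; ext a
        have hp := hρ a
        rw [Measure.addHaar_closedBall_eq_addHaar_ball volume, vol_ball d _ (by positivity),
          ← ENNReal.ofReal_mul hl.le, ← ENNReal.ofReal_mul hl.le, ← ENNReal.ofReal_mul (by positivity)]
        congr 1; rw [mul_pow]; ring
    _ ≤ ∑' a : u, ENNReal.ofReal (5 ^ d * om d) * ∫⁻ y in ball (a:E d) (ρ a), g y :=
        ENNReal.tsum_le_tsum fun a => mul_le_mul_right (hlt a).le _
    _ = ENNReal.ofReal (5 ^ d * om d) * ∫⁻ y in ⋃ a ∈ u, ball (a:E d) (ρ a), g y := by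
        rw [ENNReal.tsum_mul_left, lintegral_biUnion hcount (fun _ _ => measurableSet_ball) hdisj']
    _ ≤ _ := mul_le_mul_right (setLIntegral_le_lintegral _ _) _

lemma HL_trunc (d : ℕ) (hd : 1 ≤ d) (g : E d → ℝ≥0∞) (hg : Measurable g) {l : ℝ} (hl : 0 < l) :
    ENNReal.ofReal (l/2) * volume {x | ENNReal.ofReal l < HL d g x} ≤
      ENNReal.ofReal (5 ^ d * om d) *
        ∫⁻ y, {y | ENNReal.ofReal (l / (2 * om d)) < g y}.indicator g y := by
  have hom := om_pos d
  have hms : MeasurableSet {y | ENNReal.ofReal (l / (2 * om d)) < g y} :=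
    measurableSet_lt measurable_const hg
  refine le_trans ?_ (HL_weak d hd _ (hg.indicator hms) (l := l/2) (by positivity))
  refine mul_le_mul_right (measure_mono fun x hx => ?_) _
  rw [Set.mem_ofPred_eq] at hx ⊢
  by_contra! hc
  have : HL d g x ≤ ENNReal.ofReal (l/2) + ENNReal.ofReal (l/2) := by
    refine iSup₂_le fun ρ hρ => ?_
    have h0 : ENNReal.ofReal (ρ ^ d) ≠ 0 := by
      rw [Ne, ENNReal.ofReal_eq_zero, not_le]; positivity
    rw [mul_comm, ← div_eq_mul_inv]
    apply ENNReal.div_le_of_le_mul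
    calc ∫⁻ y in ball x ρ, g y ≤ ∫⁻ y in ball x ρ,
          ({y | ENNReal.ofReal (l / (2 * om d)) < g y}.indicator g y +
            ENNReal.ofReal (l / (2 * om d))) := by
          refine lintegral_mono fun y => ?_
          by_cases hy : ENNReal.ofReal (l / (2 * om d)) < g y
          · rw [Set.indicator_of_mem (by exact hy)]; exact le_self_add
          · rw [Set.indicator_of_notMem (by exact hy), zero_add]; exact not_lt.1 hy
      _ = (∫⁻ y in ball x ρ, {y | ENNReal.ofReal (l / (2 * om d)) < g y}.indicator g y) +
          ENNReal.ofReal (l/2) * ENNReal.ofReal (ρ ^ d) := by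
          rw [lintegral_add_right _ measurable_const, setLIntegral_const, vol_ball d x hρ,
            ← ENNReal.ofReal_mul (by positivity), ← ENNReal.ofReal_mul (by positivity)]
          congr 2; field_simp
      _ ≤ _ := by
          rw [add_mul]
          refine add_le_add ((HL_le d _ x hρ).trans ?_) le_rfl
          rw [mul_comm]; exact mul_le_mul_left hc _
  rw [← ENNReal.ofReal_add (by positivity) (by positivity)] at this
  rw [add_halves] at this
  exact absurd hx (not_lt.2 this)

lemma lc_id {e A : ℝ} (he : -1 < e) (hA : 0 ≤ A) :
    ∫⁻ l in Set.Ioo 0 A, ENNReal.ofReal (l ^ e) = ENNReal.ofReal (A ^ (e+1) / (e+1)) := by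
  have hi : IntervalIntegrable (fun l : ℝ => l ^ e) volume 0 A := intervalIntegral.intervalIntegrable_rpow' he
  rw [intervalIntegrable_iff_integrableOn_Ioo_of_le hA] at hi
  rw [← ofReal_integral_eq_lintegral_ofReal hi]
  · rw [← integral_Ioc_eq_integral_Ioo, ← intervalIntegral.integral_of_le hA, integral_rpow (.inl he),
      Real.zero_rpow (by linarith), sub_zero]
  · refine (ae_restrict_iff' measurableSet_Ioo).2 (Eventually.of_forall fun l hl => ?_)
    exact Real.rpow_nonneg hl.1.le _

def ww (e : ℝ) (a : ℝ≥0∞) (l : ℝ) : ℝ≥0∞ := {l : ℝ | ENNReal.ofReal l < a}.indicator (fun l => ENNReal.ofReal (l ^ e)) l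

lemma lc_eq {e : ℝ} (he : -1 < e) {a : ℝ≥0∞} (ha : a ≠ ⊤) :
    ∫⁻ l in Set.Ioi 0, ww e a l = ENNReal.ofReal (1/(e+1)) * a ^ (e+1) := by
  have h1 := lc_id he (A := a.toReal) ENNReal.toReal_nonneg
  have he1 : 0 < e + 1 := by linarith
  have h2 : ENNReal.ofReal (a.toReal ^ (e+1) / (e+1)) = ENNReal.ofReal (1/(e+1)) * a ^ (e+1) := by
    rw [← ENNReal.ofReal_toReal ha, ENNReal.ofReal_rpow_of_nonneg ENNReal.toReal_nonneg he1.le,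
      ← ENNReal.ofReal_mul (by positivity), ENNReal.toReal_ofReal ENNReal.toReal_nonneg]
    congr 1; ring
  rw [← h2, ← h1]
  have hm : MeasurableSet {l : ℝ | ENNReal.ofReal l < a} :=
    measurableSet_lt ENNReal.measurable_ofReal measurable_const
  unfold ww
  rw [setLIntegral_indicator hm]
  congr 2
  ext l
  simp only [Set.mem_inter_iff, Set.mem_ofPred_eq, Set.mem_Ioi, Set.mem_Ioo]
  constructor
  · rintro ⟨h, h0⟩
    exact ⟨h0, (ENNReal.ofReal_lt_iff_lt_toReal h0.le ha).1 h⟩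
  · rintro ⟨h0, h⟩
    exact ⟨(ENNReal.ofReal_lt_iff_lt_toReal h0.le ha).2 h, h0⟩

lemma lc_le {e : ℝ} (he : -1 < e) (a : ℝ≥0∞) :
    ENNReal.ofReal (1/(e+1)) * a ^ (e+1) ≤ ∫⁻ l in Set.Ioi 0, ww e a l := by
  by_cases ha : a = ⊤
  · have he1 : 0 < e + 1 := by linarith
    have h : ∀ n : ℕ, ENNReal.ofReal (1/(e+1)) * (n:ℝ≥0∞) ^ (e+1) ≤ ∫⁻ l in Set.Ioi 0, ww e a l := by
      intro n
      rw [← lc_eq he (ENNReal.natCast_ne_top n)]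
      refine lintegral_mono fun l => ?_
      unfold ww
      refine Set.indicator_le_indicator_of_subset (fun l hl => ?_) (fun _ => bot_le) l
      rw [Set.mem_ofPred_eq] at hl ⊢
      rw [ha]; exact ENNReal.ofReal_lt_top
    have hT : Tendsto (fun n : ℕ => ENNReal.ofReal (1/(e+1)) * (n:ℝ≥0∞) ^ (e+1)) atTop
        (𝓝 (ENNReal.ofReal (1/(e+1)) * a ^ (e+1))) := by
      rw [ha]
      refine ENNReal.Tendsto.const_mul ?_ (.inr ENNReal.ofReal_ne_top)
      exact (ENNReal.continuous_rpow_const.tendsto ⊤).comp ENNReal.tendsto_nat_nhds_top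
    exact le_of_tendsto' hT h
  · exact (lc_eq he ha).ge

lemma ww_meas (d : ℕ) (e : ℝ) {H : E d → ℝ≥0∞} (hH : Measurable H) :
    Measurable fun q : E d × ℝ => ww e (H q.1) q.2 := by
  have : (fun q : E d × ℝ => ww e (H q.1) q.2) =
    {q : E d × ℝ | ENNReal.ofReal q.2 < H q.1}.indicator (fun q => ENNReal.ofReal (q.2 ^ e)) := by
    ext q; simp only [ww, Set.indicator, Set.mem_ofPred_eq]
  rw [this]
  refine Measurable.indicator ?_ (measurableSet_lt (by fun_prop) (by fun_prop))
  fun_prop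

lemma HL_strong (d : ℕ) (hd : 1 ≤ d) (p : ℝ) (hp : 1 < p) : ∃ C : ℝ, 0 < C ∧
    ∀ g H : E d → ℝ≥0∞, Measurable g → Measurable H → (∀ x, H x ≤ HL d g x) →
    ∫⁻ x, H x ^ p ≤ ENNReal.ofReal C * ∫⁻ x, g x ^ p := by
  have hom := om_pos d
  refine ⟨p * (2 * (5 ^ d * om d)) * (1/(p-1)) * (2 * om d) ^ (p-1),
    by have : 0 < p - 1 := by linarith
       positivity, fun g H hg hH hle => ?_⟩
  have hp1 : 0 < p - 1 := by linarith
  have e1 : ∀ x, H x ^ p ≤ ENNReal.ofReal p * ∫⁻ l in Set.Ioi 0, ww (p-1) (H x) l := by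
    intro x
    have := lc_le (e := p - 1) (by linarith) (H x)
    rw [sub_add_cancel] at this
    refine le_trans (le_of_eq ?_) (mul_le_mul_right this _)
    rw [← mul_assoc, ← ENNReal.ofReal_mul (by linarith), mul_one_div_cancel (by linarith),
      ENNReal.ofReal_one, one_mul]
  have e2 : ∀ l ∈ Set.Ioi (0:ℝ), ∫⁻ x, ww (p-1) (H x) l ≤
      ENNReal.ofReal (2 * (5 ^ d * om d)) * ∫⁻ x, g x * ww (p-2) (ENNReal.ofReal (2 * om d) * g x) l := by
    intro l hl
    rw [Set.mem_Ioi] at hl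
    have a1 : ∫⁻ x, ww (p-1) (H x) l = ENNReal.ofReal (l ^ (p-1)) * volume {x | ENNReal.ofReal l < H x} := by
      rw [← setLIntegral_const, ← lintegral_indicator (measurableSet_lt measurable_const hH)]
      congr 1
    have a2 : ENNReal.ofReal (l/2) * volume {x | ENNReal.ofReal l < H x} ≤
        ENNReal.ofReal (5 ^ d * om d) *
        ∫⁻ y, {y | ENNReal.ofReal (l / (2 * om d)) < g y}.indicator g y :=
      (mul_le_mul_right (measure_mono fun x hx => lt_of_lt_of_le hx (hle x)) _).trans
        (HL_trunc d hd g hg hl)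
    have a3 : l ^ (p-1) = (2 * l ^ (p-2)) * (l/2) := by
      have : p - 1 = (p - 2) + 1 := by ring
      rw [this, Real.rpow_add_one hl.ne']; ring
    have hl2 : 0 < l ^ (p-2) := by positivity
    rw [a1, a3, ENNReal.ofReal_mul (by positivity), mul_assoc]
    refine (mul_le_mul_right a2 _).trans (le_of_eq ?_)
    rw [← mul_assoc, ← ENNReal.ofReal_mul (by positivity)]
    have a4 : (2 * l ^ (p-2)) * (5 ^ d * om d) = (2 * (5 ^ d * om d)) * l ^ (p-2) := by ring
    rw [a4, ENNReal.ofReal_mul (by positivity), mul_assoc, ← lintegral_const_mul]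
    · congr 2; ext y
      unfold ww
      have hiff : ENNReal.ofReal (l / (2 * om d)) < g y ↔ ENNReal.ofReal l < ENNReal.ofReal (2 * om d) * g y := by
        rw [ENNReal.ofReal_div_of_pos (by positivity), mul_comm (ENNReal.ofReal (2 * om d)),
          ENNReal.div_lt_iff]
        · left; rw [Ne, ENNReal.ofReal_eq_zero, not_le]; positivity
        · left; exact ENNReal.ofReal_ne_top
      by_cases hy : ENNReal.ofReal (l / (2 * om d)) < g y
      · rw [Set.indicator_of_mem (by exact hy), Set.indicator_of_mem (by exact hiff.1 hy), mul_comm]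
      · rw [Set.indicator_of_notMem (by exact hy), Set.indicator_of_notMem (by exact fun h => hy (hiff.2 h)),
          mul_zero, mul_zero]
    · exact hg.indicator (measurableSet_lt measurable_const hg)
  have hG2 : Measurable fun x => ENNReal.ofReal (2 * om d) * g x := hg.const_mul _
  have hwm := ww_meas d (p-2) hG2
  calc ∫⁻ x, H x ^ p ≤ ∫⁻ x, ENNReal.ofReal p * ∫⁻ l in Set.Ioi 0, ww (p-1) (H x) l := lintegral_mono e1
    _ = ENNReal.ofReal p * ∫⁻ l in Set.Ioi 0, ∫⁻ x, ww (p-1) (H x) l := by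
        rw [lintegral_const_mul _ ((ww_meas d (p-1) hH).lintegral_prod_right),
          lintegral_lintegral_swap (ww_meas d (p-1) hH).aemeasurable]
    _ ≤ ENNReal.ofReal p * ∫⁻ l in Set.Ioi (0:ℝ), ENNReal.ofReal (2 * (5 ^ d * om d)) *
          ∫⁻ x, g x * ww (p-2) (ENNReal.ofReal (2 * om d) * g x) l := by
        refine mul_le_mul_right (setLIntegral_mono ?_ e2) _
        refine Measurable.const_mul ?_ _
        exact Measurable.lintegral_prod_left'
          (f := fun q : E d × ℝ => g q.1 * ww (p-2) (ENNReal.ofReal (2 * om d) * g q.1) q.2)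
          ((hg.comp measurable_fst).mul hwm)
    _ = ENNReal.ofReal p * (ENNReal.ofReal (2 * (5 ^ d * om d)) *
          ∫⁻ x, g x * ∫⁻ l in Set.Ioi (0:ℝ), ww (p-2) (ENNReal.ofReal (2 * om d) * g x) l) := by
        rw [lintegral_const_mul]
        · rw [← lintegral_lintegral_swap
            (f := fun x l => g x * ww (p-2) (ENNReal.ofReal (2 * om d) * g x) l)]
          · congr 2
            refine lintegral_congr fun x => ?_
            rw [lintegral_const_mul]
            exact hwm.comp (measurable_const.prodMk measurable_id)
          · exact ((hg.comp measurable_fst).mul hwm).aemeasurable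
        · exact Measurable.lintegral_prod_left'
            (f := fun q : E d × ℝ => g q.1 * ww (p-2) (ENNReal.ofReal (2 * om d) * g q.1) q.2)
            ((hg.comp measurable_fst).mul hwm)
    _ ≤ ENNReal.ofReal p * (ENNReal.ofReal (2 * (5 ^ d * om d)) *
          ∫⁻ x, (ENNReal.ofReal (1/(p-1) * (2 * om d) ^ (p-1)) * g x ^ p)) := by
        refine mul_le_mul_right (mul_le_mul_right (lintegral_mono fun x => ?_) _) _
        dsimp only
        by_cases hx : g x = ⊤
        · rw [hx, ENNReal.top_rpow_of_pos (by linarith), ENNReal.mul_top (a := ENNReal.ofReal (1/(p-1) * (2 * om d) ^ (p-1)))]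
          · exact le_top
          rw [Ne, ENNReal.ofReal_eq_zero, not_le]; positivity
        · rw [lc_eq (e := p-2) (by linarith) (ENNReal.mul_ne_top ENNReal.ofReal_ne_top hx)]
          have : p - 2 + 1 = p - 1 := by ring
          rw [this, ENNReal.mul_rpow_of_nonneg _ _ hp1.le, ENNReal.ofReal_rpow_of_pos (by positivity),
            ENNReal.ofReal_mul (by positivity)]
          have e4 : g x ^ p = g x * g x ^ (p-1) := by
            have : p = 1 + (p - 1) := by ring
            conv_lhs => rw [this]
            rw [ENNReal.rpow_add_of_nonneg _ _ zero_le_one hp1.le, ENNReal.rpow_one]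
          rw [e4]; apply le_of_eq; ring
    _ = _ := by
        rw [lintegral_const_mul _ (hg.pow_const _), ← mul_assoc, ← mul_assoc,
          ← ENNReal.ofReal_mul (by positivity), ← ENNReal.ofReal_mul (by positivity)]
        congr 2; ring

/-- normalized bumps -/
def Bump (d : ℕ) (c : E d) (r : ℝ) (φ : E d → ℝ) : Prop :=
  Function.support φ ⊆ ball c r ∧ (∀ y, |φ y| ≤ 1) ∧ ∀ y y', |φ y - φ y'| ≤ (1/r) * ‖y - y'‖

def GM (d : ℕ) (R : ℝ) (f : E d → ℝ) (x : E d) : ℝ≥0∞ :=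
  ⨆ (p : E d × ℝ × (E d → ℝ)) (_ : 0 < p.2.1 ∧ p.2.1 ≤ R ∧ x ∈ ball p.1 p.2.1 ∧ Bump d p.1 p.2.1 p.2.2),
    ENNReal.ofReal (|∫ y, f y * p.2.2 y| / p.2.1 ^ d)

lemma GM_le (d : ℕ) {R : ℝ} (f : E d → ℝ) {x c : E d} {r : ℝ} {φ : E d → ℝ} (hr : 0 < r) (hrR : r ≤ R)
    (hx : x ∈ ball c r) (hφ : Bump d c r φ) :
    ENNReal.ofReal (|∫ y, f y * φ y| / r ^ d) ≤ GM d R f x :=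
  le_iSup₂_of_le (f := fun (p : E d × ℝ × (E d → ℝ)) (_ : 0 < p.2.1 ∧ p.2.1 ≤ R ∧ x ∈ ball p.1 p.2.1 ∧
    Bump d p.1 p.2.1 p.2.2) => ENNReal.ofReal (|∫ y, f y * p.2.2 y| / p.2.1 ^ d))
    (c, r, φ) ⟨hr, hrR, hx, hφ⟩ le_rfl

lemma GM_open (d : ℕ) (R : ℝ) (f : E d → ℝ) (l : ℝ≥0∞) : IsOpen {x | l < GM d R f x} := by
  rw [Metric.isOpen_iff]
  intro x hx
  rw [Set.mem_ofPred_eq, GM, lt_iSup_iff] at hx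
  obtain ⟨⟨c, r, φ⟩, hx⟩ := hx
  rw [lt_iSup_iff] at hx
  obtain ⟨⟨hr, hrR, hxc, hφ⟩, hx⟩ := hx
  obtain ⟨ε, hε, hs⟩ := Metric.isOpen_iff.1 (isOpen_ball (x := c) (ε := r)) x hxc
  refine ⟨ε, hε, fun y hy => ?_⟩
  exact hx.trans_le (GM_le d f hr hrR (hs hy) hφ)

lemma GM_meas (d : ℕ) (R : ℝ) (f : E d → ℝ) : Measurable (GM d R f) :=
  measurable_of_Ioi fun l => (GM_open d R f l).measurableSet

lemma wt_ss_lint (d : ℕ) (hd : 2 ≤ d) (x : E d) {r : ℝ} (hr : 0 < r) (F : E d → ℝ≥0∞) (hF : Measurable F) :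
    ∫⁻ y, (ENNReal.ofReal (wt d x r y) * F y) ^ (ss d) ≤
      ENNReal.ofReal (2 ^ (d+1) * r ^ d) * HL d (fun y => F y ^ ss d) x := by
  have hs := ss_pos d
  have hd0 : (0:ℝ) < d := by exact_mod_cast (by omega : 0 < d)
  have hd2 : (2:ℝ) ≤ d := by exact_mod_cast hd
  have hss : (d:ℝ) + 1 ≤ 2 * d * ss d := by
    unfold ss pp
    rw [← div_eq_mul_inv, le_div_iff₀ (by positivity)]
    have : ((d:ℝ)+1) * (1 + 1 / (4 * d)) = d + 1 + 1/4 + 1 / (4 * d) := by field_simp; ring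
    rw [this]
    have : 1 / (4 * (d:ℝ)) ≤ 1/4 := by
      apply one_div_le_one_div_of_le <;> linarith
    linarith
  have hpt : ∀ y, (ENNReal.ofReal (wt d x r y) * F y) ^ (ss d) ≤
      ∑' k : ℕ, ENNReal.ofReal (((2:ℝ)^(k*(d+1)))⁻¹) * (ball x (2^(k+1)*r)).indicator (fun y => F y ^ ss d) y := by
    intro y
    set s := 1 + ‖y - x‖ / r with hsd
    have hs1 : 1 ≤ s := by rw [hsd]; have : 0 ≤ ‖y - x‖ / r := by positivity
                           linarith
    obtain ⟨k, hk1, hk2⟩ := exists_nat_pow_near hs1 (one_lt_two)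
    refine le_trans ?_ (ENNReal.le_tsum k)
    have hy : y ∈ ball x (2^(k+1)*r) := by
      rw [mem_ball, dist_eq_norm]
      have : ‖y - x‖ / r < 2^(k+1) := by linarith
      rwa [div_lt_iff₀ hr] at this
    rw [Set.indicator_of_mem hy, ENNReal.mul_rpow_of_nonneg _ _ hs.le]
    refine mul_le_mul_left ?_ _
    rw [ENNReal.ofReal_rpow_of_pos (wt_pos d x hr y)]
    apply ENNReal.ofReal_le_ofReal
    have : wt d x r y = (s ^ (2*d))⁻¹ := rfl
    rw [this, Real.inv_rpow (by positivity)]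
    apply inv_anti₀ (by positivity)
    calc (2:ℝ)^(k*(d+1)) = (2^k)^(d+1) := by rw [pow_mul]
      _ ≤ s^(d+1) := by gcongr
      _ = s^((d:ℝ)+1) := by rw [← Real.rpow_natCast]; push_cast; rfl
      _ ≤ s^(2 * d * ss d) := Real.rpow_le_rpow_of_exponent_le hs1 hss
      _ = _ := by
        rw [Real.rpow_mul (by positivity), ← Real.rpow_natCast s (2*d)]; push_cast; rfl
  have hFm : Measurable fun y => F y ^ ss d := hF.pow_const _
  calc _ ≤ ∫⁻ y, ∑' k : ℕ, ENNReal.ofReal (((2:ℝ)^(k*(d+1)))⁻¹) *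
          (ball x (2^(k+1)*r)).indicator (fun y => F y ^ ss d) y := lintegral_mono hpt
    _ = ∑' k : ℕ, ENNReal.ofReal (((2:ℝ)^(k*(d+1)))⁻¹) * ∫⁻ y in ball x (2^(k+1)*r), F y ^ ss d := by
        rw [lintegral_tsum]
        · congr 1; ext k
          rw [lintegral_const_mul _ (hFm.indicator measurableSet_ball), lintegral_indicator measurableSet_ball]
        · intro k
          exact ((hFm.indicator measurableSet_ball).const_mul _).aemeasurable
    _ ≤ ∑' k : ℕ, ENNReal.ofReal ((2 ^ d * r ^ d) * (1/2)^k) * HL d (fun y => F y ^ ss d) x := by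
        refine ENNReal.tsum_le_tsum fun k => ?_
        refine (mul_le_mul_right (HL_le d _ x (by positivity)) _).trans (le_of_eq ?_)
        rw [← mul_assoc, ← ENNReal.ofReal_mul (by positivity)]
        congr 2
        rw [mul_pow, ← pow_mul, one_div, inv_pow]
        have : (k+1)*d = k*d+d := by ring
        rw [this, pow_add, mul_add, pow_add, mul_one]; field_simp
    _ = _ := by
        rw [ENNReal.tsum_mul_right]
        congr 1
        have : ∀ k : ℕ, ENNReal.ofReal ((2 ^ d * r ^ d) * (1/2)^k) =
          ENNReal.ofReal (2 ^ d * r ^ d) * (2⁻¹)^k := by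
          intro k
          rw [ENNReal.ofReal_mul (by positivity), ENNReal.ofReal_pow (by norm_num)]
          congr 2
          rw [one_div, ENNReal.ofReal_inv_of_pos (by norm_num)]; norm_num
        simp_rw [this]
        rw [ENNReal.tsum_mul_left, ENNReal.tsum_geometric, ENNReal.one_sub_inv_two, inv_inv,
          pow_succ]
        have h2 : (2:ℝ≥0∞) = ENNReal.ofReal 2 := by norm_num
        rw [h2, ← ENNReal.ofReal_mul (by positivity)]; congr 1; ring

lemma GM_HL (d : ℕ) (hd : 2 ≤ d) : ∃ C : ℝ, 0 < C ∧ ∀ (R : ℝ) (f : E d → ℝ), Integrable f →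
    ∀ x, GM d R f x ≤ ENNReal.ofReal C * (HL d (fun y => Fm d R f y ^ ss d) x) ^ pp d := by
  obtain ⟨C, hC, hit⟩ := iter_main d (by omega)
  refine ⟨9 ^ d * C * (2 ^ (d+1)) ^ (pp d), by positivity, fun R f hf x => iSup₂_le ?_⟩
  rintro ⟨c, r, φ⟩ ⟨hr, hrR, hx, hφs, hφ1, hφL⟩
  dsimp only at *
  have hw : ∀ y ∈ ball c r, 1 ≤ 9 ^ d * wt d x r y := by
    intro y hy
    have h1 : ‖y - x‖ / r ≤ 2 := by
      rw [div_le_iff₀ hr, ← dist_eq_norm]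
      have := dist_triangle_right y x c
      rw [mem_ball] at hy hx; linarith
    have h2 : (1 + ‖y - x‖ / r) ^ (2*d) ≤ 9 ^ d := by
      calc _ ≤ (3:ℝ) ^ (2*d) := by gcongr; linarith
        _ = _ := by rw [pow_mul]; norm_num
    unfold wt
    rw [← div_eq_mul_inv, le_div_iff₀ (by positivity), one_mul]; exact h2
  have hz : ∀ y, y ∉ ball c r → φ y = 0 := fun y hy => by
    by_contra h; exact hy (hφs h)
  have hLip : ∀ y y', |φ y - φ y'| ≤ (1/r) * ‖y - y'‖ * (9 ^ d * (wt d x r y + wt d x r y')) := by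
    intro y y'
    have p1 := wt_pos d x hr y
    have p2 := wt_pos d x hr y'
    have hb : (0:ℝ) ≤ (1/r) * ‖y - y'‖ := by positivity
    by_cases hy : y ∈ ball c r
    · refine (hφL y y').trans (le_mul_of_one_le_right hb ?_)
      have := hw y hy
      have : (0:ℝ) < 9 ^ d * wt d x r y' := by positivity
      rw [mul_add]; linarith
    · by_cases hy' : y' ∈ ball c r
      · refine (hφL y y').trans (le_mul_of_one_le_right hb ?_)
        have := hw y' hy'
        have : (0:ℝ) < 9 ^ d * wt d x r y := by positivity
        rw [mul_add]; linarith
      · rw [hz y hy, hz y' hy', sub_zero, abs_zero]; positivity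
  have hcont : Continuous φ := by
    have : LipschitzWith (1/r).toNNReal φ := by
      apply LipschitzWith.of_dist_le_mul
      intro y y'
      rw [Real.dist_eq, dist_eq_norm, Real.coe_toNNReal _ (by positivity)]; exact hφL y y'
    exact this.continuous
  have hI : WInv d x r 1 (1/r) (fun y => (9 ^ d)⁻¹ * φ y) := by
    refine ⟨(hcont.measurable.const_mul _), fun y => ?_, fun y y' => ?_⟩
    · rw [abs_mul, abs_of_pos (by positivity : (0:ℝ) < (9^d)⁻¹), inv_mul_le_iff₀ (by positivity), one_mul]
      by_cases hy : y ∈ ball c r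
      · exact (hφ1 y).trans (hw y hy)
      · rw [hz y hy, abs_zero]; have := wt_pos d x hr y; positivity
    · rw [← mul_sub, abs_mul, abs_of_pos (by positivity : (0:ℝ) < (9^d)⁻¹), inv_mul_le_iff₀ (by positivity)]
      refine (hLip y y').trans (le_of_eq ?_); ring
  have key := hit R r x f _ hf hr hrR hI
  have e1 : ∫ y, f y * ((9 ^ d)⁻¹ * φ y) = (9 ^ d)⁻¹ * ∫ y, f y * φ y := by
    rw [← integral_const_mul]; congr 1; ext y; ring
  have hpp := pp_pos d
  rw [e1, abs_mul, abs_of_pos (by positivity : (0:ℝ) < (9^d)⁻¹)] at key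
  have k2 := key.trans (mul_le_mul_right (ENNReal.rpow_le_rpow
    (wt_ss_lint d hd x hr (Fm d R f) (Fm_meas d R hf)) hpp.le) _)
  rw [ENNReal.mul_rpow_of_nonneg _ _ hpp.le, ENNReal.ofReal_rpow_of_pos (by positivity), ← mul_assoc,
    ← ENNReal.ofReal_mul (by positivity)] at k2
  have e3 : |∫ y, f y * φ y| / r ^ d = (9 ^ d / r ^ d) * ((9 ^ d)⁻¹ * |∫ y, f y * φ y|) := by
    field_simp
  rw [e3, ENNReal.ofReal_mul (by positivity)]
  refine (mul_le_mul_right k2 _).trans (le_of_eq ?_)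
  rw [← mul_assoc, ← ENNReal.ofReal_mul (by positivity)]
  congr 2
  have e4 : (2 ^ (d+1) * r ^ d) ^ (pp d) = (2 ^ (d+1)) ^ (pp d) * (r ^ d * r ^ (1/4:ℝ)) := by
    rw [Real.mul_rpow (by positivity) (by positivity)]
    congr 1
    rw [← Real.rpow_natCast, ← Real.rpow_mul hr.le, ← Real.rpow_add hr]
    congr 1; unfold pp
    have : (0:ℝ) < d := by exact_mod_cast (by omega : 0 < d)
    field_simp
  have e5 : r ^ (-(1/4:ℝ)) * r ^ (1/4:ℝ) = 1 := by
    rw [← Real.rpow_add hr]; norm_num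
  rw [e4]
  calc _ = (9 ^ d * C * (2 ^ (d+1)) ^ pp d) * (r ^ d / r ^ d) * (r ^ (-(1/4:ℝ)) * r ^ (1/4:ℝ)) := by ring
    _ = _ := by rw [e5, div_self (by positivity)]; ring

lemma GM_int (d : ℕ) (hd : 2 ≤ d) : ∃ C : ℝ, 0 < C ∧ ∀ (R : ℝ) (f : E d → ℝ), Integrable f →
    ∫⁻ x, GM d R f x ≤ ENNReal.ofReal C * ∫⁻ x, Fm d R f x := by
  obtain ⟨C, hC, hG⟩ := GM_HL d hd
  have hpp := pp_pos d
  have hd0 : (0:ℝ) < d := by exact_mod_cast (by omega : 0 < d)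
  have hp1 : 1 < pp d := by
    unfold pp; have : 0 < 1 / (4 * (d:ℝ)) := by positivity
    linarith
  obtain ⟨C', hC', hS⟩ := HL_strong d (by omega) (pp d) hp1
  refine ⟨C * C', by positivity, fun R f hf => ?_⟩
  have hC0 : ENNReal.ofReal C ≠ 0 := by rw [Ne, ENNReal.ofReal_eq_zero, not_le]; exact hC
  have hm : Measurable fun x => ((ENNReal.ofReal C)⁻¹ * GM d R f x) ^ ss d :=
    ((GM_meas d R f).const_mul _).pow_const _
  have key := hS (fun y => Fm d R f y ^ ss d) _ ((Fm_meas d R hf).pow_const _) hm (fun x => by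
    have h1 : (ENNReal.ofReal C)⁻¹ * GM d R f x ≤ (HL d (fun y => Fm d R f y ^ ss d) x) ^ pp d := by
      rw [mul_comm, ← div_eq_mul_inv]
      apply ENNReal.div_le_of_le_mul; rw [mul_comm]; exact hG R f hf x
    calc _ ≤ ((HL d (fun y => Fm d R f y ^ ss d) x) ^ pp d) ^ ss d :=
          ENNReal.rpow_le_rpow h1 (ss_pos d).le
      _ = _ := by rw [← ENNReal.rpow_mul, ss, mul_inv_cancel₀ hpp.ne', ENNReal.rpow_one])
  have e1 : ∀ a : ℝ≥0∞, (a ^ ss d) ^ pp d = a := fun a => by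
    rw [← ENNReal.rpow_mul, ss, inv_mul_cancel₀ hpp.ne', ENNReal.rpow_one]
  simp_rw [e1] at key
  rw [lintegral_const_mul _ (GM_meas d R f)] at key
  have := mul_le_mul_right key (ENNReal.ofReal C)
  rw [← mul_assoc, ENNReal.mul_inv_cancel hC0 ENNReal.ofReal_ne_top, one_mul, ← mul_assoc,
    ← ENNReal.ofReal_mul hC.le] at this
  exact this

/-- a.e. bound by the grand maximal function -/
lemma GM_ae (d : ℕ) (hd : 1 ≤ d) : ∃ C : ℝ, 0 < C ∧ ∀ (R : ℝ) (f : E d → ℝ), 0 < R → Integrable f →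
    ∀ᵐ x, ENNReal.ofReal |f x| ≤ ENNReal.ofReal C * GM d R f x := by
  have hom := om_pos d
  refine ⟨2 ^ (d+1) / om d, by positivity, fun R f hR hf => ?_⟩
  have hL := IsUnifLocDoublingMeasure.ae_tendsto_average_norm_sub (μ := (volume : Measure (E d)))
    hf.locallyIntegrable 1
  filter_upwards [hL] with x hx
  set r : ℕ → ℝ := fun n => R / (n+1) with hrdef
  have hr0 : ∀ n, 0 < r n := fun n => by rw [hrdef]; positivity
  have hrR : ∀ n, r n ≤ R := fun n => by
    rw [hrdef]; apply div_le_self hR.le; have : (0:ℝ) ≤ n := by positivity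
    linarith
  have hrt : Tendsto r atTop (𝓝 0) := by
    have := (tendsto_one_div_add_atTop_nhds_zero_nat (𝕜 := ℝ)).const_mul R
    rw [mul_zero] at this
    refine this.congr fun n => ?_
    rw [hrdef]; ring
  have hrt' : Tendsto r atTop (𝓝[>] 0) := tendsto_nhdsWithin_iff.2 ⟨hrt, Eventually.of_forall hr0⟩
  have hav := hx (l := atTop) (fun _ => x) r hrt' (Eventually.of_forall fun n => by
    rw [one_mul]; exact mem_closedBall_self (hr0 n).le)
  by_cases hG : GM d R f x = ⊤
  · rw [hG, ENNReal.mul_top]; · exact le_top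
    rw [Ne, ENNReal.ofReal_eq_zero, not_le]; positivity
  have hfin : ∀ n, |f x| ≤ 2 ^ (d+1) / om d * (GM d R f x).toReal +
      2 ^ (d+1) * ⨍ y in closedBall x (r n), ‖f y - f x‖ := by
    intro n
    set ρ := r n with hρ
    have hρ0 : 0 < ρ := hr0 n
    have hρR : ρ ≤ R := hrR n
    clear_value ρ
    set φ : E d → ℝ := fun y => max 0 (1 - ‖y - x‖ / ρ) with hφ
    have hnn : ∀ y, 0 ≤ φ y := fun y => le_max_left _ _
    have hle1 : ∀ y, φ y ≤ 1 := fun y => by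
      rw [hφ]; apply max_le zero_le_one
      have : 0 ≤ ‖y - x‖ / ρ := by positivity
      linarith
    have hsupp : Function.support φ ⊆ ball x ρ := by
      intro y hy
      by_contra h
      apply hy
      rw [mem_ball, dist_eq_norm, not_lt] at h
      rw [hφ]; apply max_eq_left
      rw [sub_nonpos, le_div_iff₀ hρ0]; linarith
    have hB : Bump d x ρ φ := by
      refine ⟨hsupp, fun y => ?_, fun y y' => ?_⟩
      · rw [abs_of_nonneg (hnn y)]; exact hle1 y
      · rw [hφ]; simp only
        rw [max_comm, max_comm 0]
        refine (abs_max_sub_max_le_abs _ _ _).trans ?_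
        have : 1 - ‖y - x‖ / ρ - (1 - ‖y' - x‖ / ρ) = (1/ρ) * (‖y' - x‖ - ‖y - x‖) := by ring
        rw [this, abs_mul, abs_of_pos (by positivity)]
        refine mul_le_mul_of_nonneg_left ?_ (by positivity)
        refine (abs_norm_sub_norm_le _ _).trans ?_
        rw [sub_sub_sub_cancel_right, norm_sub_rev]
    have hcont : Continuous φ := by rw [hφ]; fun_prop
    have hg := GM_le d (R := R) f hρ0 hρR (mem_ball_self hρ0) hB
    rw [ENNReal.ofReal_le_iff_le_toReal hG, div_le_iff₀ (by positivity)] at hg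
    have hφi : Integrable φ := hcont.integrable_of_hasCompactSupport (by
      refine HasCompactSupport.intro (isCompact_closedBall x ρ) fun y hy => ?_
      by_contra h; exact hy (ball_subset_closedBall (hsupp h)))
    have hfφ : Integrable fun y => f y * φ y := hf.mul_bdd (c := 1) hcont.aestronglyMeasurable
      (Eventually.of_forall fun y => hB.2.1 y)
    have hint : om d * ρ ^ d / 2 ^ (d+1) ≤ ∫ y, φ y := by
      have h1 : ∫ y, (ball x (ρ/2)).indicator (fun _ => (1/2:ℝ)) y ≤ ∫ y, φ y := by
        refine integral_mono ?_ hφi fun y => ?_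
        · rw [integrable_indicator_iff measurableSet_ball]
          exact integrableOn_const measure_ball_lt_top.ne
        · by_cases hy : y ∈ ball x (ρ/2)
          · rw [Set.indicator_of_mem hy]
            rw [mem_ball, dist_eq_norm] at hy
            refine le_trans ?_ (le_max_right _ _)
            have : ‖y - x‖ / ρ ≤ 1/2 := by rw [div_le_iff₀ hρ0]; linarith
            linarith
          · rw [Set.indicator_of_notMem hy]; exact hnn y
      refine le_trans (le_of_eq ?_) h1
      rw [integral_indicator measurableSet_ball, setIntegral_const, measureReal_def, vol_ball d x (by positivity),
        ENNReal.toReal_ofReal (by positivity), smul_eq_mul, div_pow, pow_succ]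
      field_simp
    have hsplit : f x * ∫ y, φ y = (∫ y, f y * φ y) - ∫ y, (f y - f x) * φ y := by
      rw [← integral_const_mul, ← integral_sub hfφ]
      · congr 1; ext y; ring
      · have : (fun y => (f y - f x) * φ y) = fun y => f y * φ y - f x * φ y := by ext y; ring
        rw [this]; exact hfφ.sub (hφi.const_mul _)
    have hvol : (volume (closedBall x ρ)).toReal = ρ ^ d * om d := by
      have : Nonempty (Fin d) := ⟨⟨0, hd⟩⟩
      rw [Measure.addHaar_closedBall_eq_addHaar_ball volume, vol_ball d x hρ0, ENNReal.toReal_ofReal (by positivity)]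
    have herr : |∫ y, (f y - f x) * φ y| ≤ (ρ ^ d * om d) * ⨍ y in closedBall x ρ, ‖f y - f x‖ := by
      have e1 : (ρ ^ d * om d) * ⨍ y in closedBall x ρ, ‖f y - f x‖ = ∫ y in closedBall x ρ, ‖f y - f x‖ := by
        rw [setAverage_eq, measureReal_def, hvol, smul_eq_mul, ← mul_assoc, mul_inv_cancel₀ (by positivity), one_mul]
      rw [e1, ← integral_indicator measurableSet_closedBall, ← Real.norm_eq_abs]
      refine norm_integral_le_of_norm_le ?_ (Eventually.of_forall fun y => ?_)
      · rw [integrable_indicator_iff measurableSet_closedBall]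
        exact (hf.integrableOn.sub (integrableOn_const measure_closedBall_lt_top.ne)).norm
      · by_cases hy : y ∈ closedBall x ρ
        · rw [Set.indicator_of_mem hy, norm_mul, Real.norm_of_nonneg (hnn y)]
          exact mul_le_of_le_one_right (norm_nonneg _) (hle1 y)
        · have : φ y = 0 := by by_contra h; exact hy (ball_subset_closedBall (hsupp h))
          rw [Set.indicator_of_notMem hy, this, mul_zero, norm_zero]
    have hab : |f x| * ∫ y, φ y ≤ (GM d R f x).toReal * ρ ^ d + (ρ ^ d * om d) * ⨍ y in closedBall x ρ, ‖f y - f x‖ := by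
      have h0 : 0 ≤ ∫ y, φ y := integral_nonneg hnn
      rw [← abs_of_nonneg h0, ← abs_mul, hsplit]
      refine (abs_sub _ _).trans ?_
      linarith
    have h3 : |f x| * (om d * ρ ^ d / 2 ^ (d+1)) ≤ _ := (mul_le_mul_of_nonneg_left hint (abs_nonneg _)).trans hab
    have hq : (0:ℝ) < om d * ρ ^ d / 2 ^ (d+1) := by positivity
    rw [← le_div_iff₀ hq] at h3
    refine h3.trans (le_of_eq ?_)
    field_simp
  have hlim : Tendsto (fun n => 2 ^ (d+1) / om d * (GM d R f x).toReal +
      2 ^ (d+1) * ⨍ y in closedBall x (r n), ‖f y - f x‖) atTop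
      (𝓝 (2 ^ (d+1) / om d * (GM d R f x).toReal + 2 ^ (d+1) * 0)) :=
    (hav.const_mul _).const_add _
  have h4 := ge_of_tendsto' hlim hfin
  rw [mul_zero, add_zero] at h4
  refine (ENNReal.ofReal_le_ofReal h4).trans ?_
  rw [ENNReal.ofReal_mul (by positivity), ENNReal.ofReal_toReal hG]

structure Whit (d : ℕ) (O : Set (E d)) (K : ℝ) (ι : Type) (y : ι → E d) (ρ : ι → ℝ)
    (η : ι → E d → ℝ) : Prop where
  pos : ∀ i, 0 < ρ i
  nonneg : ∀ i x, 0 ≤ η i x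
  le_one : ∀ i x, η i x ≤ 1
  supp : ∀ i, Function.support (η i) ⊆ ball (y i) (2 * ρ i)
  sub : ∀ i, ball (y i) (10 * ρ i) ⊆ O
  sum : ∀ x ∈ O, HasSum (fun i => η i x) 1
  lip : ∀ i x x', |η i x - η i x'| ≤ K / ρ i * ‖x - x'‖
  int : ∀ i, ρ i ^ d ≤ K * ∫ x, η i x
  vol : ∑' i, ENNReal.ofReal (ρ i ^ d) ≤ ENNReal.ofReal K * volume O
  out : ∀ i, ∃ p, p ∉ O ∧ dist p (y i) < 11 * ρ i
  cmp1 : ∀ i, ∀ x ∈ ball (y i) (2 * ρ i), 8 * ρ i ≤ infDist x Oᶜ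
  cmp2 : ∀ i, ∀ x ∈ ball (y i) (2 * ρ i), infDist x Oᶜ ≤ 12 * ρ i
  cou : Countable ι
  fin : ∀ x, {i | η i x ≠ 0}.Finite

def zet {d : ℕ} (y : E d) (ρ : ℝ) (x : E d) : ℝ := max 0 (min 1 (2 - ‖x - y‖ / ρ))

lemma zet_nonneg {d : ℕ} (y : E d) (ρ : ℝ) (x : E d) : 0 ≤ zet y ρ x := le_max_left _ _
lemma zet_le_one {d : ℕ} (y : E d) (ρ : ℝ) (x : E d) : zet y ρ x ≤ 1 :=
  max_le zero_le_one (min_le_left _ _)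
lemma zet_one {d : ℕ} (y : E d) {ρ : ℝ} (hρ : 0 < ρ) {x : E d} (hx : x ∈ closedBall y ρ) : zet y ρ x = 1 := by
  rw [mem_closedBall, dist_eq_norm] at hx
  have : ‖x - y‖ / ρ ≤ 1 := by rw [div_le_one hρ]; exact hx
  unfold zet
  rw [min_eq_left (by linarith), max_eq_right zero_le_one]
lemma zet_supp {d : ℕ} (y : E d) {ρ : ℝ} (hρ : 0 < ρ) {x : E d} (hx : zet y ρ x ≠ 0) : x ∈ ball y (2 * ρ) := by
  by_contra h
  apply hx
  rw [mem_ball, dist_eq_norm, not_lt] at h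
  have : 2 ≤ ‖x - y‖ / ρ := by rw [le_div_iff₀ hρ]; exact h
  unfold zet
  exact max_eq_left ((min_le_right _ _).trans (by linarith))
lemma zet_lip {d : ℕ} (y : E d) {ρ : ℝ} (hρ : 0 < ρ) (x x' : E d) :
    |zet y ρ x - zet y ρ x'| ≤ 1 / ρ * ‖x - x'‖ := by
  unfold zet
  rw [max_comm, max_comm 0]
  refine (abs_max_sub_max_le_abs _ _ _).trans ?_
  rw [min_comm, min_comm 1]
  refine (abs_min_sub_min_le_max _ _ _ _).trans ?_
  rw [sub_self, abs_zero, max_eq_left (abs_nonneg _)]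
  have : 2 - ‖x - y‖ / ρ - (2 - ‖x' - y‖ / ρ) = (1/ρ) * (‖x' - y‖ - ‖x - y‖) := by ring
  rw [this, abs_mul, abs_of_pos (by positivity)]
  refine mul_le_mul_of_nonneg_left ?_ (by positivity)
  refine (abs_norm_sub_norm_le _ _).trans ?_
  rw [sub_sub_sub_cancel_right, norm_sub_rev]

/-- volume counting -/
lemma count_balls (d : ℕ) {ι : Type} (y : ι → E d) (ρ : ι → ℝ) (S : Finset ι) (x : E d) {a b : ℝ}
    (ha : 0 < a) (hb : 0 < b)
    (hρ : ∀ i ∈ S, a ≤ ρ i) (hdisj : (S : Set ι).PairwiseDisjoint fun i => ball (y i) (ρ i))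
    (hsub : ∀ i ∈ S, ball (y i) (ρ i) ⊆ ball x b) : (S.card : ℝ) ≤ (b / a) ^ d := by
  have hom := om_pos d
  have h1 : ∑ i ∈ S, volume (ball (y i) (ρ i)) ≤ volume (ball x b) := by
    rw [← measure_biUnion_finset hdisj (fun i _ => measurableSet_ball)]
    exact measure_mono (Set.iUnion₂_subset hsub)
  have h2 : ∑ i ∈ S, ENNReal.ofReal (a ^ d * om d) ≤ volume (ball x b) := by
    refine le_trans (Finset.sum_le_sum fun i hi => ?_) h1
    rw [← vol_ball d (y i) ha]
    exact measure_mono (ball_subset_ball (hρ i hi))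
  rw [Finset.sum_const, vol_ball d x hb, nsmul_eq_mul] at h2
  have h3 : ENNReal.ofReal ((S.card:ℝ) * (a ^ d * om d)) ≤ ENNReal.ofReal (b ^ d * om d) := by
    rw [ENNReal.ofReal_mul (by positivity), ENNReal.ofReal_natCast]; exact h2
  rw [ENNReal.ofReal_le_ofReal_iff (by positivity)] at h3
  rw [div_pow, le_div_iff₀ (by positivity)]
  nlinarith

lemma whitney (d : ℕ) : ∃ K : ℝ, 1 ≤ K ∧ ∀ (O : Set (E d)), IsOpen O → Oᶜ.Nonempty →
    (∃ D : ℝ, ∀ x ∈ O, infDist x Oᶜ ≤ D) →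
    ∃ (ι : Type) (y : ι → E d) (ρ : ι → ℝ) (η : ι → E d → ℝ), Whit d O K ι y ρ η := by
  have hom := om_pos d
  set N : ℝ := 23 ^ d with hN
  have hN1 : 1 ≤ N := one_le_pow₀ (by norm_num)
  set K : ℝ := 1 + 4 * N + N / om d + 5 ^ d / om d with hK
  have hN0 : 0 < N := by linarith
  have p1 : 0 < N / om d := by positivity
  have p2 : 0 < 5 ^ d / om d := by positivity
  refine ⟨K, by linarith, fun O hO hOc ⟨D, hD⟩ => ?_⟩
  have hcl : IsClosed Oᶜ := hO.isClosed_compl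
  set δ : O → ℝ := fun x => infDist x.1 Oᶜ with hδ
  have hδ0 : ∀ x : O, 0 < δ x := fun x => by
    have := (hcl.notMem_iff_infDist_pos hOc (x := x.1)).1 (by simp [x.2])
    exact this
  obtain ⟨u, -, hdisj, hcov⟩ := Vitali.exists_disjoint_subfamily_covering_enlargement_closedBall
    (Set.univ : Set O) (fun a => a.1) (fun a => δ a / 50) (D / 50)
    (fun a _ => by have := hD a.1 a.2; exact div_le_div_of_nonneg_right this (by norm_num)) 5 (by norm_num)
  set y : u → E d := fun i => i.1.1 with hy
  set ρ : u → ℝ := fun i => δ i.1 / 10 with hρ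
  have hρ0 : ∀ i, 0 < ρ i := fun i => div_pos (hδ0 i.1) (by norm_num)
  have hδρ : ∀ i, infDist (y i) Oᶜ = 10 * ρ i := fun i => by rw [hρ, hy]; simp only [hδ]; ring
  have hdisj' : ∀ i j : u, i ≠ j → Disjoint (ball (y i) (ρ i / 5)) (ball (y j) (ρ j / 5)) := by
    intro i j hij
    have h1 := hdisj i.2 j.2 (fun h => hij (Subtype.ext h))
    have e : ∀ i : u, ρ i / 5 = δ i.1 / 50 := fun i => by rw [hρ]; ring
    rw [e, e]
    exact h1.mono ball_subset_closedBall ball_subset_closedBall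
  have hcou : Countable u := by
    have : (Set.univ : Set u).PairwiseDisjoint fun i => ball (y i) (ρ i / 5) :=
      fun i _ j _ hij => hdisj' i j hij
    have := this.countable_of_isOpen (fun a _ => isOpen_ball)
      (fun a _ => ⟨y a, mem_ball_self (by have := hρ0 a; positivity)⟩)
    exact Set.countable_univ_iff.1 this
  have hcover : ∀ x ∈ O, ∃ i : u, x ∈ closedBall (y i) (ρ i) := by
    intro x hx
    obtain ⟨b, hb, hs⟩ := hcov ⟨x, hx⟩ (Set.mem_univ _)
    refine ⟨⟨b, hb⟩, ?_⟩
    have := hs (mem_closedBall_self (div_nonneg (hδ0 ⟨x, hx⟩).le (by norm_num)))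
    convert this using 1
    rw [hρ]; simp only; ring_nf; rfl
  have hlow : ∀ (i : u) (x : E d), 10 * ρ i - dist x (y i) ≤ infDist x Oᶜ := by
    intro i x
    have := infDist_le_infDist_add_dist (s := Oᶜ) (x := y i) (y := x)
    rw [hδρ, dist_comm] at this; linarith
  have hup : ∀ (i : u) (x : E d), infDist x Oᶜ ≤ 10 * ρ i + dist x (y i) := by
    intro i x
    have := infDist_le_infDist_add_dist (s := Oᶜ) (x := x) (y := y i)
    rwa [hδρ] at this
  have hsub : ∀ i, ball (y i) (10 * ρ i) ⊆ O := by
    intro i x hx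
    by_contra h
    have h1 : x ∈ Oᶜ := h
    have h2 := infDist_le_dist_of_mem (x := y i) h1
    rw [hδρ, dist_comm] at h2
    rw [mem_ball] at hx; linarith
  have hcmp1 : ∀ i, ∀ x ∈ ball (y i) (2 * ρ i), 8 * ρ i ≤ infDist x Oᶜ := by
    intro i x hx; have := hlow i x; rw [mem_ball] at hx; linarith
  have hcmp2 : ∀ i, ∀ x ∈ ball (y i) (2 * ρ i), infDist x Oᶜ ≤ 12 * ρ i := by
    intro i x hx; have := hup i x; rw [mem_ball] at hx; linarith
  -- counting
  have hcard : ∀ (x : E d) (S : Finset u), (∀ i ∈ S, zet (y i) (ρ i) x ≠ 0) → (S.card : ℝ) ≤ N := by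
    intro x S hS
    rcases S.eq_empty_or_nonempty with rfl | ⟨i0, hi0⟩
    · simp; linarith
    set t := infDist x Oᶜ with ht
    have ht0 : 0 < t := by
      have := hcmp1 i0 x (zet_supp _ (hρ0 _) (hS i0 hi0)); have := hρ0 i0; linarith
    have := count_balls d y (fun i => ρ i / 5) S x (a := t / 60) (b := 23 * (t / 60)) (by positivity)
      (by positivity) (fun i hi => by
        have := hcmp2 i x (zet_supp _ (hρ0 _) (hS i hi)); linarith)
      (fun i _ j _ hij => hdisj' i j hij)
      (fun i hi => by
        have h1 := zet_supp _ (hρ0 _) (hS i hi)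
        have h2 := hcmp1 i x h1
        rw [mem_ball'] at h1
        refine ball_subset_ball' ?_
        rw [dist_comm] at h1 ⊢; rw [dist_comm] at h1
        have := dist_comm x (y i)
        linarith)
    rwa [mul_div_assoc, div_self (by positivity), mul_one] at this
  have hfin : ∀ x, {i : u | zet (y i) (ρ i) x ≠ 0}.Finite := by
    intro x
    by_contra hinf
    obtain ⟨S, hS, hc⟩ := Set.Infinite.exists_subset_card_eq hinf (⌊N⌋₊ + 1)
    have := hcard x S (fun i hi => hS hi)
    rw [hc] at this
    push_cast at this
    have := Nat.lt_floor_add_one N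
    linarith
  set Z : E d → ℝ := fun x => ∑' i : u, zet (y i) (ρ i) x with hZ
  have hsm : ∀ x, Summable fun i : u => zet (y i) (ρ i) x := fun x =>
    summable_of_hasFiniteSupport (hfin x)
  have hZ1 : ∀ x ∈ O, 1 ≤ Z x := by
    intro x hx
    obtain ⟨i, hi⟩ := hcover x hx
    rw [← zet_one (y i) (hρ0 i) hi]
    exact (hsm x).le_tsum i (fun j _ => zet_nonneg _ _ _)
  have hZN : ∀ x, Z x ≤ N := by
    intro x
    rw [hZ]; simp only
    rw [tsum_eq_sum (s := (hfin x).toFinset) (fun i hi => by simpa using hi)]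
    refine (Finset.sum_le_card_nsmul _ _ 1 fun i _ => zet_le_one _ _ _).trans ?_
    rw [nsmul_eq_mul, mul_one]
    exact hcard x _ (fun i hi => by simpa using hi)
  have hZnn : ∀ x, 0 ≤ Z x := fun x => tsum_nonneg fun i => zet_nonneg _ _ _
  have hZL : ∀ x x' (m : ℝ), 0 < m → (∀ i, zet (y i) (ρ i) x ≠ 0 → m ≤ ρ i) →
      (∀ i, zet (y i) (ρ i) x' ≠ 0 → m ≤ ρ i) → |Z x - Z x'| ≤ 2 * N / m * ‖x - x'‖ := by
    classical
    intro x x' m hm h1 h2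
    set S := (hfin x).toFinset ∪ (hfin x').toFinset with hS
    have e1 : Z x = ∑ i ∈ S, zet (y i) (ρ i) x := tsum_eq_sum fun i hi => by
      by_contra h; exact hi (Finset.mem_union_left _ (by simpa using h))
    have e2 : Z x' = ∑ i ∈ S, zet (y i) (ρ i) x' := tsum_eq_sum fun i hi => by
      by_contra h; exact hi (Finset.mem_union_right _ (by simpa using h))
    rw [e1, e2, ← Finset.sum_sub_distrib]
    refine (Finset.abs_sum_le_sum_abs _ _).trans ?_
    refine (Finset.sum_le_card_nsmul _ _ (1/m * ‖x - x'‖) fun i hi => ?_).trans ?_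
    · refine (zet_lip (y i) (hρ0 i) x x').trans (mul_le_mul_of_nonneg_right ?_ (norm_nonneg _))
      have : m ≤ ρ i := by
        rcases Finset.mem_union.1 hi with h | h
        · exact h1 i (by simpa using h)
        · exact h2 i (by simpa using h)
      exact one_div_le_one_div_of_le hm this
    · rw [nsmul_eq_mul]
      have : (S.card : ℝ) ≤ N + N := by
        have a1 := hcard x (hfin x).toFinset (fun i hi => by simpa using hi)
        have a2 := hcard x' (hfin x').toFinset (fun i hi => by simpa using hi)
        have a3 : S.card ≤ _ := Finset.card_union_le _ _
        have a4 : (S.card : ℝ) ≤ (hfin x).toFinset.card + (hfin x').toFinset.card := by exact_mod_cast a3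
        linarith
      calc _ ≤ (N + N) * (1/m * ‖x - x'‖) := mul_le_mul_of_nonneg_right this (by positivity)
        _ = _ := by ring
  set η : u → E d → ℝ := fun i x => zet (y i) (ρ i) x / Z x with hη
  have hsuppO : ∀ i x, zet (y i) (ρ i) x ≠ 0 → x ∈ O := fun i x h =>
    hsub i (ball_subset_ball (by have := hρ0 i; linarith) (zet_supp _ (hρ0 i) h))
  have hηnn : ∀ i x, 0 ≤ η i x := fun i x => div_nonneg (zet_nonneg _ _ _) (hZnn x)
  have hη1 : ∀ i x, η i x ≤ 1 := fun i x => by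
    rw [hη]; simp only
    apply div_le_one_of_le₀ _ (hZnn x)
    exact (hsm x).le_tsum i (fun j _ => zet_nonneg _ _ _)
  have hηs : ∀ i x, η i x ≠ 0 → zet (y i) (ρ i) x ≠ 0 := fun i x h h0 => h (by
    rw [hη]; simp only [h0, zero_div])
  have hlip : ∀ i x x', |η i x - η i x'| ≤ (1 + 4 * N) / ρ i * ‖x - x'‖ := by
    have key : ∀ i x x', η i x ≠ 0 → |η i x - η i x'| ≤ (1 + 4 * N) / ρ i * ‖x - x'‖ := by
      intro i x x' hx
      have hz := hηs i x hx
      have hp := hρ0 i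
      have hxb := zet_supp _ hp hz
      have hxO := hsuppO i x hz
      by_cases hfar : ρ i ≤ ‖x - x'‖
      · have : |η i x - η i x'| ≤ 1 := by
          rw [abs_le]; have := hηnn i x; have := hηnn i x'; have := hη1 i x; have := hη1 i x'
          constructor <;> linarith
        refine this.trans ?_
        rw [div_mul_eq_mul_div, le_div_iff₀ hp]; nlinarith
      · push Not at hfar
        have hx'd : dist x' (y i) < 3 * ρ i := by
          have := dist_triangle x' x (y i)
          rw [dist_comm x' x, dist_eq_norm x x'] at this
          rw [mem_ball] at hxb; linarith
        have hx'O : x' ∈ O := hsub i (by rw [mem_ball]; linarith)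
        have d1 := hcmp1 i x hxb
        have d2 := hlow i x'
        have hZL' := hZL x x' (ρ i / 2) (by positivity)
          (fun j hj => by have := hcmp2 j x (zet_supp _ (hρ0 j) hj); linarith)
          (fun j hj => by have := hcmp2 j x' (zet_supp _ (hρ0 j) hj); linarith)
        have z1 := hZ1 x hxO
        have z2 := hZ1 x' hx'O
        have hzl := zet_lip (y i) hp x x'
        have hid : η i x - η i x' = (zet (y i) (ρ i) x - zet (y i) (ρ i) x') / Z x +
            η i x' * ((Z x' - Z x) / Z x) := by
          rw [hη]; simp only; field_simp; ring
        rw [hid]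
        have b1 : |(zet (y i) (ρ i) x - zet (y i) (ρ i) x') / Z x| ≤ 1 / ρ i * ‖x - x'‖ := by
          rw [abs_div, abs_of_pos (by linarith : 0 < Z x)]
          exact (div_le_self (abs_nonneg _) z1).trans hzl
        have b2 : |η i x' * ((Z x' - Z x) / Z x)| ≤ 2 * N / (ρ i / 2) * ‖x - x'‖ := by
          rw [abs_mul, abs_of_nonneg (hηnn i x'), abs_div, abs_of_pos (by linarith : 0 < Z x), abs_sub_comm]
          refine le_trans ?_ hZL'
          exact (mul_le_of_le_one_left (by positivity) (hη1 i x')).trans (div_le_self (abs_nonneg _) z1)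
        refine (abs_add_le _ _).trans ((add_le_add b1 b2).trans (le_of_eq ?_))
        field_simp; ring
    intro i x x'
    by_cases hx : η i x = 0
    · by_cases hx' : η i x' = 0
      · rw [hx, hx', sub_zero, abs_zero]; have := hρ0 i; positivity
      · rw [abs_sub_comm, norm_sub_rev]; exact key i x' x hx'
    · exact key i x x' hx
  refine ⟨u, y, ρ, η, ⟨hρ0, hηnn, hη1, fun i x hx => zet_supp _ (hρ0 i) (hηs i x hx), hsub, ?_, ?_, ?_, ?_, ?_,
    hcmp1, hcmp2, hcou, fun x => (hfin x).subset fun i hi => hηs i x hi⟩⟩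
  · intro x hx
    have := (hsm x).hasSum.div_const (Z x)
    rwa [div_self (by have := hZ1 x hx; change Z x ≠ 0; linarith)] at this
  · intro i x x'
    have := hρ0 i
    refine (hlip i x x').trans (mul_le_mul_of_nonneg_right ?_ (norm_nonneg _))
    exact div_le_div_of_nonneg_right (by linarith) this.le
  · intro i
    have hp := hρ0 i
    have hcont : Continuous (η i) := by
      have : LipschitzWith ((1 + 4 * N) / ρ i).toNNReal (η i) := by
        apply LipschitzWith.of_dist_le_mul
        intro x x'
        rw [Real.dist_eq, dist_eq_norm, Real.coe_toNNReal _ (by positivity)]; exact hlip i x x'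
      exact this.continuous
    have hi : Integrable (η i) := hcont.integrable_of_hasCompactSupport (by
      refine HasCompactSupport.intro (isCompact_closedBall (y i) (2 * ρ i)) fun x hx => ?_
      by_contra h; exact hx (ball_subset_closedBall (zet_supp _ hp (hηs i x h))))
    have h1 : ∫ x, (ball (y i) (ρ i)).indicator (fun _ => (1/N:ℝ)) x ≤ ∫ x, η i x := by
      refine integral_mono ?_ hi fun x => ?_
      · rw [integrable_indicator_iff measurableSet_ball]
        exact integrableOn_const measure_ball_lt_top.ne
      · by_cases hx : x ∈ ball (y i) (ρ i)
        · rw [Set.indicator_of_mem hx, hη]; simp only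
          rw [zet_one (y i) hp (ball_subset_closedBall hx)]
          have hxO : x ∈ O := hsub i (ball_subset_ball (by linarith) hx)
          exact one_div_le_one_div_of_le (by have := hZ1 x hxO; linarith) (hZN x)
        · rw [Set.indicator_of_notMem hx]; exact hηnn i x
    rw [integral_indicator measurableSet_ball, setIntegral_const, measureReal_def, vol_ball d _ hp,
      ENNReal.toReal_ofReal (by positivity), smul_eq_mul] at h1
    have h2 : N / om d * (ρ i ^ d * om d * (1/N)) ≤ K * ∫ x, η i x := by
      have h0 : 0 ≤ ∫ x, η i x := integral_nonneg (hηnn i)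
      refine (mul_le_mul_of_nonneg_left h1 p1.le).trans (mul_le_mul_of_nonneg_right ?_ h0)
      linarith
    refine le_trans (le_of_eq ?_) h2
    field_simp
  · have h1 : ∑' i, volume (ball (y i) (ρ i / 5)) ≤ volume O := by
      rw [← measure_iUnion (fun i j hij => hdisj' i j hij) (fun i => measurableSet_ball)]
      refine measure_mono (Set.iUnion_subset fun i => ?_)
      exact (ball_subset_ball (by have := hρ0 i; linarith)).trans (hsub i)
    have h2 : ∀ i, ENNReal.ofReal (ρ i ^ d) = ENNReal.ofReal (5 ^ d / om d) * volume (ball (y i) (ρ i / 5)) := by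
      intro i
      have hp := hρ0 i
      generalize ρ i = t at hp
      rw [vol_ball d _ (by positivity), ← ENNReal.ofReal_mul (by positivity), div_pow]
      congr 1; field_simp
    simp_rw [h2]
    rw [ENNReal.tsum_mul_left]
    calc _ ≤ ENNReal.ofReal (5 ^ d / om d) * volume O := mul_le_mul_right h1 _
      _ ≤ _ := mul_le_mul_left (ENNReal.ofReal_le_ofReal (by linarith)) _
  · intro i
    have hp := hρ0 i
    obtain ⟨p, hp1, hp2⟩ := (infDist_lt_iff hOc (x := y i) (r := 11 * ρ i)).1 (by rw [hδρ]; linarith)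
    exact ⟨p, hp1, by rwa [dist_comm]⟩

lemma Whit.cont {d : ℕ} {O : Set (E d)} {K : ℝ} {ι : Type} {y : ι → E d} {ρ : ι → ℝ} {η : ι → E d → ℝ}
    (W : Whit d O K ι y ρ η) (i : ι) : Continuous (η i) := by
  have : LipschitzWith (K / ρ i).toNNReal (η i) := by
    apply LipschitzWith.of_dist_le_mul
    intro x x'
    rw [Real.dist_eq, dist_eq_norm]
    exact (W.lip i x x').trans (mul_le_mul_of_nonneg_right (Real.le_coe_toNNReal _) (norm_nonneg _))
  exact this.continuous

lemma Whit.abs_le {d : ℕ} {O : Set (E d)} {K : ℝ} {ι : Type} {y : ι → E d} {ρ : ι → ℝ} {η : ι → E d → ℝ}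
    (W : Whit d O K ι y ρ η) (i : ι) (x : E d) : |η i x| ≤ 1 := by
  rw [abs_of_nonneg (W.nonneg i x)]; exact W.le_one i x

lemma Whit.integ {d : ℕ} {O : Set (E d)} {K : ℝ} {ι : Type} {y : ι → E d} {ρ : ι → ℝ} {η : ι → E d → ℝ}
    (W : Whit d O K ι y ρ η) (i : ι) : Integrable (η i) :=
  (W.cont i).integrable_of_hasCompactSupport (by
      refine HasCompactSupport.intro (isCompact_closedBall (y i) (2 * ρ i)) fun x hx => ?_
      by_contra h; exact hx (ball_subset_closedBall (W.supp i h)))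

lemma Whit.intpos {d : ℕ} {O : Set (E d)} {K : ℝ} {ι : Type} {y : ι → E d} {ρ : ι → ℝ} {η : ι → E d → ℝ}
    (W : Whit d O K ι y ρ η) (i : ι) : 0 < ∫ x, η i x := by
  have h0 : 0 ≤ ∫ x, η i x := integral_nonneg (W.nonneg i)
  rcases h0.eq_or_lt with h | h
  · have := W.int i
    rw [← h, mul_zero] at this
    have h2 := W.pos i
    have : 0 < ρ i ^ d := by positivity
    linarith
  · exact h

lemma Whit.off {d : ℕ} {O : Set (E d)} {K : ℝ} {ι : Type} {y : ι → E d} {ρ : ι → ℝ} {η : ι → E d → ℝ}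
    (W : Whit d O K ι y ρ η) (i : ι) {x : E d} (hx : x ∉ O) : η i x = 0 := by
  by_contra h
  exact hx (W.sub i (ball_subset_ball (by have := W.pos i; linarith) (W.supp i h)))

lemma Whit.sum_le {d : ℕ} {O : Set (E d)} {K : ℝ} {ι : Type} {y : ι → E d} {ρ : ι → ℝ} {η : ι → E d → ℝ}
    (W : Whit d O K ι y ρ η) (S : Finset ι) (x : E d) : ∑ i ∈ S, η i x ≤ 1 := by
  by_cases hx : x ∈ O
  · exact sum_le_hasSum S (fun i _ => W.nonneg i x) (W.sum x hx)
  · rw [Finset.sum_eq_zero fun i _ => W.off i hx]; exact zero_le_one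

lemma Whit.mulint {d : ℕ} {O : Set (E d)} {K : ℝ} {ι : Type} {y : ι → E d} {ρ : ι → ℝ} {η : ι → E d → ℝ}
    (W : Whit d O K ι y ρ η) (i : ι) {u : E d → ℝ} (hu : Integrable u) : Integrable (fun x => u x * η i x) :=
  hu.mul_bdd (c := 1) (W.cont i).aestronglyMeasurable (ae_of_all _ fun x => W.abs_le i x)

def mm {d : ℕ} {ι : Type} (η : ι → E d → ℝ) (u : E d → ℝ) (i : ι) : ℝ := (∫ x, u x * η i x) / ∫ x, η i x
def TT {d : ℕ} {ι : Type} (η : ι → E d → ℝ) (c : ι → ℝ) (x : E d) : ℝ := ∑' i, c i * η i x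
def GG {d : ℕ} {ι : Type} (O : Set (E d)) (η : ι → E d → ℝ) (u : E d → ℝ) (x : E d) : ℝ :=
  Oᶜ.indicator u x + TT η (mm η u) x

lemma Whit.hasT {d : ℕ} {O : Set (E d)} {K : ℝ} {ι : Type} {y : ι → E d} {ρ : ι → ℝ} {η : ι → E d → ℝ}
    (W : Whit d O K ι y ρ η) (c : ι → ℝ) (x : E d) : HasSum (fun i => c i * η i x) (TT η c x) := by
  refine (summable_of_hasFiniteSupport ?_).hasSum
  exact (W.fin x).subset fun i hi => right_ne_zero_of_mul hi

lemma Whit.T_meas {d : ℕ} {O : Set (E d)} {K : ℝ} {ι : Type} {y : ι → E d} {ρ : ι → ℝ} {η : ι → E d → ℝ}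
    (W : Whit d O K ι y ρ η) (c : ι → ℝ) : Measurable (TT η c) := by
  have := W.cou
  refine measurable_of_tendsto_metrizable' (f := fun (S : Finset ι) x => ∑ i ∈ S, c i * η i x) atTop ?_ ?_
  · intro S
    exact Finset.measurable_sum _ fun i _ => ((W.cont i).measurable.const_mul _)
  · rw [tendsto_pi_nhds]; intro x; exact W.hasT c x

lemma Whit.sum_bd {d : ℕ} {O : Set (E d)} {K : ℝ} {ι : Type} {y : ι → E d} {ρ : ι → ℝ} {η : ι → E d → ℝ}
    (W : Whit d O K ι y ρ η) {c : ι → ℝ} {M : ℝ} (hM : ∀ i, |c i| ≤ M) (hM0 : 0 ≤ M) (S : Finset ι) (x : E d) :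
    ∑ i ∈ S, |c i * η i x| ≤ M := by
  calc ∑ i ∈ S, |c i * η i x| ≤ ∑ i ∈ S, M * η i x := Finset.sum_le_sum fun i _ => by
        rw [abs_mul, abs_of_nonneg (W.nonneg i x)]
        exact mul_le_mul_of_nonneg_right (hM i) (W.nonneg i x)
    _ = M * ∑ i ∈ S, η i x := by rw [Finset.mul_sum]
    _ ≤ M * 1 := mul_le_mul_of_nonneg_left (W.sum_le S x) hM0
    _ = M := mul_one _

lemma Whit.T_bd {d : ℕ} {O : Set (E d)} {K : ℝ} {ι : Type} {y : ι → E d} {ρ : ι → ℝ} {η : ι → E d → ℝ}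
    (W : Whit d O K ι y ρ η) {c : ι → ℝ} {M : ℝ} (hM : ∀ i, |c i| ≤ M) (hM0 : 0 ≤ M) (x : E d) :
    |TT η c x| ≤ M := by
  refine le_of_tendsto (W.hasT c x).abs (Eventually.of_forall fun S => ?_)
  exact (Finset.abs_sum_le_sum_abs _ _).trans (W.sum_bd hM hM0 S x)

lemma Whit.T_off {d : ℕ} {O : Set (E d)} {K : ℝ} {ι : Type} {y : ι → E d} {ρ : ι → ℝ} {η : ι → E d → ℝ}
    (W : Whit d O K ι y ρ η) (c : ι → ℝ) {x : E d} (hx : x ∉ O) : TT η c x = 0 := by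
  unfold TT; simp [W.off _ hx]

lemma Whit.T_one {d : ℕ} {O : Set (E d)} {K : ℝ} {ι : Type} {y : ι → E d} {ρ : ι → ℝ} {η : ι → E d → ℝ}
    (W : Whit d O K ι y ρ η) {x : E d} (hx : x ∈ O) : TT η (fun _ => 1) x = 1 := by
  unfold TT; simp only [one_mul]; exact (W.sum x hx).tsum_eq

lemma Whit.T_hasInt {d : ℕ} {O : Set (E d)} {K : ℝ} {ι : Type} {y : ι → E d} {ρ : ι → ℝ} {η : ι → E d → ℝ}
    (W : Whit d O K ι y ρ η) {c : ι → ℝ} {M : ℝ} (hM : ∀ i, |c i| ≤ M) (hM0 : 0 ≤ M)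
    {v : E d → ℝ} (hv : Integrable v) :
    HasSum (fun i => c i * ∫ x, v x * η i x) (∫ x, v x * TT η c x) := by
  have := W.cou
  have hi : ∀ i, Integrable (fun x => v x * (c i * η i x)) := fun i => by
    have := (W.mulint i hv).const_mul (c i)
    refine this.congr (ae_of_all _ fun x => by ring_nf)
  have hs : Summable fun i => ∫ x, ‖v x * (c i * η i x)‖ := by
    refine summable_of_sum_le (c := ∫ x, M * |v x|) (fun i => integral_nonneg fun x => norm_nonneg _) fun S => ?_
    rw [← integral_finsetSum _ fun i _ => (hi i).norm]
    refine integral_mono (integrable_finsetSum _ fun i _ => (hi i).norm) (hv.abs.const_mul M) fun x => ?_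
    have := W.sum_bd hM hM0 S x
    simp only [norm_mul, Real.norm_eq_abs]
    rw [← Finset.mul_sum, mul_comm]
    simp only [abs_mul] at this
    exact mul_le_mul_of_nonneg_right this (abs_nonneg _)
  have h := hasSum_integral_of_summable_integral_norm hi hs
  have e1 : ∀ x, ∑' i, v x * (c i * η i x) = v x * TT η c x := fun x => tsum_mul_left
  simp only [e1] at h
  have e2 : ∀ i, ∫ x, v x * (c i * η i x) = c i * ∫ x, v x * η i x := fun i => by
    rw [← integral_const_mul]
    congr 1; ext x; ring
  simp only [e2] at h
  exact h

lemma Whit.T_integrable {d : ℕ} {O : Set (E d)} {K : ℝ} {ι : Type} {y : ι → E d} {ρ : ι → ℝ} {η : ι → E d → ℝ}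
    (W : Whit d O K ι y ρ η) (hO : IsOpen O) (hOf : volume O < ⊤) {c : ι → ℝ} {M : ℝ} (hM : ∀ i, |c i| ≤ M) (hM0 : 0 ≤ M) :
    Integrable (TT η c) := by
  have h1 : Integrable (O.indicator (fun _ => (1:ℝ))) := by
    rw [integrable_indicator_iff hO.measurableSet]; exact integrableOn_const hOf.ne
  have := h1.mul_bdd (c := M) (W.T_meas c).aestronglyMeasurable (ae_of_all _ fun x => W.T_bd hM hM0 x)
  refine this.congr (ae_of_all _ fun x => ?_)
  by_cases hx : x ∈ O
  · simp [Set.indicator_of_mem hx]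
  · simp [Set.indicator_of_notMem hx, W.T_off c hx]

lemma Whit.GG_integrable {d : ℕ} {O : Set (E d)} {K : ℝ} {ι : Type} {y : ι → E d} {ρ : ι → ℝ} {η : ι → E d → ℝ}
    (W : Whit d O K ι y ρ η) (hO : IsOpen O) (hOf : volume O < ⊤) {u : E d → ℝ} (hu : Integrable u)
    {M : ℝ} (hM : ∀ i, |mm η u i| ≤ M) (hM0 : 0 ≤ M) : Integrable (GG O η u) :=
  (hu.indicator hO.measurableSet.compl).add (W.T_integrable hO hOf hM hM0)

lemma Whit.GG_meas {d : ℕ} {O : Set (E d)} {K : ℝ} {ι : Type} {y : ι → E d} {ρ : ι → ℝ} {η : ι → E d → ℝ}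
    (W : Whit d O K ι y ρ η) (hO : IsOpen O) {u : E d → ℝ} (hu : Measurable u) : Measurable (GG O η u) :=
  (hu.indicator hO.measurableSet.compl).add (W.T_meas _)

lemma Whit.GG_in {d : ℕ} {O : Set (E d)} {ι : Type} {η : ι → E d → ℝ} (u : E d → ℝ) {x : E d} (hx : x ∈ O) :
    GG O η u x = TT η (mm η u) x := by
  unfold GG; simp [hx]

lemma Whit.GG_out {d : ℕ} {O : Set (E d)} {K : ℝ} {ι : Type} {y : ι → E d} {ρ : ι → ℝ} {η : ι → E d → ℝ}
    (W : Whit d O K ι y ρ η) (u : E d → ℝ) {x : E d} (hx : x ∉ O) : GG O η u x = u x := by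
  unfold GG; rw [W.T_off _ hx]; simp [hx]

lemma Whit.GG_bd {d : ℕ} {O : Set (E d)} {K : ℝ} {ι : Type} {y : ι → E d} {ρ : ι → ℝ} {η : ι → E d → ℝ}
    (W : Whit d O K ι y ρ η) {u : E d → ℝ} {M : ℝ} (hM : ∀ i, |mm η u i| ≤ M) (hM0 : 0 ≤ M)
    (hu : ∀ x, x ∉ O → |u x| ≤ M) (x : E d) : |GG O η u x| ≤ M := by
  by_cases hx : x ∈ O
  · rw [Whit.GG_in u hx]; exact W.T_bd hM hM0 x
  · rw [W.GG_out u hx]; exact hu x hx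

lemma Whit.GG_int {d : ℕ} {O : Set (E d)} {K : ℝ} {ι : Type} {y : ι → E d} {ρ : ι → ℝ} {η : ι → E d → ℝ}
    (W : Whit d O K ι y ρ η) (hO : IsOpen O) (hOf : volume O < ⊤) {u : E d → ℝ} (hu : Integrable u)
    {M : ℝ} (hM : ∀ i, |mm η u i| ≤ M) (hM0 : 0 ≤ M) : ∫ x, GG O η u x = ∫ x, u x := by
  have h1 : Integrable (O.indicator (fun _ => (1:ℝ))) := by
    rw [integrable_indicator_iff hO.measurableSet]; exact integrableOn_const hOf.ne
  have a1 := W.T_hasInt hM hM0 h1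
  have a2 := W.T_hasInt (c := fun _ => 1) (M := 1) (by simp) zero_le_one hu
  have e1 : ∀ i, mm η u i * ∫ x, O.indicator (fun _ => (1:ℝ)) x * η i x = 1 * ∫ x, u x * η i x := fun i => by
    have : ∫ x, O.indicator (fun _ => (1:ℝ)) x * η i x = ∫ x, η i x := by
      congr 1; ext x
      by_cases hx : x ∈ O
      · simp [hx]
      · simp [W.off i hx]
    rw [this, mm, div_mul_cancel₀ _ (W.intpos i).ne', one_mul]
  simp only [e1] at a1
  have e2 := a1.unique a2
  have e3 : ∫ x, O.indicator (fun _ => (1:ℝ)) x * TT η (mm η u) x = ∫ x, TT η (mm η u) x := by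
    congr 1; ext x
    by_cases hx : x ∈ O
    · simp [hx]
    · simp [W.T_off _ hx]
  have e4 : ∫ x, u x * TT η (fun _ => 1) x = ∫ x, O.indicator u x := by
    congr 1; ext x
    by_cases hx : x ∈ O
    · simp [hx, W.T_one hx]
    · simp [hx, W.T_off _ hx]
  unfold GG
  rw [integral_add (hu.indicator hO.measurableSet.compl) (W.T_integrable hO hOf hM hM0), ← e3, e2, e4,
    ← integral_add (hu.indicator hO.measurableSet.compl) (hu.indicator hO.measurableSet)]
  congr 1; ext x
  by_cases hx : x ∈ O <;> simp [hx]

lemma Whit.bump {d : ℕ} {O : Set (E d)} {K : ℝ} {ι : Type} {y : ι → E d} {ρ : ι → ℝ} {η : ι → E d → ℝ}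
    (W : Whit d O K ι y ρ η) (hK : 1 ≤ K) (i : ι) {R l : ℝ} (hR : 12 * ρ i < R) (hl : 0 ≤ l) {f ψ : E d → ℝ}
    (hG : ∀ p, p ∉ O → GM d R f p ≤ ENNReal.ofReal l)
    (h1 : Function.support ψ ⊆ ball (y i) (2 * ρ i)) (h2 : ∀ x, |ψ x| ≤ 1)
    (h3 : ∀ x x', |ψ x - ψ x'| ≤ 3 * K / ρ i * ‖x - x'‖) :
    |(∫ x, f x * ψ x) / ∫ x, η i x| ≤ 36 * K ^ 2 * 12 ^ d * l := by
  have hp := W.pos i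
  obtain ⟨p, hpO, hpd⟩ := W.out i
  have hb : Bump d (y i) (12 * ρ i) (fun x => (1 / (36 * K)) * ψ x) := by
    refine ⟨fun x hx => ?_, fun x => ?_, fun x x' => ?_⟩
    · exact ball_subset_ball (by linarith) (h1 (right_ne_zero_of_mul hx))
    · rw [abs_mul, abs_of_pos (by positivity)]
      have : 1 / (36 * K) ≤ 1 := by rw [div_le_one (by positivity)]; linarith
      nlinarith [h2 x, abs_nonneg (ψ x)]
    · rw [← mul_sub, abs_mul, abs_of_pos (by positivity)]
      refine (mul_le_mul_of_nonneg_left (h3 x x') (by positivity)).trans (le_of_eq ?_)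
      field_simp; ring
  have hx : p ∈ ball (y i) (12 * ρ i) := by rw [mem_ball]; linarith
  have h := (GM_le d f (by positivity) (by linarith) hx hb).trans (hG p hpO)
  rw [ENNReal.ofReal_le_ofReal_iff hl] at h
  have e : ∫ x, f x * ((1 / (36 * K)) * ψ x) = (1 / (36 * K)) * ∫ x, f x * ψ x := by
    rw [← integral_const_mul]; congr 1; ext x; ring
  rw [e, abs_mul, abs_of_pos (by positivity), div_le_iff₀ (by positivity)] at h
  have hI := W.intpos i
  have hK2 := W.int i
  rw [abs_div, abs_of_pos hI, div_le_iff₀ hI]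
  have h5 : |∫ x, f x * ψ x| ≤ 36 * K * (l * (12 * ρ i) ^ d) := by
    have := mul_le_mul_of_nonneg_left h (by positivity : 0 ≤ 36 * K)
    refine le_trans (le_of_eq ?_) this
    field_simp
  refine h5.trans ?_
  rw [mul_pow]
  calc 36 * K * (l * (12 ^ d * ρ i ^ d)) = (36 * K * 12 ^ d * l) * ρ i ^ d := by ring
    _ ≤ (36 * K * 12 ^ d * l) * (K * ∫ x, η i x) := mul_le_mul_of_nonneg_left hK2 (by positivity)
    _ = _ := by ring

lemma Whit.mm_bd {d : ℕ} {O : Set (E d)} {K : ℝ} {ι : Type} {y : ι → E d} {ρ : ι → ℝ} {η : ι → E d → ℝ}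
    (W : Whit d O K ι y ρ η) (hK : 1 ≤ K) (i : ι) {R l : ℝ} (hR : 12 * ρ i < R) (hl : 0 ≤ l) {f : E d → ℝ}
    (hG : ∀ p, p ∉ O → GM d R f p ≤ ENNReal.ofReal l) :
    |mm η f i| ≤ 36 * K ^ 2 * 12 ^ d * l := by
  refine W.bump hK i hR hl hG (W.supp i) (W.abs_le i) fun x x' => (W.lip i x x').trans ?_
  have := W.pos i
  refine mul_le_mul_of_nonneg_right (div_le_div_of_nonneg_right (by linarith) this.le) (norm_nonneg _)

lemma Whit.rho_le {d : ℕ} {O O' : Set (E d)} {K : ℝ} {ι ι' : Type} {y : ι → E d} {ρ : ι → ℝ} {η : ι → E d → ℝ}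
    {y' : ι' → E d} {ρ' : ι' → ℝ} {η' : ι' → E d → ℝ}
    (W : Whit d O K ι y ρ η) (W' : Whit d O' K ι' y' ρ' η') (hsub : O' ⊆ O) {i : ι'} {j : ι} {z : E d}
    (hi : η' i z ≠ 0) (hj : η j z ≠ 0) : ρ' i ≤ 3 / 2 * ρ j := by
  have h1 := W'.cmp1 i z (W'.supp i hi)
  have h2 := W.cmp2 j z (W.supp j hj)
  obtain ⟨p, hp, -⟩ := W.out j
  have h3 : infDist z O'ᶜ ≤ infDist z Oᶜ :=
    infDist_le_infDist_of_subset (Set.compl_subset_compl.2 hsub) ⟨p, hp⟩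
  linarith

lemma Whit.mm_bd2 {d : ℕ} {O O' : Set (E d)} {K : ℝ} {ι ι' : Type} {y : ι → E d} {ρ : ι → ℝ} {η : ι → E d → ℝ}
    {y' : ι' → E d} {ρ' : ι' → ℝ} {η' : ι' → E d → ℝ}
    (W : Whit d O K ι y ρ η) (W' : Whit d O' K ι' y' ρ' η') (hsub : O' ⊆ O) (hK : 1 ≤ K)
    (i : ι') (j : ι) {R l : ℝ} (hR : 12 * ρ' i < R) (hl : 0 ≤ l) {f : E d → ℝ}
    (hG : ∀ p, p ∉ O' → GM d R f p ≤ ENNReal.ofReal l) :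
    |mm η' (fun x => f x * η j x) i| ≤ 36 * K ^ 2 * 12 ^ d * l := by
  by_cases hz : ∃ z, η' i z ≠ 0 ∧ η j z ≠ 0
  · obtain ⟨z, hz1, hz2⟩ := hz
    have hr := W.rho_le W' hsub hz1 hz2
    have hp := W.pos j
    have hp' := W'.pos i
    have : mm η' (fun x => f x * η j x) i = (∫ x, f x * (η j x * η' i x)) / ∫ x, η' i x := by
      unfold mm; simp only [mul_assoc]
    rw [this]
    refine W'.bump hK i hR hl hG ?_ ?_ ?_
    · intro x hx; exact W'.supp i (right_ne_zero_of_mul hx)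
    · intro x; rw [abs_mul]; exact mul_le_one₀ (W.abs_le j x) (abs_nonneg _) (W'.abs_le i x)
    · intro x x'
      have e : η j x * η' i x - η j x' * η' i x' = η j x * (η' i x - η' i x') + (η j x - η j x') * η' i x' := by ring
      rw [e]
      refine (abs_add_le _ _).trans ?_
      rw [abs_mul, abs_mul]
      have b1 : |η j x| * |η' i x - η' i x'| ≤ K / ρ' i * ‖x - x'‖ :=
        (mul_le_of_le_one_left (abs_nonneg _) (W.abs_le j x)).trans (W'.lip i x x')
      have b2 : |η j x - η j x'| * |η' i x'| ≤ K / ρ j * ‖x - x'‖ :=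
        (mul_le_of_le_one_right (abs_nonneg _) (W'.abs_le i x')).trans (W.lip j x x')
      have b3 : K / ρ j ≤ 2 * K / ρ' i := by
        rw [div_le_div_iff₀ hp hp']; nlinarith
      have b4 := mul_le_mul_of_nonneg_right b3 (norm_nonneg (x - x'))
      have b5 : 3 * K / ρ' i * ‖x - x'‖ = K / ρ' i * ‖x - x'‖ + 2 * K / ρ' i * ‖x - x'‖ := by ring
      linarith
  · push Not at hz
    have : mm η' (fun x => f x * η j x) i = 0 := by
      unfold mm
      have : ∀ x, f x * η j x * η' i x = 0 := fun x => by
        by_cases h : η' i x = 0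
        · rw [h, mul_zero]
        · rw [hz x h]; ring
      simp [this]
    rw [this, abs_zero]; positivity

def bb {d : ℕ} {ι : Type} (η : ι → E d → ℝ) (u : E d → ℝ) (j : ι) (x : E d) : ℝ := (u x - mm η u j) * η j x

lemma Whit.bb_integrable {d : ℕ} {O : Set (E d)} {K : ℝ} {ι : Type} {y : ι → E d} {ρ : ι → ℝ} {η : ι → E d → ℝ}
    (W : Whit d O K ι y ρ η) {u : E d → ℝ} (hu : Integrable u) (j : ι) : Integrable (bb η u j) := by
  have := (W.mulint j hu).sub ((W.integ j).const_mul (mm η u j))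
  refine this.congr (ae_of_all _ fun x => ?_)
  simp only [bb, Pi.sub_apply]; ring

lemma Whit.bb_int {d : ℕ} {O : Set (E d)} {K : ℝ} {ι : Type} {y : ι → E d} {ρ : ι → ℝ} {η : ι → E d → ℝ}
    (W : Whit d O K ι y ρ η) {u : E d → ℝ} (hu : Integrable u) (j : ι) : ∫ x, bb η u j x = 0 := by
  have h := integral_sub (W.mulint j hu) ((W.integ j).const_mul (mm η u j))
  have e : ∫ x, bb η u j x = ∫ x, (u x * η j x - mm η u j * η j x) := by
    congr 1; ext x; simp only [bb]; ring
  rw [e, h, integral_const_mul, mm, div_mul_cancel₀ _ (W.intpos j).ne', sub_self]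

lemma Whit.bb_meas {d : ℕ} {O : Set (E d)} {K : ℝ} {ι : Type} {y : ι → E d} {ρ : ι → ℝ} {η : ι → E d → ℝ}
    (W : Whit d O K ι y ρ η) {u : E d → ℝ} (hu : Measurable u) (j : ι) : Measurable (bb η u j) :=
  (hu.sub_const _).mul (W.cont j).measurable

lemma bb_zero {d : ℕ} {ι : Type} {η : ι → E d → ℝ}
    {u : E d → ℝ} (j : ι) (h : ∀ x, u x * η j x = 0) : bb η u j = 0 := by
  have : mm η u j = 0 := by unfold mm; simp [h]
  ext x; simp only [bb, this, sub_zero, h x, Pi.zero_apply]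

lemma Whit.bb_bd {d : ℕ} {O : Set (E d)} {K : ℝ} {ι : Type} {y : ι → E d} {ρ : ι → ℝ} {η : ι → E d → ℝ}
    (W : Whit d O K ι y ρ η) {u : E d → ℝ} {M : ℝ} {j : ι} (hm : |mm η u j| ≤ M) {x : E d} (hx : |u x| ≤ M) :
    |bb η u j x| ≤ 2 * M := by
  rw [bb, abs_mul]
  refine (mul_le_of_le_one_right (abs_nonneg _) (W.abs_le j x)).trans ?_
  have := abs_sub (u x) (mm η u j)
  linarith

lemma Whit.mm_le {d : ℕ} {O : Set (E d)} {K : ℝ} {ι : Type} {y : ι → E d} {ρ : ι → ℝ} {η : ι → E d → ℝ}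
    (W : Whit d O K ι y ρ η) {u : E d → ℝ} {M : ℝ} (i : ι) (hx : ∀ x, |u x| ≤ M) :
    |mm η u i| ≤ M := by
  have hI := W.intpos i
  rw [mm, abs_div, abs_of_pos hI, div_le_iff₀ hI]
  rw [← integral_const_mul]
  refine norm_integral_le_of_norm_le (f := fun x => u x * η i x) ((W.integ i).const_mul M) (ae_of_all _ fun x => ?_)
  rw [norm_mul, Real.norm_eq_abs, Real.norm_eq_abs, abs_of_nonneg (W.nonneg i x)]
  exact mul_le_mul_of_nonneg_right (hx x) (W.nonneg i x)

lemma Whit.mm_bb {d : ℕ} {O O' : Set (E d)} {K : ℝ} {ι ι' : Type} {y : ι → E d} {ρ : ι → ℝ} {η : ι → E d → ℝ}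
    {y' : ι' → E d} {ρ' : ι' → ℝ} {η' : ι' → E d → ℝ}
    (W : Whit d O K ι y ρ η) (W' : Whit d O' K ι' y' ρ' η') {f : E d → ℝ} (hf : Integrable f) (i : ι') (j : ι) :
    mm η' (bb η f j) i = mm η' (fun x => f x * η j x) i - mm η f j * mm η' (η j) i := by
  have h := integral_sub (W'.mulint i (W.mulint j hf)) ((W'.mulint i (W.integ j)).const_mul (mm η f j))
  rw [integral_const_mul] at h
  have e : ∫ x, bb η f j x * η' i x = ∫ x, (f x * η j x * η' i x - mm η f j * (η j x * η' i x)) := by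
    congr 1; ext x; simp only [bb]; ring
  rw [mm, e, h, _root_.sub_div, mul_div_assoc]; rfl

lemma Whit.mm_bb_bd {d : ℕ} {O O' : Set (E d)} {K : ℝ} {ι ι' : Type} {y : ι → E d} {ρ : ι → ℝ} {η : ι → E d → ℝ}
    {y' : ι' → E d} {ρ' : ι' → ℝ} {η' : ι' → E d → ℝ}
    (W : Whit d O K ι y ρ η) (W' : Whit d O' K ι' y' ρ' η') {f : E d → ℝ} (hf : Integrable f) {M : ℝ} (hM0 : 0 ≤ M)
    (h2 : ∀ j, |mm η f j| ≤ M) (h4 : ∀ i j, |mm η' (fun x => f x * η j x) i| ≤ M) (i : ι') (j : ι) :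
    |mm η' (bb η f j) i| ≤ 2 * M := by
  rw [W.mm_bb W' hf]
  have := abs_sub (mm η' (fun x => f x * η j x) i) (mm η f j * mm η' (η j) i)
  have b : |mm η f j * mm η' (η j) i| ≤ M := by
    rw [abs_mul]
    have := mul_le_mul (h2 j) (W'.mm_le i (W.abs_le j)) (abs_nonneg _) hM0
    linarith
  linarith [h4 i j]

lemma Whit.A_props {d : ℕ} {O O' : Set (E d)} {K : ℝ} {ι ι' : Type} {y : ι → E d} {ρ : ι → ℝ} {η : ι → E d → ℝ}
    {y' : ι' → E d} {ρ' : ι' → ℝ} {η' : ι' → E d → ℝ}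
    (W : Whit d O K ι y ρ η) (W' : Whit d O' K ι' y' ρ' η') (hsub : O' ⊆ O) (hO' : IsOpen O')
    (hOf : volume O' < ⊤) {f : E d → ℝ} (hf : Integrable f) (hfm : Measurable f) {M : ℝ} (hM0 : 0 ≤ M)
    (h1 : ∀ x, x ∉ O' → |f x| ≤ M)
    (h2 : ∀ j, |mm η f j| ≤ M) (h4 : ∀ i j, |mm η' (fun x => f x * η j x) i| ≤ M) (j : ι) :
    Measurable (GG O' η' (bb η f j)) ∧ (∀ x, |GG O' η' (bb η f j) x| ≤ 2 * M) ∧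
    Function.support (GG O' η' (bb η f j)) ⊆ ball (y j) (10 * ρ j) ∧ ∫ x, GG O' η' (bb η f j) x = 0 ∧
    ((∀ x, f x * η j x = 0) → ∀ x, GG O' η' (bb η f j) x = 0) := by
  have hp := W.pos j
  have hmb := W.mm_bb_bd W' hf hM0 h2 h4
  refine ⟨W'.GG_meas hO' (W.bb_meas hfm j), ?_, ?_, ?_, ?_⟩
  · exact W'.GG_bd (fun i => hmb i j) (by positivity) fun x hx => W.bb_bd (h2 j) (h1 x hx)
  · intro x hx
    by_cases hxO : x ∈ O'
    · rw [Function.mem_support, Whit.GG_in _ hxO] at hx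
      have : ∃ i, mm η' (bb η f j) i * η' i x ≠ 0 := by
        by_contra h; push Not at h; apply hx; unfold TT; simp [h]
      obtain ⟨i, hi⟩ := this
      have hi1 := left_ne_zero_of_mul hi
      have hi2 := right_ne_zero_of_mul hi
      have : ∃ z, bb η f j z * η' i z ≠ 0 := by
        by_contra h; push Not at h; apply hi1; unfold mm; simp [h]
      obtain ⟨z, hz⟩ := this
      have hz1 := right_ne_zero_of_mul hz
      have hz2 := right_ne_zero_of_mul (left_ne_zero_of_mul hz)
      have hr := W.rho_le W' hsub hz1 hz2
      have d1 := W'.supp i hi2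
      have d2 := W'.supp i hz1
      have d3 := W.supp j hz2
      rw [mem_ball] at *
      have t1 := dist_triangle_right x z (y' i)
      have t2 := dist_triangle x z (y j)
      linarith
    · rw [Function.mem_support, W'.GG_out _ hxO] at hx
      exact ball_subset_ball (by linarith) (W.supp j (right_ne_zero_of_mul hx))
  · rw [W'.GG_int hO' hOf (W.bb_integrable hf j) (fun i => hmb i j) (by positivity), W.bb_int hf j]
  · intro h x
    rw [bb_zero j h]
    simp [GG, TT, mm]

lemma Whit.B_props {d : ℕ} {O O' : Set (E d)} {K : ℝ} {ι ι' : Type} {y : ι → E d} {ρ : ι → ℝ} {η : ι → E d → ℝ}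
    {y' : ι' → E d} {ρ' : ι' → ℝ} {η' : ι' → E d → ℝ}
    (W : Whit d O K ι y ρ η) (W' : Whit d O' K ι' y' ρ' η') (hO : IsOpen O) (hsub : O' ⊆ O)
    (hOf : volume O < ⊤) {f : E d → ℝ} (hf : Integrable f) (hfm : Measurable f) {M : ℝ} (hM0 : 0 ≤ M)
    (h1 : ∀ x, x ∉ O' → |f x| ≤ M)
    (h2 : ∀ j, |mm η f j| ≤ M) (i : ι') :
    Measurable (bb η' (GG O η f) i) ∧ (∀ x, |bb η' (GG O η f) i x| ≤ 2 * M) ∧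
    Function.support (bb η' (GG O η f) i) ⊆ ball (y' i) (10 * ρ' i) ∧ ∫ x, bb η' (GG O η f) i x = 0 ∧
    ((∀ x, GG O η f x * η' i x = 0) → ∀ x, bb η' (GG O η f) i x = 0) := by
  have hp := W'.pos i
  have hg : ∀ x, |GG O η f x| ≤ M := W.GG_bd h2 hM0 fun x hx => h1 x fun h => hx (hsub h)
  refine ⟨W'.bb_meas (W.GG_meas hO hfm) i, fun x => W'.bb_bd (W'.mm_le i hg) (hg x), ?_, ?_, ?_⟩
  · intro x hx
    exact ball_subset_ball (by linarith) (W'.supp i (right_ne_zero_of_mul hx))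
  · exact W'.bb_int (W.GG_integrable hO hOf hf h2 hM0) i
  · intro h x; rw [bb_zero i h]; rfl

lemma Whit.tele {d : ℕ} {O O' : Set (E d)} {K : ℝ} {ι ι' : Type} {y : ι → E d} {ρ : ι → ℝ} {η : ι → E d → ℝ}
    {y' : ι' → E d} {ρ' : ι' → ℝ} {η' : ι' → E d → ℝ}
    (W : Whit d O K ι y ρ η) (W' : Whit d O' K ι' y' ρ' η') (hO : IsOpen O) (hsub : O' ⊆ O)
    (hOf : volume O < ⊤) {f : E d → ℝ} (hf : Integrable f) {M : ℝ} (hM0 : 0 ≤ M)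
    (h2 : ∀ j, |mm η f j| ≤ M) (x : E d) :
    ∃ a b, HasSum (fun j => GG O' η' (bb η f j) x) a ∧ HasSum (fun i => bb η' (GG O η f) i x) b ∧
      a - b = GG O' η' f x - GG O η f x := by
  have key : ∀ {O : Set (E d)} {ι : Type} {y : ι → E d} {ρ : ι → ℝ} {η : ι → E d → ℝ}
      (W : Whit d O K ι y ρ η) (u : E d → ℝ), 
      HasSum (fun j => bb η u j x) (u x * TT η (fun _ => 1) x - TT η (mm η u) x) := by
    intro O ι y ρ η W u
    have := ((W.hasT (fun _ => 1) x).mul_left (u x)).sub (W.hasT (mm η u) x)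
    refine this.congr_fun ?_
    intro j; simp only [bb]; ring
  have hB := key W' (GG O η f)
  by_cases hx : x ∈ O'
  · have hxO := hsub hx
    have hgi := W.GG_integrable hO hOf hf h2 hM0
    -- sum over j of mm'
    have hmm : ∀ i, HasSum (fun j => mm η' (bb η f j) i) (mm η' f i - mm η' (GG O η f) i) := by
      intro i
      have a1 := W.T_hasInt (c := fun _ => 1) (M := 1) (by simp) zero_le_one (W'.mulint i hf)
      have a2 := W.T_hasInt h2 hM0 (W'.integ i)
      have e1 : ∫ x, f x * η' i x * TT η (fun _ => 1) x = ∫ x, f x * η' i x := by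
        congr 1; ext z
        by_cases hz : z ∈ O'
        · rw [W.T_one (hsub hz), mul_one]
        · rw [W'.off i hz]; simp
      have e2 : ∫ x, η' i x * TT η (mm η f) x = ∫ x, GG O η f x * η' i x := by
        congr 1; ext z
        by_cases hz : z ∈ O'
        · rw [Whit.GG_in f (hsub hz), mul_comm]
        · rw [W'.off i hz]; simp
      rw [e1] at a1; rw [e2] at a2
      have a3 := (a1.sub a2).div_const (∫ x, η' i x)
      rw [_root_.sub_div] at a3
      refine a3.congr_fun ?_
      intro j
      rw [W.mm_bb W' hf]
      have c1 : ∀ x, η' i x * η j x = η j x * η' i x := fun x => mul_comm _ _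
      have c2 : ∀ x, f x * η' i x * η j x = f x * η j x * η' i x := fun x => by ring
      simp only [c1, c2, mm]
      ring
    have hA : HasSum (fun j => GG O' η' (bb η f j) x)
        (TT η' (fun i => mm η' f i - mm η' (GG O η f) i) x) := by
      set S := (W'.fin x).toFinset with hS
      have hT : ∀ c : ι' → ℝ, TT η' c x = ∑ i ∈ S, c i * η' i x := fun c => by
        unfold TT
        refine tsum_eq_sum fun i hi => ?_
        rw [hS, Set.Finite.mem_toFinset] at hi
        have : η' i x = 0 := by by_contra h; exact hi h
        rw [this, mul_zero]
      rw [hT]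
      have : ∀ j, GG O' η' (bb η f j) x = ∑ i ∈ S, mm η' (bb η f j) i * η' i x := fun j => by
        rw [Whit.GG_in _ hx, hT]
      simp only [this]
      exact hasSum_sum fun i _ => (hmm i).mul_right _
    refine ⟨_, _, hA, hB, ?_⟩
    rw [W'.T_one hx, Whit.GG_in f hx]
    have : TT η' (fun i => mm η' f i - mm η' (GG O η f) i) x = TT η' (mm η' f) x - TT η' (mm η' (GG O η f)) x := by
      refine (W'.hasT _ x).unique ?_
      refine ((W'.hasT (mm η' f) x).sub (W'.hasT (mm η' (GG O η f)) x)).congr_fun ?_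
      intro j; ring
    rw [this]; ring
  · have hA := key W f
    have : ∀ j, GG O' η' (bb η f j) x = bb η f j x := fun j => W'.GG_out _ hx
    refine ⟨_, _, by simp only [this]; exact hA, hB, ?_⟩
    rw [W'.T_off _ hx, W'.T_off _ hx, W'.GG_out f hx]
    by_cases hxO : x ∈ O
    · rw [W.T_one hxO, Whit.GG_in f hxO]; ring
    · rw [W.T_off _ hxO, W.T_off _ hxO, W.GG_out f hxO]; ring

def Piece (d : ℕ) (x : E d) (R : ℝ) (u : E d → ℝ) (c : E d) (r M : ℝ) : Prop :=
  0 < r ∧ 0 ≤ M ∧ Measurable u ∧ (∀ z, |u z| ≤ M) ∧ Function.support u ⊆ ball c r ∧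
    ball c r ⊆ ball x (4 * R) ∧ r ≤ 3 * R ∧ ((∫ z, u z) = 0 ∨ (c = x ∧ r = 3 * R))

lemma mk_piece {d : ℕ} {x : E d} {R : ℝ} (hR : 0 < R) {u : E d → ℝ} {c : E d} {r M : ℝ} (hr : 0 < r) (hM : 0 ≤ M)
    (hu : Measurable u) (hb : ∀ z, |u z| ≤ M) (hs : Function.support u ⊆ ball c r) (hi : (∫ z, u z) = 0)
    (h : (∀ z, u z = 0) ∨ (ball c r ⊆ ball x (4 * R) ∧ r ≤ 3 * R)) :
    ∃ c' r' M', Piece d x R u c' r' M' ∧ M' * r' ^ d ≤ M * r ^ d := by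
  rcases h with h | ⟨h1, h2⟩
  · refine ⟨x, 3 * R, 0, ⟨by positivity, le_rfl, hu, fun z => by simp [h], ?_, ?_, le_rfl, Or.inl hi⟩, ?_⟩
    · intro z hz; exact absurd (h z) hz
    · exact ball_subset_ball (by linarith)
    · rw [zero_mul]; positivity
  · exact ⟨c, r, M, ⟨hr, hM, hu, hb, hs, h1, h2, Or.inl hi⟩, le_rfl⟩

lemma Piece.lint {d : ℕ} {x : E d} {R : ℝ} {u : E d → ℝ} {c : E d} {r M : ℝ} (h : Piece d x R u c r M) :
    ∫⁻ z, ENNReal.ofReal |u z| ≤ ENNReal.ofReal (om d) * ENNReal.ofReal (M * r ^ d) := by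
  obtain ⟨hr, hM, -, hb, hs, -⟩ := h
  calc ∫⁻ z, ENNReal.ofReal |u z| ≤ ∫⁻ z, (ball c r).indicator (fun _ => ENNReal.ofReal M) z := by
        refine lintegral_mono fun z => ?_
        by_cases hz : z ∈ ball c r
        · rw [Set.indicator_of_mem hz]; exact ENNReal.ofReal_le_ofReal (hb z)
        · have : u z = 0 := by by_contra h; exact hz (hs h)
          rw [this]; simp
    _ = ENNReal.ofReal M * volume (ball c r) := by
        rw [lintegral_indicator measurableSet_ball, setLIntegral_const]
    _ = _ := by
        rw [vol_ball d c hr, ← ENNReal.ofReal_mul hM, ← ENNReal.ofReal_mul (om_pos d).le]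
        congr 1; ring

lemma ae_summable {d : ℕ} {x : E d} {R : ℝ} {ν : Type} [Countable ν] {u : ν → E d → ℝ} {c : ν → E d} {r M : ν → ℝ}
    (h : ∀ k, Piece d x R (u k) (c k) (r k) (M k)) (hs : ∑' k, ENNReal.ofReal (M k * r k ^ d) < ⊤) :
    ∀ᵐ z, Summable fun k => u k z := by
  have hm : ∀ k, Measurable fun z => ENNReal.ofReal |u k z| := fun k => 
    ENNReal.measurable_ofReal.comp (h k).2.2.1.abs
  have h1 : ∫⁻ z, ∑' k, ENNReal.ofReal |u k z| < ⊤ := by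
    rw [lintegral_tsum fun k => (hm k).aemeasurable]
    refine (ENNReal.tsum_le_tsum fun k => (h k).lint).trans_lt ?_
    rw [ENNReal.tsum_mul_left]
    exact ENNReal.mul_lt_top ENNReal.ofReal_lt_top hs
  filter_upwards [ae_lt_top (Measurable.ennreal_tsum hm) h1.ne] with z hz
  have := ENNReal.summable_toReal hz.ne
  refine Summable.of_norm ?_
  refine this.congr fun k => ?_
  rw [ENNReal.toReal_ofReal (abs_nonneg _), Real.norm_eq_abs]

lemma geom_pt (l : ℕ → ℝ) (hl : ∀ k, 0 < l k) (hl2 : ∀ k, l (k+1) = 2 * l k) (a : ℝ≥0∞) :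
    ∑' k, ENNReal.ofReal (l k) * {b : ℝ≥0∞ | ENNReal.ofReal (l k) < b}.indicator (fun _ => 1) a ≤ 2 * a := by
  have h1 : ∀ N, ∑ k ∈ Finset.range N, ENNReal.ofReal (l k) * {b : ℝ≥0∞ | ENNReal.ofReal (l k) < b}.indicator (fun _ => 1) a
      ≤ ENNReal.ofReal (l N) := by
    intro N
    induction N with
    | zero => simp
    | succ N ih =>
      rw [Finset.sum_range_succ, hl2, two_mul, ENNReal.ofReal_add (hl N).le (hl N).le]
      refine add_le_add ih ?_
      by_cases h : a ∈ {b : ℝ≥0∞ | ENNReal.ofReal (l N) < b}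
      · rw [Set.indicator_of_mem h, mul_one]
      · rw [Set.indicator_of_notMem h, mul_zero]; exact bot_le
  rw [ENNReal.tsum_eq_iSup_nat]
  refine iSup_le fun N => ?_
  induction N with
  | zero => simp
  | succ N ih =>
    by_cases h : ENNReal.ofReal (l N) < a
    · refine (h1 (N+1)).trans ?_
      rw [hl2, ENNReal.ofReal_mul zero_le_two]
      simp only [ENNReal.ofReal_ofNat]
      exact mul_le_mul_right h.le _
    · rw [Finset.sum_range_succ, Set.indicator_of_notMem (by exact h), mul_zero, add_zero]; exact ih

lemma Whit.GG_supp {d : ℕ} {O : Set (E d)} {K : ℝ} {ι : Type} {y : ι → E d} {ρ : ι → ℝ} {η : ι → E d → ℝ}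
    (W : Whit d O K ι y ρ η) {R : ℝ} (hρ : ∀ i, ρ i ≤ R / 100) {f : E d → ℝ} {x : E d}
    (hs : Function.support f ⊆ ball x (2 * R)) (hR : 0 < R) :
    Function.support (GG O η f) ⊆ ball x (2 * R + R / 25) := by
  intro z hz
  by_cases hxO : z ∈ O
  · rw [Function.mem_support, Whit.GG_in _ hxO] at hz
    have : ∃ i, mm η f i * η i z ≠ 0 := by
      by_contra h; push Not at h; apply hz; unfold TT; simp [h]
    obtain ⟨i, hi⟩ := this
    have : ∃ w, f w * η i w ≠ 0 := by
      by_contra h; push Not at h; apply left_ne_zero_of_mul hi; unfold mm; simp [h]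
    obtain ⟨w, hw⟩ := this
    have d1 := W.supp i (right_ne_zero_of_mul hi)
    have d2 := W.supp i (right_ne_zero_of_mul hw)
    have d3 := hs (left_ne_zero_of_mul hw)
    rw [mem_ball] at *
    have t1 := dist_triangle_right z w (y i)
    have t2 := dist_triangle z w x
    have := hρ i
    linarith
  · rw [Function.mem_support, W.GG_out _ hxO] at hz
    exact ball_subset_ball (by linarith) (hs hz)

lemma sub_of_meet {d : ℕ} {x y w : E d} {R ρ : ℝ} (hR : 0 < R) (hρ : ρ ≤ R / 100)
    (h1 : w ∈ ball x (2 * R + R / 25)) (h2 : w ∈ ball y (2 * ρ)) : 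
    ball y (10 * ρ) ⊆ ball x (4 * R) ∧ 10 * ρ ≤ 3 * R := by
  refine ⟨fun z hz => ?_, by linarith⟩
  rw [mem_ball] at *
  have t1 := dist_triangle z y x
  have t2 := dist_triangle_left y x w
  linarith

lemma tsum_sum_en {α β : Type} (f : α ⊕ β → ℝ≥0∞) : ∑' i, f i = ∑' i, f (.inl i) + ∑' i, f (.inr i) :=
  Summable.tsum_sum ENNReal.summable ENNReal.summable

lemma decomp_core (d : ℕ) (hd : 2 ≤ d) (C2 : ℝ) (hC2 : 0 < C2) : ∃ C : ℝ, 0 < C ∧ ∀ (R : ℝ) (x : E d) (f : E d → ℝ),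
    0 < R → Integrable f → Measurable f → (∀ z, ENNReal.ofReal |f z| ≤ ENNReal.ofReal C2 * GM d R f z) →
    ∫⁻ z, GM d R f z ≠ 0 → ∫⁻ z, GM d R f z ≠ ⊤ → Function.support f ⊆ ball x (2 * R) →
    ∃ (ν : Type) (_ : Countable ν) (u : ν → E d → ℝ) (c : ν → E d) (r M : ν → ℝ),
      (∀ k, Piece d x R (u k) (c k) (r k) (M k)) ∧
      ∑' k, ENNReal.ofReal (M k * r k ^ d) ≤ ENNReal.ofReal C * ∫⁻ z, GM d R f z ∧
      ∀ᵐ z, HasSum (fun k => u k z) (f z) := by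
  obtain ⟨K, hK, hW⟩ := whitney d
  have hω := om_pos d
  set C3 : ℝ := 36 * K ^ 2 * 12 ^ d + C2 with hC3
  have hC3p : 0 < C3 := by positivity
  refine ⟨C3 * 30 ^ d / om d + 8 * C3 * 10 ^ d * K * 2, by positivity, ?_⟩
  intro R x f hR hf hfm hfG hI0 hIt hsf
  set I : ℝ≥0∞ := ∫⁻ z, GM d R f z with hI
  set J : ℝ := I.toReal with hJ
  have hJp : 0 < J := ENNReal.toReal_pos hI0 hIt
  have hIJ : I = ENNReal.ofReal J := (ENNReal.ofReal_toReal hIt).symm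
  set L : ℝ := J / (om d * (R / 10) ^ d) with hL
  have hLp : 0 < L := by positivity
  set l : ℕ → ℝ := fun k => L * 2 ^ k with hl
  have hlp : ∀ k, 0 < l k := fun k => by simp only [hl]; positivity
  have hl2 : ∀ k, l (k+1) = 2 * l k := fun k => by simp only [hl, pow_succ]; ring
  have hlL : ∀ k, L ≤ l k := fun k => by
    simp only [hl]; exact le_mul_of_one_le_right hLp.le (one_le_pow₀ (by norm_num))
  set O : ℕ → Set (E d) := fun k => {z | ENNReal.ofReal (l k) < GM d R f z} with hO
  have hOo : ∀ k, IsOpen (O k) := fun k => GM_open d R f _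
  have hOsub : ∀ k, O (k+1) ⊆ O k := fun k z hz =>
    lt_of_le_of_lt (ENNReal.ofReal_le_ofReal (by rw [hl2]; linarith [hlp k])) hz
  have hOG : ∀ k z, z ∉ O k → GM d R f z ≤ ENNReal.ofReal (l k) := fun k z hz => not_lt.1 hz
  have hOv : ∀ k, volume (O k) ≤ ENNReal.ofReal (om d * (R / 10) ^ d) := by
    intro k
    have h1 := mul_meas_ge_le_lintegral (μ := volume) (GM_meas d R f) (ENNReal.ofReal (l k))
    have h2 : ENNReal.ofReal L * volume (O k) ≤ ENNReal.ofReal J := by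
      rw [← hIJ]
      refine le_trans ?_ h1
      refine mul_le_mul' (ENNReal.ofReal_le_ofReal (hlL k)) (measure_mono fun z hz => ?_)
      exact le_of_lt (show ENNReal.ofReal (l k) < GM d R f z from hz)
    have e : ENNReal.ofReal J = ENNReal.ofReal L * ENNReal.ofReal (om d * (R / 10) ^ d) := by
      rw [← ENNReal.ofReal_mul hLp.le, hL]; congr 1
      rw [div_mul_cancel₀]; positivity
    rw [e] at h2
    exact (ENNReal.mul_le_mul_iff_right (by rw [Ne, ENNReal.ofReal_eq_zero, not_le]; exact hLp) ENNReal.ofReal_ne_top).1 h2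
  have hOf : ∀ k, volume (O k) < ⊤ := fun k => (hOv k).trans_lt ENNReal.ofReal_lt_top
  have hball : ∀ k p s, 0 < s → ball p s ⊆ O k → s ≤ R / 10 := by
    intro k p s hs hsub
    have h := (measure_mono hsub).trans (hOv k)
    rw [vol_ball d p hs, ENNReal.ofReal_le_ofReal_iff (by positivity), mul_comm] at h
    have h := le_of_mul_le_mul_left h hω
    exact (pow_le_pow_iff_left₀ hs.le (by positivity) (by omega)).1 h
  have hex : ∀ k, ∃ (ι : Type) (y : ι → E d) (ρ : ι → ℝ) (η : ι → E d → ℝ), Whit d (O k) K ι y ρ η := by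
    intro k
    refine hW (O k) (hOo k) ?_ ⟨R / 10, fun z hz => ?_⟩
    · by_contra h
      rw [Set.not_nonempty_iff_eq_empty, Set.compl_empty_iff] at h
      have := hball k 0 R hR (by rw [h]; exact Set.subset_univ _)
      linarith
    · rcases (infDist_nonneg : 0 ≤ infDist z (O k)ᶜ).eq_or_lt with h | h
      · rw [← h]; positivity
      · refine hball k z _ h ?_
        have := ball_infDist_compl_subset (s := O k) (x := z)
        exact this
  choose ι y ρ η W using hex
  have hρ : ∀ k i, ρ k i ≤ R / 100 := fun k i => by
    have hp := (W k).pos i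
    have := hball k (y k i) (10 * ρ k i) (by positivity) ((W k).sub i)
    linarith
  have hρ12 : ∀ k i, 12 * ρ k i < R := fun k i => by have := hρ k i; linarith
  -- bounds
  set Q : ℕ → ℝ := fun k => C3 * l k with hQ
  have hQp : ∀ k, 0 < Q k := fun k => mul_pos hC3p (hlp k)
  have hQ2 : ∀ k, Q (k+1) = 2 * Q k := fun k => by simp only [hQ, hl2]; ring
  have hcl : ∀ k, 36 * K ^ 2 * 12 ^ d * l k ≤ Q k := fun k => by
    simp only [hQ]; exact mul_le_mul_of_nonneg_right (by linarith) (hlp k).le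
  have b1 : ∀ k z, z ∉ O k → |f z| ≤ Q k := by
    intro k z hz
    have h := (hfG z).trans (mul_le_mul_right (hOG k z hz) _)
    rw [← ENNReal.ofReal_mul hC2.le, ENNReal.ofReal_le_ofReal_iff (by have := hlp k; positivity)] at h
    refine h.trans (mul_le_mul_of_nonneg_right ?_ (hlp k).le)
    have : 0 ≤ 36 * K ^ 2 * 12 ^ d := by positivity
    linarith
  have b2 : ∀ k j, |mm (η k) f j| ≤ Q k := fun k j =>
    ((W k).mm_bd hK j (hρ12 k j) (hlp k).le (hOG k)).trans (hcl k)
  have b2' : ∀ k j, |mm (η k) f j| ≤ Q (k+1) := fun k j => (b2 k j).trans (by rw [hQ2]; linarith [hQp k])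
  have b4 : ∀ k i j, |mm (η (k+1)) (fun z => f z * η k j z) i| ≤ Q (k+1) := fun k i j =>
    ((W k).mm_bd2 (W (k+1)) (hOsub k) hK i j (hρ12 (k+1) i) (hlp (k+1)).le (hOG (k+1))).trans (hcl (k+1))
  set g : ℕ → E d → ℝ := fun k => GG (O k) (η k) f with hg
  have hgs : ∀ k, Function.support (g k) ⊆ ball x (2 * R + R / 25) := fun k => (W k).GG_supp (hρ k) hsf hR
  -- pieces
  have hA : ∀ k j, ∃ c r M, Piece d x R (GG (O (k+1)) (η (k+1)) (bb (η k) f j)) c r M ∧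
      M * r ^ d ≤ 2 * Q (k+1) * (10 * ρ k j) ^ d := by
    intro k j
    obtain ⟨p1, p2, p3, p4, p5⟩ := (W k).A_props (W (k+1)) (hOsub k) (hOo (k+1)) (hOf (k+1)) hf hfm (hQp (k+1)).le
      (b1 (k+1)) (b2' k) (b4 k) j
    have hp := (W k).pos j
    refine mk_piece hR (by positivity) (by have := hQp (k+1); positivity) p1 p2 p3 p4 ?_
    by_cases h : ∀ z, f z * η k j z = 0
    · exact Or.inl (p5 h)
    · push Not at h
      obtain ⟨w, hw⟩ := h
      right
      exact sub_of_meet hR (hρ k j) (ball_subset_ball (by linarith) (hsf (left_ne_zero_of_mul hw)))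
        ((W k).supp j (right_ne_zero_of_mul hw))
  have hB : ∀ k i, ∃ c r M, Piece d x R (fun z => - bb (η (k+1)) (g k) i z) c r M ∧
      M * r ^ d ≤ 2 * Q (k+1) * (10 * ρ (k+1) i) ^ d := by
    intro k i
    obtain ⟨p1, p2, p3, p4, p5⟩ := (W k).B_props (W (k+1)) (hOo k) (hOsub k) (hOf k) hf hfm (hQp (k+1)).le
      (b1 (k+1)) (b2' k) i
    have hp := (W (k+1)).pos i
    refine mk_piece hR (by positivity) (by have := hQp (k+1); positivity) p1.neg (fun z => by rw [abs_neg]; exact p2 z)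
      (fun z hz => p3 (neg_ne_zero.1 hz)) (by rw [integral_neg, p4, neg_zero]) ?_
    by_cases h : ∀ z, g k z * η (k+1) i z = 0
    · exact Or.inl fun z => by rw [p5 h z, neg_zero]
    · push Not at h
      obtain ⟨w, hw⟩ := h
      right
      exact sub_of_meet hR (hρ (k+1) i) (hgs k (left_ne_zero_of_mul hw))
        ((W (k+1)).supp i (right_ne_zero_of_mul hw))
  have hg0 : Piece d x R (g 0) x (3 * R) (Q 0) := by
    refine ⟨by positivity, (hQp 0).le, (W 0).GG_meas (hOo 0) hfm, (W 0).GG_bd (b2 0) (hQp 0).le (b1 0),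
      (hgs 0).trans (ball_subset_ball (by linarith)), ball_subset_ball (by linarith), le_rfl, Or.inr ⟨rfl, rfl⟩⟩
  choose cA rA MA hA hA' using hA
  choose cB rB MB hB hB' using hB
  have cι : ∀ k, Countable (ι k) := fun k => (W k).cou
  set u : Unit ⊕ (Σ k, ι k ⊕ ι (k+1)) → E d → ℝ := Sum.elim (fun _ => g 0) (fun p =>
    Sum.elim (fun j => GG (O (p.1+1)) (η (p.1+1)) (bb (η p.1) f j)) (fun i z => - bb (η (p.1+1)) (g p.1) i z) p.2) with hu
  set c : Unit ⊕ (Σ k, ι k ⊕ ι (k+1)) → E d := Sum.elim (fun _ => x) (fun p => Sum.elim (cA p.1) (cB p.1) p.2) with hc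
  set r : Unit ⊕ (Σ k, ι k ⊕ ι (k+1)) → ℝ := Sum.elim (fun _ => 3 * R) (fun p => Sum.elim (rA p.1) (rB p.1) p.2) with hr
  set M : Unit ⊕ (Σ k, ι k ⊕ ι (k+1)) → ℝ := Sum.elim (fun _ => Q 0) (fun p => Sum.elim (MA p.1) (MB p.1) p.2) with hM
  have hP : ∀ k, Piece d x R (u k) (c k) (r k) (M k) := by
    rintro (k | ⟨k, j | i⟩)
    · exact hg0
    · exact hA k j
    · exact hB k i
  have hvol : ∀ k, ∑' i, ENNReal.ofReal (2 * Q (k+1) * (10 * ρ k i) ^ d) ≤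
      ENNReal.ofReal (4 * C3 * 10 ^ d * K) * (ENNReal.ofReal (l k) * volume (O k)) := by
    intro k
    have e : ∀ i, ENNReal.ofReal (2 * Q (k+1) * (10 * ρ k i) ^ d) =
        ENNReal.ofReal (4 * C3 * 10 ^ d * l k) * ENNReal.ofReal (ρ k i ^ d) := fun i => by
      rw [← ENNReal.ofReal_mul (by have := hlp k; positivity)]
      congr 1
      simp only [hQ, hl2, mul_pow]; ring
    simp only [e]
    rw [ENNReal.tsum_mul_left]
    refine (mul_le_mul_right (W k).vol _).trans (le_of_eq ?_)
    have e4 : ENNReal.ofReal (4 * C3 * 10 ^ d * l k) * ENNReal.ofReal K =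
        ENNReal.ofReal (4 * C3 * 10 ^ d * K) * ENNReal.ofReal (l k) := by
      have h1 := hlp k
      generalize l k = t at h1
      rw [← ENNReal.ofReal_mul (by positivity), ← ENNReal.ofReal_mul (by positivity)]
      congr 1; ring
    rw [← mul_assoc (ENNReal.ofReal (4 * C3 * 10 ^ d * l k)), e4, mul_assoc]
  have hlev : ∀ k, ∑' i, ENNReal.ofReal (2 * Q (k+1) * (10 * ρ (k+1) i) ^ d) ≤
      ENNReal.ofReal (4 * C3 * 10 ^ d * K) * (ENNReal.ofReal (l (k+1)) * volume (O (k+1))) := by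
    intro k
    refine le_trans (ENNReal.tsum_le_tsum fun i => ENNReal.ofReal_le_ofReal ?_) (hvol (k+1))
    have hp := (W (k+1)).pos i
    refine mul_le_mul_of_nonneg_right ?_ (by positivity)
    rw [hQ2 (k+1)]; linarith [hQp (k+1)]
  have hgeo : ∑' k, ENNReal.ofReal (l k) * volume (O k) ≤ 2 * I := by
    have hmk : ∀ k, Measurable fun z => {b : ℝ≥0∞ | ENNReal.ofReal (l k) < b}.indicator (fun _ => (1:ℝ≥0∞)) (GM d R f z) :=
      fun k => (measurable_const.indicator measurableSet_Ioi).comp (GM_meas d R f)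
    have e : ∀ k, ENNReal.ofReal (l k) * volume (O k) =
        ∫⁻ z, ENNReal.ofReal (l k) * {b : ℝ≥0∞ | ENNReal.ofReal (l k) < b}.indicator (fun _ => 1) (GM d R f z) := by
      intro k
      rw [lintegral_const_mul _ (hmk k)]
      congr 1
      rw [← lintegral_indicator_one (hOo k).measurableSet]
      rfl
    simp only [e]
    rw [← lintegral_tsum fun k => ((hmk k).const_mul _).aemeasurable]
    rw [hI, ← lintegral_const_mul _ (GM_meas d R f)]
    exact lintegral_mono fun z => geom_pt l hlp hl2 _
  have hS : ∑' k, ENNReal.ofReal (M k * r k ^ d) ≤ ENNReal.ofReal (C3 * 30 ^ d / om d + 8 * C3 * 10 ^ d * K * 2) * I := by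
    rw [tsum_sum_en, tsum_fintype, ENNReal.tsum_sigma']
    rw [ENNReal.ofReal_add (by positivity) (by positivity), add_mul]
    refine add_le_add ?_ ?_
    · simp only [Finset.univ_unique, Finset.sum_singleton, hM, hr, Sum.elim_inl]
      rw [hIJ, ← ENNReal.ofReal_mul (by positivity)]
      refine le_of_eq ?_
      congr 1
      simp only [hQ, hl, hL, pow_zero, mul_one, div_pow, mul_pow]
      rw [show (30:ℝ) = 3 * 10 by norm_num, mul_pow]
      field_simp
    · calc ∑' k, ∑' b, ENNReal.ofReal (M (.inr ⟨k, b⟩) * r (.inr ⟨k, b⟩) ^ d)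
          ≤ ∑' k, (ENNReal.ofReal (4 * C3 * 10 ^ d * K) * (ENNReal.ofReal (l k) * volume (O k)) +
              ENNReal.ofReal (4 * C3 * 10 ^ d * K) * (ENNReal.ofReal (l (k+1)) * volume (O (k+1)))) := by
            refine ENNReal.tsum_le_tsum fun k => ?_
            rw [tsum_sum_en]
            refine add_le_add (le_trans (ENNReal.tsum_le_tsum fun j => ?_) (hvol k))
              (le_trans (ENNReal.tsum_le_tsum fun j => ?_) (hlev k))
            · exact ENNReal.ofReal_le_ofReal (hA' k j)
            · exact ENNReal.ofReal_le_ofReal (hB' k j)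
        _ = ENNReal.ofReal (4 * C3 * 10 ^ d * K) * (∑' k, ENNReal.ofReal (l k) * volume (O k)) +
            ENNReal.ofReal (4 * C3 * 10 ^ d * K) * (∑' k, ENNReal.ofReal (l (k+1)) * volume (O (k+1))) := by
            rw [ENNReal.tsum_add, ENNReal.tsum_mul_left, ENNReal.tsum_mul_left]
        _ ≤ ENNReal.ofReal (4 * C3 * 10 ^ d * K) * (2 * I) + ENNReal.ofReal (4 * C3 * 10 ^ d * K) * (2 * I) := by
            refine add_le_add (mul_le_mul_right hgeo _) (mul_le_mul_right (le_trans ?_ hgeo) _)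
            exact ENNReal.tsum_comp_le_tsum_of_injective (add_left_injective 1) (fun k => ENNReal.ofReal (l k) * volume (O k))
        _ = _ := by
            rw [hIJ, ← ENNReal.ofReal_ofNat 2, ← ENNReal.ofReal_mul (by norm_num), ← ENNReal.ofReal_mul (by positivity),
              ← ENNReal.ofReal_mul (by positivity), ← ENNReal.ofReal_add (by positivity) (by positivity)]
            congr 1; ring
  refine ⟨_, inferInstance, u, c, r, M, hP, hS, ?_⟩
  have hsum := ae_summable hP (hS.trans_lt (ENNReal.mul_lt_top ENNReal.ofReal_lt_top (lt_top_iff_ne_top.2 hIt)))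
  filter_upwards [hsum, ae_lt_top (GM_meas d R f) hIt] with z hz hGz
  have s2 : Summable fun p => u (.inr p) z := hz.comp_injective Sum.inr_injective
  have hlev : ∀ k, HasSum (fun b => u (.inr ⟨k, b⟩) z) (g (k+1) z - g k z) := by
    intro k
    obtain ⟨a, b, ha, hb, hab⟩ := (W k).tele (W (k+1)) (hOo k) (hOsub k) (hOf k) hf (hQp k).le (b2 k) z
    have : g (k+1) z - g k z = a + -b := by rw [← sub_eq_add_neg, hab]
    rw [this]
    exact HasSum.sum ha hb.neg
  have h3 := s2.hasSum.sigma hlev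
  have h4 := h3.tendsto_sum_nat
  have h5 : Tendsto (fun N => ∑ k ∈ Finset.range N, (g (k+1) z - g k z)) atTop (𝓝 (f z - g 0 z)) := by
    simp only [Finset.sum_range_sub (fun k => g k z)]
    refine Tendsto.sub_const ?_ _
    have ht : Tendsto l atTop atTop := by
      simp only [hl]; exact (tendsto_pow_atTop_atTop_of_one_lt (by norm_num)).const_mul_atTop hLp
    refine tendsto_const_nhds.congr' ?_
    filter_upwards [ht.eventually_ge_atTop (GM d R f z).toReal] with k hk
    have : z ∉ O k := by
      simp only [hO, Set.mem_ofPred_eq, not_lt]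
      rw [← ENNReal.ofReal_toReal hGz.ne]; exact ENNReal.ofReal_le_ofReal hk
    exact ((W k).GG_out f this).symm
  have h6 := tendsto_nhds_unique h4 h5
  have h7 : HasSum (fun p => u (.inr p) z) (f z - g 0 z) := by rw [← h6]; exact s2.hasSum
  have h8 : HasSum (fun p : Unit => u (.inl p) z) (g 0 z) := hasSum_unique (fun p : Unit => u (.inl p) z)
  have := HasSum.sum (f := fun p => u p z) h8 h7
  rwa [add_sub_cancel] at this

lemma GM_congr (d : ℕ) (R : ℝ) {f g : E d → ℝ} (h : f =ᵐ[volume] g) : GM d R f = GM d R g := by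
  ext z
  unfold GM
  have : ∀ φ : E d → ℝ, ∫ y, f y * φ y = ∫ y, g y * φ y := fun φ =>
    integral_congr_ae (h.mono fun y hy => by simp only [hy])
  simp only [this]

lemma zero_piece {d : ℕ} {x : E d} {R : ℝ} (hR : 0 < R) : Piece d x R (fun _ => 0) x (3 * R) 0 := by
  refine ⟨by positivity, le_rfl, measurable_const, by simp, by simp, ball_subset_ball (by linarith), le_rfl, Or.inr ⟨rfl, rfl⟩⟩

lemma decomp (d : ℕ) (hd : 2 ≤ d) : ∃ C : ℝ, 0 < C ∧ ∀ (R : ℝ) (x : E d) (f : E d → ℝ),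
    0 < R → Integrable f → ∫⁻ z, Fm d R f z ≠ ⊤ → Function.support f ⊆ ball x (2 * R) →
    ∃ (u : ℕ → E d → ℝ) (c : ℕ → E d) (r M : ℕ → ℝ),
      (∀ k, Piece d x R (u k) (c k) (r k) (M k)) ∧
      ∑' k, ENNReal.ofReal (M k * r k ^ d) ≤ ENNReal.ofReal C * ∫⁻ z, Fm d R f z ∧
      ∀ᵐ z, HasSum (fun k => u k z) (f z) := by
  obtain ⟨C1, hC1, h1⟩ := GM_int d hd
  obtain ⟨C2, hC2, h2⟩ := GM_ae d (by omega)
  obtain ⟨C, hC, h3⟩ := decomp_core d hd C2 hC2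
  refine ⟨C * C1, by positivity, ?_⟩
  intro R x f hR hf hFt hs
  have hI := h1 R f hf
  have hae := h2 R f hR hf
  by_cases hI0 : ∫⁻ z, GM d R f z = 0
  · refine ⟨fun _ _ => 0, fun _ => x, fun _ => 3 * R, fun _ => 0, fun _ => zero_piece hR, by simp, ?_⟩
    rw [lintegral_eq_zero_iff (GM_meas d R f)] at hI0
    filter_upwards [hI0, hae] with z hz hz2
    have : f z = 0 := by
      rw [hz] at hz2
      simpa using hz2
    rw [this]; exact hasSum_zero
  have hIt : ∫⁻ z, GM d R f z ≠ ⊤ := (hI.trans_lt (ENNReal.mul_lt_top ENNReal.ofReal_lt_top (lt_top_iff_ne_top.2 hFt))).ne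
  set m := hf.1.mk f with hm
  have hmm : Measurable m := hf.1.stronglyMeasurable_mk.measurable
  have hgood : ∀ᵐ z, f z = m z ∧ ENNReal.ofReal |f z| ≤ ENNReal.ofReal C2 * GM d R f z := by
    filter_upwards [hf.1.ae_eq_mk, hae] with z h h'
    exact ⟨h, h'⟩
  set Z := toMeasurable volume {z | ¬ (f z = m z ∧ ENNReal.ofReal |f z| ≤ ENNReal.ofReal C2 * GM d R f z)} with hZ
  have hZ0 : volume Z = 0 := by rw [hZ, measure_toMeasurable]; exact hgood
  have hZm : MeasurableSet Z := measurableSet_toMeasurable _ _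
  have hZg : ∀ z, z ∉ Z → f z = m z ∧ ENNReal.ofReal |f z| ≤ ENNReal.ofReal C2 * GM d R f z := fun z hz => by
    by_contra h; exact hz (subset_toMeasurable _ _ h)
  set F := Zᶜ.indicator m with hF
  have hFf : F =ᵐ[volume] f := by
    have : ∀ᵐ z, z ∉ Z := measure_eq_zero_iff_ae_notMem.1 hZ0
    filter_upwards [this] with z hz
    rw [hF, Set.indicator_of_mem (by exact hz), (hZg z hz).1]
  have hGF : GM d R F = GM d R f := GM_congr d R hFf
  have hFz : ∀ z, z ∉ Z → F z = f z := fun z hz => by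
    rw [hF, Set.indicator_of_mem (by exact hz), (hZg z hz).1]
  have hFz' : ∀ z, z ∈ Z → F z = 0 := fun z hz => by
    rw [hF, Set.indicator_of_notMem (by simpa using hz)]
  obtain ⟨ν, hν, u, c, r, M, p1, p2, p3⟩ := h3 R x F hR (hf.congr hFf.symm) (hmm.indicator hZm.compl) (by
      intro z
      by_cases hz : z ∈ Z
      · rw [hFz' z hz]; simp
      · rw [hFz z hz, hGF]; exact (hZg z hz).2) (by rw [hGF]; exact hI0) (by rw [hGF]; exact hIt) (by
      intro z hz
      by_cases hzZ : z ∈ Z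
      · exact absurd (hFz' z hzZ) hz
      · rw [Function.mem_support, hFz z hzZ] at hz; exact hs hz)
  rw [hGF] at p2
  obtain ⟨e⟩ : Nonempty (ℕ ≃ ν ⊕ ℕ) := by
    obtain ⟨D⟩ := nonempty_denumerable (ν ⊕ ℕ)
    exact ⟨(Denumerable.eqv (ν ⊕ ℕ)).symm⟩
  set u' : ν ⊕ ℕ → E d → ℝ := Sum.elim u (fun _ _ => 0) with hu'
  set c' : ν ⊕ ℕ → E d := Sum.elim c (fun _ => x) with hc'
  set r' : ν ⊕ ℕ → ℝ := Sum.elim r (fun _ => 3 * R) with hr'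
  set M' : ν ⊕ ℕ → ℝ := Sum.elim M (fun _ => 0) with hM'
  have hp' : ∀ k, Piece d x R (u' k) (c' k) (r' k) (M' k) := by
    rintro (k | k)
    · exact p1 k
    · exact zero_piece hR
  refine ⟨u' ∘ e, c' ∘ e, r' ∘ e, M' ∘ e, fun k => hp' (e k), ?_, ?_⟩
  · simp only [Function.comp]
    rw [e.tsum_eq (fun k => ENNReal.ofReal (M' k * r' k ^ d)), tsum_sum_en]
    have : ∑' i : ℕ, ENNReal.ofReal (M' (.inr i) * r' (.inr i) ^ d) = 0 := by simp [hM']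
    rw [this, add_zero]
    refine p2.trans ?_
    rw [ENNReal.ofReal_mul hC.le, mul_assoc]
    exact mul_le_mul_right hI _
  · filter_upwards [p3, hFf] with z hz hz2
    rw [← hz2]
    have h4 : HasSum (fun k => u' k z) (F z + 0) := HasSum.sum (f := fun k => u' k z) hz hasSum_zero
    rw [add_zero] at h4
    exact e.hasSum_iff.2 h4

lemma L1conv {d : ℕ} {x : E d} {R : ℝ} {u : ℕ → E d → ℝ} {c : ℕ → E d} {r M : ℕ → ℝ} {f : E d → ℝ}
    (h : ∀ k, Piece d x R (u k) (c k) (r k) (M k)) (hs : ∑' k, ENNReal.ofReal (M k * r k ^ d) ≠ ⊤)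
    (hf : ∀ᵐ z, HasSum (fun k => u k z) (f z)) :
    Tendsto (fun N => eLpNorm (fun y => f y - ∑ j ∈ Finset.range N, u j y) 1 volume) atTop (𝓝 0) := by
  have hfin : ∑' k, ∫⁻ z, ‖u k z‖ₑ ≠ ⊤ := by
    have : ∑' k, ∫⁻ z, ‖u k z‖ₑ ≤ ENNReal.ofReal (om d) * ∑' k, ENNReal.ofReal (M k * r k ^ d) := by
      rw [← ENNReal.tsum_mul_left]
      refine ENNReal.tsum_le_tsum fun k => ?_
      have := (h k).lint
      simpa only [Real.enorm_eq_ofReal_abs] using this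
    exact (this.trans_lt (ENNReal.mul_lt_top ENNReal.ofReal_lt_top (lt_top_iff_ne_top.2 hs))).ne
  refine tendsto_of_tendsto_of_tendsto_of_le_of_le tendsto_const_nhds
    (ENNReal.tendsto_sum_nat_add (fun k => ∫⁻ z, ‖u k z‖ₑ) hfin) (fun N => bot_le) fun N => ?_
  simp only
  rw [eLpNorm_one_eq_lintegral_enorm, ← lintegral_tsum fun k => (h _).2.2.1.enorm.aemeasurable]
  refine lintegral_mono_ae ?_
  filter_upwards [hf] with z hz
  have h1 : HasSum (fun k => u (k + N) z) (f z - ∑ j ∈ Finset.range N, u j z) := by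
    refine (hasSum_nat_add_iff (f := fun k => u k z) N).2 ?_
    simpa using hz
  rw [← h1.tsum_eq]
  exact enorm_tsum_le_tsum_enorm

/-- Atomic decomposition of functions in `h^1_n` supported in `B(x, 2^{1-n/2})` with
`x ∈ 𝓑_n`, by `(H^1_L, q)`-atoms related to balls inside `B(x, 2^{2-n/2})`. -/
theorem stmt14 (d : ℕ) (hd : 3 ≤ d) (V : E d → ℝ) (hV0 : ∀ x, 0 ≤ V x)
    (hVloc : LocallyIntegrable V volume) (hVne : ¬ (V =ᵐ[volume] (0 : E d → ℝ)))
    (hRH : IsRH d V)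
    (C₀ k₀ : ℝ) (hC₀ : 1 < C₀) (hk₀ : 1 ≤ k₀)
    (hShen : ∀ x y : E d,
      C₀⁻¹ * rho d V x * (1 + dist x y / rho d V x) ^ (-k₀) ≤ rho d V y ∧
      rho d V y ≤ C₀ * rho d V x * (1 + dist x y / rho d V x) ^ (k₀ / (k₀ + 1))) :
    ∀ q : ℝ≥0∞, 1 < q → ∃ C : ℝ, 0 < C ∧
      ∀ (n : ℤ) (x : E d),
        (2:ℝ) ^ (-((n:ℝ)+1)/2) < rho d V x → rho d V x ≤ (2:ℝ) ^ (-(n:ℝ)/2) →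
        ∀ f : E d → ℝ, Memh1n d n f →
        Function.support f ⊆ ball x ((2:ℝ) ^ (1 - (n:ℝ)/2)) →
        ∃ (a : ℕ → E d → ℝ) (c : ℕ → E d) (rr : ℕ → ℝ) (lam : ℕ → ℝ),
          (∀ j, IsHLAtom d V (8 * 9 ^ k₀ * C₀) q (a j) (c j) (rr j) ∧
            ball (c j) (rr j) ⊆ ball x ((2:ℝ) ^ (2 - (n:ℝ)/2))) ∧
          Filter.Tendsto
            (fun N => eLpNorm (fun y => f y - ∑ j ∈ Finset.range N, lam j * a j y) 1 volume)
            Filter.atTop (nhds 0) ∧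
          Summable (fun j => |lam j|) ∧
          (∑' j, |lam j|) ≤ C * (h1nNorm d n f).toReal := by
  intro q hq
  obtain ⟨C, hC, hdec⟩ := decomp d (by omega)
  have hω := om_pos d
  refine ⟨om d * C, by positivity, ?_⟩
  intro n x hx1 hx2 f hf hs
  set R : ℝ := (2:ℝ) ^ (-(n:ℝ)/2) with hR
  have hRp : 0 < R := by positivity
  have e2 : (2:ℝ) ^ (1 - (n:ℝ)/2) = 2 * R := by
    rw [hR, show 1 - (n:ℝ)/2 = 1 + -(n:ℝ)/2 by ring, Real.rpow_add two_pos, Real.rpow_one]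
  have e4 : (2:ℝ) ^ (2 - (n:ℝ)/2) = 4 * R := by
    rw [hR, show 2 - (n:ℝ)/2 = 2 + -(n:ℝ)/2 by ring, Real.rpow_add two_pos]
    norm_num
  have e5 : R / 2 < rho d V x := by
    refine lt_of_le_of_lt ?_ hx1
    rw [show R / 2 = (2:ℝ) ^ (-(n:ℝ)/2 - 1) by rw [Real.rpow_sub two_pos, Real.rpow_one]]
    exact Real.rpow_le_rpow_of_exponent_le one_le_two (by linarith)
  rw [e4]
  rw [e2] at hs
  have hN : h1nNorm d n f = ∫⁻ z, Fm d R f z := rfl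
  have hNt : ∫⁻ z, Fm d R f z ≠ ⊤ := by rw [← hN]; exact hf.2.ne
  obtain ⟨u, c, r, M, p1, p2, p3⟩ := hdec R x f hRp hf.1 hNt hs
  have hp2t : ∑' k, ENNReal.ofReal (M k * r k ^ d) ≠ ⊤ :=
    (p2.trans_lt (ENNReal.mul_lt_top ENNReal.ofReal_lt_top (lt_top_iff_ne_top.2 hNt))).ne
  have hk9 : (1:ℝ) ≤ 9 ^ k₀ := Real.one_le_rpow (by norm_num) (by linarith)
  set CL : ℝ := 8 * 9 ^ k₀ * C₀ with hCL
  have hCL8 : 8 ≤ CL := by rw [hCL]; nlinarith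
  set v : ℕ → ℝ := fun j => r j ^ d * om d with hv
  have hvp : ∀ j, 0 < v j := fun j => by
    have := (p1 j).1
    simp only [hv]; positivity
  have hul : ∀ j z, (M j * v j) * (u j z / (M j * v j)) = u j z := by
    intro j z
    rcases (p1 j).2.1.eq_or_lt with h | h
    · have hb := (p1 j).2.2.2.1 z
      rw [← h] at hb
      have : u j z = 0 := abs_nonpos_iff.1 hb
      rw [this]; simp
    · rw [mul_div_cancel₀]
      exact (mul_pos h (hvp j)).ne'
  have hsm : Summable fun j => M j * r j ^ d := by
    have := ENNReal.summable_toReal hp2t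
    refine this.congr fun j => ENNReal.toReal_ofReal ?_
    have h1 := (p1 j).1
    have h2 := (p1 j).2.1
    positivity
  have habs : ∀ j, |M j * v j| = om d * (M j * r j ^ d) := fun j => by
    rw [abs_of_nonneg (mul_nonneg (p1 j).2.1 (hvp j).le)]; simp only [hv]; ring
  refine ⟨fun j z => u j z / (M j * v j), c, r, fun j => M j * v j, ?_, ?_, ?_, ?_⟩
  · intro j
    obtain ⟨h1, h2, h3, h4, h5, h6, h7, h8⟩ := p1 j
    refine ⟨⟨?_, ?_, ?_, ?_⟩, h6⟩
    · have hc := h6 (mem_ball_self h1)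
      have hsh := (hShen x (c j)).1
      have hρp : 0 < rho d V x := by linarith
      have hdx : 1 + dist x (c j) / rho d V x ≤ 9 := by
        have : dist x (c j) / rho d V x ≤ 8 := by
          rw [div_le_iff₀ hρp, dist_comm]; rw [mem_ball] at hc; linarith
        linarith
      have hpw : (9:ℝ) ^ (-k₀) ≤ (1 + dist x (c j) / rho d V x) ^ (-k₀) :=
        Real.rpow_le_rpow_of_nonpos (by positivity) hdx (by linarith)
      have h9 : C₀⁻¹ * rho d V x * 9 ^ (-k₀) ≤ rho d V (c j) :=
        (mul_le_mul_of_nonneg_left hpw (by positivity)).trans hsh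
      have h10 := mul_le_mul_of_nonneg_left h9 (by linarith : 0 ≤ CL)
      have h11 : CL * (C₀⁻¹ * rho d V x * 9 ^ (-k₀)) = 8 * rho d V x := by
        rw [hCL, Real.rpow_neg (by norm_num)]
        field_simp
      linarith
    · intro z hz
      refine h5 fun h0 => hz ?_
      simp only [h0, zero_div]
    · have hb : ∀ z, ‖u j z / (M j * v j)‖ ≤ ‖(ball (c j) (r j)).indicator (fun _ => (v j)⁻¹) z‖ := by
        intro z
        by_cases hz : z ∈ ball (c j) (r j)
        · rw [Set.indicator_of_mem hz, Real.norm_eq_abs, Real.norm_eq_abs, abs_of_pos (inv_pos.2 (hvp j)),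
            abs_div, abs_of_nonneg (mul_nonneg h2 (hvp j).le)]
          rcases h2.eq_or_lt with h | h
          · rw [← h]; simp [(hvp j).le]
          · rw [div_le_iff₀ (mul_pos h (hvp j))]
            have := (hvp j).ne'
            rw [show (v j)⁻¹ * (M j * v j) = M j by field_simp]
            exact h4 z
        · have : u j z = 0 := by by_contra h; exact hz (h5 h)
          rw [this]; simp
      refine (eLpNorm_mono hb).trans ((eLpNorm_indicator_const_le _ _).trans (le_of_eq ?_))
      rw [vol_ball d _ h1]
      change _ * ENNReal.ofReal (v j) ^ _ = ENNReal.ofReal (v j) ^ _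
      rw [ENNReal.rpow_sub _ _ (by rw [Ne, ENNReal.ofReal_eq_zero, not_le]; exact hvp j) ENNReal.ofReal_ne_top,
        ENNReal.rpow_one, Real.enorm_eq_ofReal_abs, abs_of_pos (inv_pos.2 (hvp j)), ENNReal.ofReal_inv_of_pos (hvp j),
        mul_comm, ENNReal.div_eq_inv_mul, mul_comm]
    · intro hr
      rcases h8 with h8 | ⟨h8, h9⟩
      · rw [integral_div, h8, zero_div]
      · exfalso
        rw [h8, h9] at hr
        rw [le_div_iff₀ (by linarith)] at hr
        nlinarith
  · have := L1conv p1 hp2t p3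
    simpa only [hul] using this
  · simp only [habs]; exact hsm.mul_left _
  · simp only [habs]
    rw [_root_.tsum_mul_left, mul_assoc]
    refine mul_le_mul_of_nonneg_left ?_ hω.le
    have h1 : ∑' j, M j * r j ^ d = (∑' k, ENNReal.ofReal (M k * r k ^ d)).toReal := by
      rw [ENNReal.tsum_toReal_eq fun k => ENNReal.ofReal_ne_top]
      congr 1; ext j
      rw [ENNReal.toReal_ofReal]
      have h1 := (p1 j).1
      have h2 := (p1 j).2.1
      positivity
    rw [h1, hN]
    have := ENNReal.toReal_mono (ENNReal.mul_ne_top ENNReal.ofReal_ne_top hNt) p2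
    rwa [ENNReal.toReal_mul, ENNReal.toReal_ofReal hC.le] at this
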